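/- arXiv:2506.05299 — 3 statements merged into one kernel-verified Lean document; each statement's English description precedes it below -/
import Mathlib

section
/- For every θ > 0 there exist constants C > 0, R₀ > 0, ω₀ > 0 and P₀ > 0 (depending only on θ, V1, V2) with the following property: whenever R > R₀, ω ∈ (0, ω₀) and ω·R > P₀, and φ = (φ1, φ2) is a pair of C² functions on [−R, R] with φ1(−R) = φ1(R) = φ2(−R) = φ2(R) = 0 satisfying L_ω φ = g on (−R, R) for a pair g = (g1, g2) of continuous functions, then sup_{x ∈ [−R,R]} max(|φ1(x)|, |φ2(x)|) ≤ C · ω⁻¹ · ‖g‖_{C⁰_θ((−R,R))}. -/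
section

structure VD (V1 V2 d1 d2 : ℝ → ℝ) (A κ : ℝ) : Prop where
  h1 : ∀ x, HasDerivAt V1 (d1 x) x
  h2 : ∀ x, HasDerivAt V2 (d2 x) x
  hd1 : ∀ x, HasDerivAt d1 (V1 x * V2 x ^ 2) x
  hd2 : ∀ x, HasDerivAt d2 (V2 x * V1 x ^ 2) x
  pos1 : ∀ x, 0 < V1 x
  pos2 : ∀ x, 0 < V2 x
  sV : ∀ x, V2 x = V1 (-x)
  sd : ∀ x, d2 x = -d1 (-x)
  one : V1 0 = 1
  dpos : ∀ x, 0 < d1 x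
  dA : ∀ x, d1 x ≤ A
  kpos : 0 < κ
  tail1 : ∀ x, 0 ≤ x → A - d1 x ≤ κ * Real.exp (-x)
  tail2 : ∀ x, 0 ≤ x → d1 (-x) ≤ κ * Real.exp (-x)
  tail3 : ∀ x, 0 ≤ x → 2 * V1 x * V2 x ≤ κ * Real.exp (-x)

structure Sol (V1 V2 : ℝ → ℝ) (R ω : ℝ) (g1 g2 φ1 φ2 p1 p2 : ℝ → ℝ) : Prop where
  c1 : ContinuousOn φ1 (Set.Icc (-R) R)
  c2 : ContinuousOn φ2 (Set.Icc (-R) R)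
  cp1 : ContinuousOn p1 (Set.Icc (-R) R)
  cp2 : ContinuousOn p2 (Set.Icc (-R) R)
  D1 : ∀ x ∈ Set.Ioo (-R) R, HasDerivAt φ1 (p1 x) x
  D2 : ∀ x ∈ Set.Ioo (-R) R, HasDerivAt φ2 (p2 x) x
  E1 : ∀ x ∈ Set.Ioo (-R) R, HasDerivAt p1
    ((V2 x ^ 2 + ω ^ 2) * φ1 x + 2 * V1 x * V2 x * φ2 x - g1 x) x
  E2 : ∀ x ∈ Set.Ioo (-R) R, HasDerivAt p2
    ((V1 x ^ 2 + ω ^ 2) * φ2 x + 2 * V1 x * V2 x * φ1 x - g2 x) x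

lemma max_principle {f f' f'' c : ℝ → ℝ} {a b : ℝ} (hf : ContinuousOn f (Set.Icc a b))
    (ha : 0 ≤ f a) (hb : 0 ≤ f b)
    (h1 : ∀ x ∈ Set.Ioo a b, HasDerivAt f (f' x) x)
    (h2 : ∀ x ∈ Set.Ioo a b, HasDerivAt f' (f'' x) x)
    (hc : ∀ x ∈ Set.Ioo a b, 0 < c x)
    (h3 : ∀ x ∈ Set.Ioo a b, f'' x ≤ c x * f x) :
    ∀ x ∈ Set.Icc a b, 0 ≤ f x := by
  intro x hx
  obtain ⟨y, hy, hmin⟩ := isCompact_Icc.exists_isMinOn ⟨x, hx⟩ hf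
  by_contra hneg
  push Not at hneg
  have hfy : f y < 0 := lt_of_le_of_lt (hmin hx) hneg
  have hya : y ≠ a := by rintro rfl; linarith
  have hyb : y ≠ b := by rintro rfl; linarith
  have hyI : y ∈ Set.Ioo a b := ⟨lt_of_le_of_ne hy.1 (Ne.symm hya), lt_of_le_of_ne hy.2 hyb⟩
  have hnhds : Set.Ioo a b ∈ nhds y := isOpen_Ioo.mem_nhds hyI
  have hlmin : IsLocalMin f y := hmin.isLocalMin (Filter.mem_of_superset hnhds Set.Ioo_subset_Icc_self)
  have hd : deriv f =ᶠ[nhds y] f' := by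
    filter_upwards [hnhds] with z hz using (h1 z hz).deriv
  have hdd : deriv (deriv f) y = f'' y := by rw [hd.deriv_eq]; exact (h2 y hyI).deriv
  have hlt : f'' y < 0 := lt_of_le_of_lt (h3 y hyI) (mul_neg_of_pos_of_neg (hc y hyI) hfy)
  have hlmax : IsLocalMax f y :=
    isLocalMax_of_deriv_deriv_neg (by rw [hdd]; exact hlt) hlmin.deriv_eq_zero (h1 y hyI).continuousAt
  have hconst : f =ᶠ[nhds y] fun _ => f y := by
    filter_upwards [hlmin, hlmax] with z hz1 hz2 using le_antisymm hz2 hz1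
  have h0 : deriv f =ᶠ[nhds y] fun _ => 0 := by
    have := hconst.deriv
    simpa using this
  have : deriv (deriv f) y = 0 := by rw [h0.deriv_eq]; simp
  linarith

/-- scalar barrier estimate -/
lemma barrier {f f' c r : ℝ → ℝ} {T R μ κ G θ : ℝ} (hT : 0 ≤ T) (hTR : T ≤ R)
    (hμ : 0 ≤ μ) (hκ : 0 ≤ κ) (hG : 0 ≤ G) (hθ : 0 < θ)
    (hf : ContinuousOn f (Set.Icc T R)) (ha : |f T| ≤ μ) (hb : f R = 0)
    (h1 : ∀ x ∈ Set.Ioo T R, HasDerivAt f (f' x) x)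
    (h2 : ∀ x ∈ Set.Ioo T R, HasDerivAt f' (c x * f x + r x) x)
    (hc : ∀ x ∈ Set.Ioo T R, 0 < c x)
    (hr : ∀ x ∈ Set.Ioo T R, |r x| ≤ κ * Real.exp (-x) + 2 * G * Real.exp (-θ * x)) :
    ∀ x ∈ Set.Icc T R, |f x| ≤ μ + κ * Real.exp (-T) + 2 * G / θ ^ 2 := by
  set b : ℝ → ℝ := fun x => μ + κ * (Real.exp (-T) - Real.exp (-x)) +
    2 * G / θ ^ 2 * (1 - Real.exp (-θ * x)) with hbdef
  set b' : ℝ → ℝ := fun x => κ * Real.exp (-x) + 2 * G / θ * Real.exp (-θ * x) with hb'def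
  set b'' : ℝ → ℝ := fun x => -(κ * Real.exp (-x) + 2 * G * Real.exp (-θ * x)) with hb''def
  have e1 : ∀ x : ℝ, HasDerivAt (fun x : ℝ => Real.exp (-x)) (-Real.exp (-x)) x := by
    intro x
    have := (hasDerivAt_neg x).exp
    convert this using 1; ring
  have e2 : ∀ x : ℝ, HasDerivAt (fun x : ℝ => Real.exp (-θ * x)) (-θ * Real.exp (-θ * x)) x := by
    intro x
    have := ((hasDerivAt_id x).const_mul (-θ)).exp
    exact this.congr_deriv (by simp only [id]; ring)
  have B1 : ∀ x, HasDerivAt b (b' x) x := by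
    intro x
    have := ((((e1 x).const_sub (Real.exp (-T))).const_mul κ).const_add μ).add
      (((e2 x).const_sub 1).const_mul (2 * G / θ ^ 2))
    refine this.congr_deriv ?_
    show _ = κ * Real.exp (-x) + 2 * G / θ * Real.exp (-θ * x)
    field_simp
  have B2 : ∀ x, HasDerivAt b' (b'' x) x := by
    intro x
    have := ((e1 x).const_mul κ).add ((e2 x).const_mul (2 * G / θ))
    refine this.congr_deriv ?_
    show _ = -(κ * Real.exp (-x) + 2 * G * Real.exp (-θ * x))
    field_simp; ring
  have bnn : ∀ x, T ≤ x → μ ≤ b x := by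
    intro x hx
    have i1 : Real.exp (-x) ≤ Real.exp (-T) := Real.exp_le_exp.2 (by linarith)
    have i2 : Real.exp (-θ * x) ≤ 1 := Real.exp_le_one_iff.2 (by nlinarith)
    have := mul_nonneg hκ (sub_nonneg.2 i1)
    have := mul_nonneg (show 0 ≤ 2 * G / θ ^ 2 by positivity) (sub_nonneg.2 i2)
    simp only [hbdef]; linarith
  have ble : ∀ x, b x ≤ μ + κ * Real.exp (-T) + 2 * G / θ ^ 2 := by
    intro x
    have := mul_nonneg hκ (Real.exp_pos (-x)).le
    have := mul_nonneg (show 0 ≤ 2 * G / θ ^ 2 by positivity) (Real.exp_pos (-θ * x)).le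
    simp only [hbdef]; nlinarith
  have bc : Continuous b := continuous_iff_continuousAt.2 fun x => (B1 x).continuousAt
  have hl := abs_le.1 ha
  have m1 := max_principle (f := fun x => b x - f x) (f' := fun x => b' x - f' x)
    (f'' := fun x => b'' x - (c x * f x + r x)) (c := c) (bc.continuousOn.sub hf)
    (by have := bnn T le_rfl; linarith)
    (by have := bnn R hTR; linarith)
    (fun x hx => (B1 x).sub (h1 x hx)) (fun x hx => (B2 x).sub (h2 x hx)) hc
    (by
      intro x hx
      have := abs_le.1 (hr x hx)
      have := mul_nonneg (hc x hx).le (hμ.trans (bnn x hx.1.le))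
      simp only [hb''def]; nlinarith)
  have m2 := max_principle (f := fun x => b x + f x) (f' := fun x => b' x + f' x)
    (f'' := fun x => b'' x + (c x * f x + r x)) (c := c) (bc.continuousOn.add hf)
    (by have := bnn T le_rfl; linarith)
    (by have := bnn R hTR; linarith)
    (fun x hx => (B1 x).add (h1 x hx)) (fun x hx => (B2 x).add (h2 x hx)) hc
    (by
      intro x hx
      have := abs_le.1 (hr x hx)
      have := mul_nonneg (hc x hx).le (hμ.trans (bnn x hx.1.le))
      simp only [hb''def]; nlinarith)
  intro x hx
  have := m1 x hx; have := m2 x hx; have := ble x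
  rw [abs_le]; constructor <;> linarith

/-- integral-type comparison -/
lemma diff_le_of_deriv {f f' B B' : ℝ → ℝ} {a b : ℝ} (hab : a ≤ b)
    (hf : ContinuousOn f (Set.Icc a b)) (hB : ContinuousOn B (Set.Icc a b))
    (h1 : ∀ x ∈ Set.Ioo a b, HasDerivAt f (f' x) x)
    (h2 : ∀ x ∈ Set.Ioo a b, HasDerivAt B (B' x) x)
    (h : ∀ x ∈ Set.Ioo a b, |f' x| ≤ B' x) : |f b - f a| ≤ B b - B a := by
  have ma : a ∈ Set.Icc a b := ⟨le_rfl, hab⟩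
  have mb : b ∈ Set.Icc a b := ⟨hab, le_rfl⟩
  have k1 : MonotoneOn (fun x => B x - f x) (Set.Icc a b) := by
    apply monotoneOn_of_deriv_nonneg (convex_Icc a b) (hB.sub hf)
    · rw [interior_Icc]
      exact fun x hx => ((h2 x hx).sub (h1 x hx)).differentiableAt.differentiableWithinAt
    · rw [interior_Icc]
      intro x hx
      rw [((h2 x hx).sub (h1 x hx)).deriv]
      have := abs_le.1 (h x hx); linarith
  have k2 : MonotoneOn (fun x => B x + f x) (Set.Icc a b) := by
    apply monotoneOn_of_deriv_nonneg (convex_Icc a b) (hB.add hf)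
    · rw [interior_Icc]
      exact fun x hx => ((h2 x hx).add (h1 x hx)).differentiableAt.differentiableWithinAt
    · rw [interior_Icc]
      intro x hx
      rw [((h2 x hx).add (h1 x hx)).deriv]
      have := abs_le.1 (h x hx); linarith
  have := k1 ma mb hab
  have := k2 ma mb hab
  rw [abs_le]; constructor <;> linarith


lemma neg_mem_Ioo {R x : ℝ} (h : x ∈ Set.Ioo (-R) R) : -x ∈ Set.Ioo (-R) R :=
  ⟨by linarith [h.2], by linarith [h.1]⟩

lemma neg_mem_Icc {R x : ℝ} (h : x ∈ Set.Icc (-R) R) : -x ∈ Set.Icc (-R) R :=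
  ⟨by linarith [h.2], by linarith [h.1]⟩

lemma hasDerivAt_refl {f : ℝ → ℝ} {f' x : ℝ} (h : HasDerivAt f f' (-x)) :
    HasDerivAt (fun y => f (-y)) (-f') x := by
  have := h.comp x (hasDerivAt_neg x)
  exact this.congr_deriv (by ring)

lemma Sol.reflect {V1 V2 d1 d2 g1 g2 φ1 φ2 p1 p2 : ℝ → ℝ} {A κ R ω : ℝ}
    (hV : VD V1 V2 d1 d2 A κ) (h : Sol V1 V2 R ω g1 g2 φ1 φ2 p1 p2) :
    Sol V1 V2 R ω (fun x => g2 (-x)) (fun x => g1 (-x)) (fun x => φ2 (-x)) (fun x => φ1 (-x))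
      (fun x => -p2 (-x)) (fun x => -p1 (-x)) := by
  have hc : ∀ {f : ℝ → ℝ}, ContinuousOn f (Set.Icc (-R) R) →
      ContinuousOn (fun x => f (-x)) (Set.Icc (-R) R) := fun hf =>
    hf.comp continuous_neg.continuousOn (fun x hx => neg_mem_Icc hx)
  have e1 : ∀ x, V1 (-x) = V2 x := fun x => (hV.sV x).symm
  have e2 : ∀ x, V2 (-x) = V1 x := fun x => by rw [hV.sV, neg_neg]
  refine ⟨hc h.c2, hc h.c1, (hc h.cp2).neg, (hc h.cp1).neg, ?_, ?_, ?_, ?_⟩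
  · exact fun x hx => hasDerivAt_refl (h.D2 _ (neg_mem_Ioo hx))
  · exact fun x hx => hasDerivAt_refl (h.D1 _ (neg_mem_Ioo hx))
  · intro x hx
    refine (hasDerivAt_refl (h.E2 _ (neg_mem_Ioo hx))).neg.congr_deriv ?_
    rw [e1, e2]; ring
  · intro x hx
    refine (hasDerivAt_refl (h.E1 _ (neg_mem_Ioo hx))).neg.congr_deriv ?_
    rw [e1, e2]; ring

lemma Sol.scale {V1 V2 g1 g2 φ1 φ2 p1 p2 : ℝ → ℝ} {R ω : ℝ} (m : ℝ)
    (h : Sol V1 V2 R ω g1 g2 φ1 φ2 p1 p2) :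
    Sol V1 V2 R ω (fun x => m * g1 x) (fun x => m * g2 x) (fun x => m * φ1 x) (fun x => m * φ2 x)
      (fun x => m * p1 x) (fun x => m * p2 x) := by
  refine ⟨continuousOn_const.mul h.c1, continuousOn_const.mul h.c2, continuousOn_const.mul h.cp1,
    continuousOn_const.mul h.cp2, fun x hx => (h.D1 x hx).const_mul m,
    fun x hx => (h.D2 x hx).const_mul m, fun x hx => ?_, fun x hx => ?_⟩
  · exact ((h.E1 x hx).const_mul m).congr_deriv (by ring)
  · exact ((h.E2 x hx).const_mul m).congr_deriv (by ring)

lemma Sol.zero_freq {V1 V2 g1 g2 φ1 φ2 p1 p2 : ℝ → ℝ} {R ω : ℝ}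
    (h : Sol V1 V2 R ω g1 g2 φ1 φ2 p1 p2) :
    Sol V1 V2 R 0 (fun x => g1 x - ω ^ 2 * φ1 x) (fun x => g2 x - ω ^ 2 * φ2 x) φ1 φ2 p1 p2 := by
  refine ⟨h.c1, h.c2, h.cp1, h.cp2, h.D1, h.D2, fun x hx => ?_, fun x hx => ?_⟩
  · exact (h.E1 x hx).congr_deriv (by ring)
  · exact (h.E2 x hx).congr_deriv (by ring)

lemma outer {V1 V2 d1 d2 g1 g2 φ1 φ2 p1 p2 : ℝ → ℝ} {A κ R ω T μ G θ : ℝ}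
    (hV : VD V1 V2 d1 d2 A κ) (h : Sol V1 V2 R ω g1 g2 φ1 φ2 p1 p2)
    (hT : 0 ≤ T) (hTR : T ≤ R) (hω : 0 < ω) (hμ : 0 ≤ μ) (hG : 0 ≤ G) (hθ : 0 < θ)
    (b1 : φ1 R = 0) (b2 : φ2 R = 0)
    (hT1 : |φ1 T| ≤ μ) (hT2 : |φ2 T| ≤ μ)
    (hs1 : ∀ x ∈ Set.Icc (-R) R, |φ1 x| ≤ 1) (hs2 : ∀ x ∈ Set.Icc (-R) R, |φ2 x| ≤ 1)
    (hg1 : ∀ x ∈ Set.Ioo (-R) R, 0 ≤ x → |g1 x| ≤ 2 * G * Real.exp (-θ * x))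
    (hg2 : ∀ x ∈ Set.Ioo (-R) R, 0 ≤ x → |g2 x| ≤ 2 * G * Real.exp (-θ * x)) :
    ∀ x ∈ Set.Icc T R, |φ1 x| ≤ μ + κ * Real.exp (-T) + 2 * G / θ ^ 2 ∧
      |φ2 x| ≤ μ + κ * Real.exp (-T) + 2 * G / θ ^ 2 := by
  have sub : Set.Icc T R ⊆ Set.Icc (-R) R := Set.Icc_subset_Icc (by linarith) le_rfl
  have subo : Set.Ioo T R ⊆ Set.Ioo (-R) R := Set.Ioo_subset_Ioo (by linarith) le_rfl
  have key : ∀ x ∈ Set.Ioo T R, ∀ s g : ℝ, |s| ≤ 1 → |g| ≤ 2 * G * Real.exp (-θ * x) →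
      |2 * V1 x * V2 x * s - g| ≤ κ * Real.exp (-x) + 2 * G * Real.exp (-θ * x) := by
    intro x hx s g hs hg
    have hp : 0 ≤ 2 * V1 x * V2 x := by have := hV.pos1 x; have := hV.pos2 x; positivity
    have h3 := hV.tail3 x (hT.trans hx.1.le)
    have : |2 * V1 x * V2 x * s| ≤ 2 * V1 x * V2 x := by
      rw [abs_mul, abs_of_nonneg hp]; exact mul_le_of_le_one_right hp hs
    calc _ ≤ |2 * V1 x * V2 x * s| + |g| := abs_sub _ _
      _ ≤ _ := by linarith
  intro x hx
  constructor
  · refine barrier (f := φ1) (f' := p1) (c := fun x => V2 x ^ 2 + ω ^ 2)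
      (r := fun x => 2 * V1 x * V2 x * φ2 x - g1 x) hT hTR hμ hV.kpos.le hG hθ (h.c1.mono sub) hT1 b1
      (fun x hx => h.D1 x (subo hx)) (fun x hx => (h.E1 x (subo hx)).congr_deriv (by ring))
      (fun x hx => by positivity)
      (fun x hx => key x hx _ _ (hs2 x (sub (Set.Ioo_subset_Icc_self hx)))
        (hg1 x (subo hx) (hT.trans hx.1.le))) x hx
  · refine barrier (f := φ2) (f' := p2) (c := fun x => V1 x ^ 2 + ω ^ 2)
      (r := fun x => 2 * V1 x * V2 x * φ1 x - g2 x) hT hTR hμ hV.kpos.le hG hθ (h.c2.mono sub) hT2 b2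
      (fun x hx => h.D2 x (subo hx)) (fun x hx => (h.E2 x (subo hx)).congr_deriv (by ring))
      (fun x hx => by positivity)
      (fun x hx => key x hx _ _ (hs1 x (sub (Set.Ioo_subset_Icc_self hx)))
        (hg2 x (subo hx) (hT.trans hx.1.le))) x hx

set_option maxHeartbeats 1600000 in
/-- One-sided Wronskian estimate. -/
lemma wronsk {V1 V2 d1 d2 g1 g2 φ1 φ2 p1 p2 : ℝ → ℝ} {A κ R ω T G θ lam δ : ℝ}
    (hV : VD V1 V2 d1 d2 A κ) (h : Sol V1 V2 R ω g1 g2 φ1 φ2 p1 p2)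
    (hT : 0 < T) (hTR : T < R) (hω : 0 < ω) (hG : 0 ≤ G) (hθ : 0 < θ)
    (b1 : φ1 R = 0) (b2 : φ2 R = 0)
    (hs1 : ∀ x ∈ Set.Icc (-R) R, |φ1 x| ≤ 1) (hs2 : ∀ x ∈ Set.Icc (-R) R, |φ2 x| ≤ 1)
    (hg1 : ∀ x ∈ Set.Ioo (-R) R, 0 ≤ x → |g1 x| ≤ 2 * G * Real.exp (-θ * x))
    (hg2 : ∀ x ∈ Set.Ioo (-R) R, 0 ≤ x → |g2 x| ≤ 2 * G * Real.exp (-θ * x))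
    (hl1 : ∀ x ∈ Set.Icc (-T) T, |φ1 x - lam * d1 x| ≤ δ)
    (hl2 : ∀ x ∈ Set.Icc (-T) T, |φ2 x - lam * d2 x| ≤ δ) :
    |Real.sinh (ω * R) / Real.cosh (ω * R) *
        (φ1 0 + φ2 0 - d1 0 * p1 0 + d1 0 * p2 0) - ω * lam * (d1 T ^ 2 + d2 T ^ 2)| ≤
      ω * (6 * A * δ + 4 * A * ω * T + 4 * κ * Real.exp (-T)) + 8 * A * G / θ := by
  have hc : 0 < Real.cosh (ω * R) := Real.cosh_pos _
  have hδ : 0 ≤ δ := (abs_nonneg _).trans (hl1 0 ⟨by linarith, hT.le⟩)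
  have hA : 0 < A := (hV.dpos 0).trans_le (hV.dA 0)
  set w : ℝ → ℝ := fun x => Real.sinh (ω * (R - x)) / Real.cosh (ω * R) with hw
  set ch : ℝ → ℝ := fun x => Real.cosh (ω * (R - x)) / Real.cosh (ω * R) with hch
  have lin : ∀ x, HasDerivAt (fun x : ℝ => ω * (R - x)) (-ω) x := fun x =>
    (((hasDerivAt_id x).const_sub R).const_mul ω).congr_deriv (by ring)
  have w1 : ∀ x, HasDerivAt w (-ω * ch x) x := fun x =>
    ((lin x).sinh.div_const (Real.cosh (ω * R))).congr_deriv (by simp only [ch]; ring)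
  have ch1 : ∀ x, HasDerivAt ch (-ω * w x) x := fun x =>
    ((lin x).cosh.div_const (Real.cosh (ω * R))).congr_deriv (by simp only [w]; ring)
  have ch_nn : ∀ x, 0 ≤ ch x := fun x => div_nonneg (Real.cosh_pos _).le hc.le
  have ch_le : ∀ x, 0 ≤ x → x ≤ R → ch x ≤ 1 := by
    intro x h0 hR
    refine (div_le_one hc).2 (Real.cosh_le_cosh.2 ?_)
    rw [abs_of_nonneg (mul_nonneg hω.le (by linarith)), abs_of_nonneg (mul_nonneg hω.le (by linarith))]
    nlinarith
  have w_nn : ∀ x, x ≤ R → 0 ≤ w x := fun x hx =>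
    div_nonneg (Real.sinh_nonneg_iff.2 (mul_nonneg hω.le (by linarith))) hc.le
  have w_le : ∀ x, 0 ≤ x → x ≤ R → w x ≤ 1 := by
    intro x h0 hR
    refine le_trans ?_ (ch_le x h0 hR)
    exact div_le_div_of_nonneg_right (Real.sinh_lt_cosh _).le hc.le
  have ch_ge : ∀ x, 0 ≤ x → 1 - ω * x ≤ ch x := by
    intro x h0
    have i1 : Real.exp (-(ω * x)) * Real.cosh (ω * R) ≤ Real.cosh (ω * (R - x)) := by
      rw [Real.cosh_eq, Real.cosh_eq]
      have a1 : Real.exp (-(ω * x)) * Real.exp (ω * R) = Real.exp (ω * (R - x)) := by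
        rw [← Real.exp_add]; ring_nf
      have a2 : Real.exp (-(ω * x)) * Real.exp (-(ω * R)) ≤ Real.exp (-(ω * (R - x))) := by
        rw [← Real.exp_add]; apply Real.exp_le_exp.2; nlinarith
      linarith
    have i2 : Real.exp (-(ω * x)) ≤ ch x := (le_div_iff₀ hc).2 i1
    have := Real.add_one_le_exp (-(ω * x))
    linarith
  -- bounds on d
  have d1b : ∀ x, |d1 x| ≤ A := fun x => by rw [abs_of_pos (hV.dpos x)]; exact hV.dA x
  have d2b : ∀ x, |d2 x| ≤ A := fun x => by rw [hV.sd, abs_neg]; exact d1b _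
  -- the Wronskian
  set Q : ℝ → ℝ := fun x => φ1 x * (-ω * ch x * d1 x + w x * (V1 x * V2 x ^ 2)) - p1 x * (w x * d1 x)
    + (φ2 x * (-ω * ch x * d2 x + w x * (V2 x * V1 x ^ 2)) - p2 x * (w x * d2 x)) with hQ
  set q : ℝ → ℝ := fun x => -2 * ω * (V1 x * V2 x ^ 2 * (ch x * φ1 x) + V2 x * V1 x ^ 2 * (ch x * φ2 x))
    + (g1 x * (w x * d1 x) + g2 x * (w x * d2 x)) with hq
  have Qd : ∀ x ∈ Set.Ioo (-R) R, HasDerivAt Q (q x) x := by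
    intro x hx
    have t1 := ((h.D1 x hx).mul ((((ch1 x).const_mul (-ω)).mul (hV.hd1 x)).add
      ((w1 x).mul ((hV.h1 x).mul ((hV.h2 x).pow 2))))).sub ((h.E1 x hx).mul ((w1 x).mul (hV.hd1 x)))
    have t2 := ((h.D2 x hx).mul ((((ch1 x).const_mul (-ω)).mul (hV.hd2 x)).add
      ((w1 x).mul ((hV.h2 x).mul ((hV.h1 x).pow 2))))).sub ((h.E2 x hx).mul ((w1 x).mul (hV.hd2 x)))
    refine (t1.add t2).congr_deriv ?_
    simp only [q, Pi.add_apply, Pi.mul_apply, Pi.pow_apply]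
    ring
  have cd : ∀ {f f' : ℝ → ℝ}, (∀ x, HasDerivAt f (f' x) x) → Continuous f := fun hf =>
    continuous_iff_continuousAt.2 fun x => (hf x).continuousAt
  have cV1 := cd hV.h1
  have cV2 := cd hV.h2
  have cd1 := cd hV.hd1
  have cd2 := cd hV.hd2
  have cw := cd w1
  have cch := cd ch1
  have Qc : ContinuousOn Q (Set.Icc (-R) R) := by
    refine ContinuousOn.add ?_ ?_
    · exact (h.c1.mul (by fun_prop)).sub (h.cp1.mul (by fun_prop))
    · exact (h.c2.mul (by fun_prop)).sub (h.cp2.mul (by fun_prop))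
  have QR : Q R = 0 := by simp [hQ, hw, b1, b2]
  have Q0 : Q 0 = Real.sinh (ω * R) / Real.cosh (ω * R) *
        (φ1 0 + φ2 0 - d1 0 * p1 0 + d1 0 * p2 0) - ω * d1 0 * (φ1 0 - φ2 0) := by
    have e1 : ch 0 = 1 := by simp [hch, hc.ne']
    have e2 : w 0 = Real.sinh (ω * R) / Real.cosh (ω * R) := by simp [hw]
    have e3 : V2 0 = 1 := by rw [hV.sV]; simpa using hV.one
    have e4 : d2 0 = -d1 0 := by rw [hV.sd]; simp
    simp only [hQ]
    rw [e1, e2, e3, e4, hV.one]; ring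
  -- the source term
  have src : ∀ x, 0 < x → x < R → |g1 x * (w x * d1 x) + g2 x * (w x * d2 x)| ≤
      4 * A * G * Real.exp (-θ * x) := by
    intro x h0 hR
    have hx : x ∈ Set.Ioo (-R) R := ⟨by linarith, hR⟩
    have k : ∀ g d : ℝ, |g| ≤ 2 * G * Real.exp (-θ * x) → |d| ≤ A →
        |g * (w x * d)| ≤ 2 * G * Real.exp (-θ * x) * A := by
      intro g d hg hd
      rw [abs_mul]
      refine mul_le_mul hg ?_ (abs_nonneg _) (by positivity)
      rw [abs_mul, abs_of_nonneg (w_nn x hR.le)]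
      calc w x * |d| ≤ 1 * A := mul_le_mul (w_le x h0.le hR.le) hd (abs_nonneg _) zero_le_one
        _ = A := one_mul _
    have := k _ _ (hg1 x hx h0.le) (d1b x)
    have := k _ _ (hg2 x hx h0.le) (d2b x)
    have := abs_add_le (g1 x * (w x * d1 x)) (g2 x * (w x * d2 x))
    linarith
  have e2 : ∀ x : ℝ, HasDerivAt (fun x : ℝ => -(4 * A * G / θ) * Real.exp (-θ * x))
      (4 * A * G * Real.exp (-θ * x)) x := by
    intro x
    have := (((hasDerivAt_id x).const_mul (-θ)).exp).const_mul (-(4 * A * G / θ))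
    exact this.congr_deriv (by simp only [id]; field_simp)
  have Bd : ∀ m x : ℝ, HasDerivAt (fun x => 2 * ω * m * (d1 x + d2 x) +
      -(4 * A * G / θ) * Real.exp (-θ * x)) (2 * ω * m * (V1 x * V2 x ^ 2 + V2 x * V1 x ^ 2) +
      4 * A * G * Real.exp (-θ * x)) x := fun m x =>
    (((hV.hd1 x).add (hV.hd2 x)).const_mul (2 * ω * m)).add (e2 x)
  have Hd : ∀ x, HasDerivAt (fun x => -ω * lam * (d1 x ^ 2 + d2 x ^ 2))
      (-2 * ω * (V1 x * V2 x ^ 2 * (lam * d1 x) + V2 x * V1 x ^ 2 * (lam * d2 x))) x := fun x =>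
    ((((hV.hd1 x).pow 2).add ((hV.hd2 x).pow 2)).const_mul (-ω * lam)).congr_deriv (by ring)
  have pos1 : ∀ x, 0 ≤ V1 x * V2 x ^ 2 := fun x => by
    have := hV.pos1 x; positivity
  have pos2 : ∀ x, 0 ≤ V2 x * V1 x ^ 2 := fun x => by
    have := hV.pos2 x; positivity
  have comb : ∀ x m u v : ℝ, |u| ≤ m → |v| ≤ m →
      |-2 * ω * (V1 x * V2 x ^ 2 * u + V2 x * V1 x ^ 2 * v)| ≤
        2 * ω * m * (V1 x * V2 x ^ 2 + V2 x * V1 x ^ 2) := by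
    intro x m u v hu hv
    have a1 : |V1 x * V2 x ^ 2 * u| ≤ V1 x * V2 x ^ 2 * m := by
      rw [abs_mul, abs_of_nonneg (pos1 x)]; exact mul_le_mul_of_nonneg_left hu (pos1 x)
    have a2 : |V2 x * V1 x ^ 2 * v| ≤ V2 x * V1 x ^ 2 * m := by
      rw [abs_mul, abs_of_nonneg (pos2 x)]; exact mul_le_mul_of_nonneg_left hv (pos2 x)
    have a3 := abs_add_le (V1 x * V2 x ^ 2 * u) (V2 x * V1 x ^ 2 * v)
    rw [abs_mul, show |-2 * ω| = 2 * ω by rw [abs_mul, abs_of_pos hω]; norm_num]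
    nlinarith
  have bound1 := diff_le_of_deriv (f := fun x => Q x - (-ω * lam * (d1 x ^ 2 + d2 x ^ 2)))
    (f' := fun x => q x - (-2 * ω * (V1 x * V2 x ^ 2 * (lam * d1 x) + V2 x * V1 x ^ 2 * (lam * d2 x))))
    hT.le
    ((Qc.mono (Set.Icc_subset_Icc (by linarith) hTR.le)).sub (cd Hd).continuousOn)
    (cd (Bd (δ + ω * T))).continuousOn
    (fun x hx => (Qd x ⟨by linarith [hx.1], by linarith [hx.2]⟩).sub (Hd x))
    (fun x _ => Bd (δ + ω * T) x)
    (by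
      intro x hx
      have hxR : x < R := hx.2.trans hTR
      have hI : x ∈ Set.Icc (-T) T := ⟨by linarith [hx.1], hx.2.le⟩
      have hI' : x ∈ Set.Icc (-R) R := ⟨by linarith [hx.1], hxR.le⟩
      have c1 := ch_le x hx.1.le hxR.le
      have c2 := ch_ge x hx.1.le
      have c3 : ω * x ≤ ω * T := mul_le_mul_of_nonneg_left hx.2.le hω.le
      have k : ∀ f d : ℝ, |f| ≤ 1 → |f - lam * d| ≤ δ → |ch x * f - lam * d| ≤ δ + ω * T := by
        intro f d hf hfd
        have : |(1 - ch x) * f| ≤ ω * T := by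
          rw [abs_mul, abs_of_nonneg (by linarith : 0 ≤ 1 - ch x)]
          calc (1 - ch x) * |f| ≤ (ω * T) * 1 :=
                mul_le_mul (by linarith) hf (abs_nonneg _) (by positivity)
            _ = _ := mul_one _
        calc |ch x * f - lam * d| = |(f - lam * d) - (1 - ch x) * f| := by congr 1; ring
          _ ≤ |f - lam * d| + |(1 - ch x) * f| := abs_sub _ _
          _ ≤ _ := by linarith
      have r1 := comb x _ _ _ (k _ _ (hs1 x hI') (hl1 x hI)) (k _ _ (hs2 x hI') (hl2 x hI))
      have r2 := src x hx.1 hxR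
      refine le_trans (le_of_eq ?_) ((abs_add_le _ _).trans (add_le_add r1 r2))
      simp only [hq]; congr 1; ring)
  have bound2 := diff_le_of_deriv (f := Q) (f' := q) hTR.le
    (Qc.mono (Set.Icc_subset_Icc (by linarith) le_rfl)) (cd (Bd 1)).continuousOn
    (fun x hx => (Qd x ⟨by linarith [hx.1], by linarith [hx.2]⟩))
    (fun x _ => Bd 1 x)
    (by
      intro x hx
      have hx0 : 0 < x := hT.trans hx.1
      have hI' : x ∈ Set.Icc (-R) R := ⟨by linarith [hx.1], hx.2.le⟩
      have c1 := ch_le x hx0.le hx.2.le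
      have k : ∀ f : ℝ, |f| ≤ 1 → |ch x * f| ≤ 1 := by
        intro f hf
        rw [abs_mul, abs_of_nonneg (ch_nn x)]
        exact mul_le_one₀ c1 (abs_nonneg _) hf
      have r1 := comb x _ _ _ (k _ (hs1 x hI')) (k _ (hs2 x hI'))
      have r2 := src x hx0 hx.2
      exact (abs_add_le _ _).trans (add_le_add r1 r2))
  rw [QR] at bound2
  rw [Q0] at bound1
  have d20 : d2 0 = -d1 0 := by rw [hV.sd]; simp
  -- increments of d
  have i1 : d1 T - d1 0 ≤ A := by have := hV.dA T; have := hV.dpos 0; linarith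
  have i2 : d2 T - d2 0 ≤ A := by
    rw [d20, hV.sd]; have := hV.dA 0; have := hV.dpos (-T); linarith
  have i3 : d1 R - d1 T ≤ κ * Real.exp (-T) := by
    have := hV.dA R; have := hV.tail1 T hT.le; linarith
  have i4 : d2 R - d2 T ≤ κ * Real.exp (-T) := by
    rw [hV.sd, hV.sd T]; have := hV.dpos (-R); have := hV.tail2 T hT.le; linarith
  have hK : 0 ≤ 4 * A * G / θ := by positivity
  have x0 : Real.exp (-θ * 0) = 1 := by simp
  have xT : 0 ≤ Real.exp (-θ * T) := (Real.exp_pos _).le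
  have xT1 : Real.exp (-θ * T) ≤ 1 := Real.exp_le_one_iff.2 (by nlinarith)
  have xR : 0 ≤ Real.exp (-θ * R) := (Real.exp_pos _).le
  have B1 : 2 * ω * (δ + ω * T) * (d1 T + d2 T) + -(4 * A * G / θ) * Real.exp (-θ * T) -
      (2 * ω * (δ + ω * T) * (d1 0 + d2 0) + -(4 * A * G / θ) * Real.exp (-θ * 0)) ≤
      2 * ω * (δ + ω * T) * (2 * A) + 4 * A * G / θ := by
    rw [x0]
    have : 0 ≤ 2 * ω * (δ + ω * T) := by positivity
    have := mul_le_mul_of_nonneg_left (show d1 T - d1 0 + (d2 T - d2 0) ≤ 2 * A by linarith) this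
    have := mul_nonneg hK xT
    linarith
  have B2 : 2 * ω * 1 * (d1 R + d2 R) + -(4 * A * G / θ) * Real.exp (-θ * R) -
      (2 * ω * 1 * (d1 T + d2 T) + -(4 * A * G / θ) * Real.exp (-θ * T)) ≤
      2 * ω * (2 * (κ * Real.exp (-T))) + 4 * A * G / θ := by
    have : 0 ≤ 2 * ω := by positivity
    have := mul_le_mul_of_nonneg_left
      (show d1 R - d1 T + (d2 R - d2 T) ≤ 2 * (κ * Real.exp (-T)) by linarith) this
    have := mul_nonneg hK xR
    have := mul_le_mul_of_nonneg_left xT1 hK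
    linarith
  have b3 : |ω * d1 0 * (φ1 0 - φ2 0) - ω * lam * (d1 0 ^ 2 + d2 0 ^ 2)| ≤ ω * (2 * A * δ) := by
    have z : (0 : ℝ) ∈ Set.Icc (-T) T := ⟨by linarith, hT.le⟩
    have l1 := hl1 0 z
    have l2 := hl2 0 z
    have : |(φ1 0 - lam * d1 0) - (φ2 0 - lam * d2 0)| ≤ 2 * δ := (abs_sub _ _).trans (by linarith)
    have e : ω * d1 0 * (φ1 0 - φ2 0) - ω * lam * (d1 0 ^ 2 + d2 0 ^ 2) =
      ω * (d1 0 * ((φ1 0 - lam * d1 0) - (φ2 0 - lam * d2 0))) := by rw [d20]; ring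
    rw [e, abs_mul, abs_of_pos hω, abs_mul]
    refine mul_le_mul_of_nonneg_left ?_ hω.le
    calc |d1 0| * _ ≤ A * (2 * δ) := mul_le_mul (d1b 0) this (abs_nonneg _) hA.le
      _ = _ := by ring
  have f1 := abs_le.1 (bound1.trans B1)
  have f2 := abs_le.1 (bound2.trans B2)
  have f3 := abs_le.1 b3
  have e8 : 8 * A * G / θ = 2 * (4 * A * G / θ) := by ring
  rw [e8, abs_le]
  constructor <;> linarith

open Filter Topology

/-- Compactness for approximate solutions of a linear system: forward Cauchy estimate. -/
lemma cauchy_forward {E : Type*} [NormedAddCommGroup E] [NormedSpace ℝ E]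
    {M : ℝ → E →L[ℝ] E} (hM : Continuous M) {u u' : ℕ → ℝ → E} {a : E}
    (h0 : Tendsto (fun n => u n 0) atTop (𝓝 a))
    (hd : ∀ n : ℕ, ∀ x ∈ Set.Ioo (-(n : ℝ)) n, HasDerivAt (u n) (u' n x) x)
    (he : ∀ n : ℕ, ∀ x ∈ Set.Ioo (-(n : ℝ)) n, ‖u' n x - M x (u n x)‖ ≤ 1 / ((n : ℝ) + 1))
    (T : ℝ) (hT : 0 < T) : UniformCauchySeqOn u atTop (Set.Icc 0 T) := by
  obtain ⟨K, hK⟩ := (isCompact_Icc (a := (0 : ℝ)) (b := T)).exists_bound_of_continuousOn hM.continuousOn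
  have hKn : 0 ≤ K := (norm_nonneg _).trans (hK 0 ⟨le_rfl, hT.le⟩)
  set K' : NNReal := ⟨K + 1, by linarith⟩ with hK'
  have hK'v : (K' : ℝ) = K + 1 := rfl
  have hK'0 : (K' : ℝ) ≠ 0 := by rw [hK'v]; linarith
  set c := Real.exp (K' * T) with hc
  have hcpos : 0 < c := Real.exp_pos _
  rw [Metric.uniformCauchySeqOn_iff]
  intro ε hε
  have hcs : CauchySeq (fun n => u n 0) := h0.cauchySeq
  obtain ⟨N1, hN1⟩ := Metric.cauchySeq_iff.1 hcs (ε / (4 * c)) (by positivity)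
  obtain ⟨N2, hN2⟩ := exists_nat_gt T
  obtain ⟨N3, hN3⟩ := exists_nat_gt (8 * c / ε)
  refine ⟨max N1 (max N2 N3), fun m hm n hn x hx => ?_⟩
  have big : ∀ n : ℕ, n ≥ max N1 (max N2 N3) → N1 ≤ n ∧ T < n ∧ 1 / ((n : ℝ) + 1) ≤ ε / (8 * c) := by
    intro n hn
    have a1 : N1 ≤ n := le_trans (le_max_left _ _) hn
    have a2 : N2 ≤ n := le_trans (le_trans (le_max_left _ _) (le_max_right _ _)) hn
    have a3 : N3 ≤ n := le_trans (le_trans (le_max_right _ _) (le_max_right _ _)) hn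
    have a2' : (N2 : ℝ) ≤ n := by exact_mod_cast a2
    have a3' : (N3 : ℝ) ≤ n := by exact_mod_cast a3
    refine ⟨a1, by linarith, ?_⟩
    rw [div_le_div_iff₀ (by positivity) (by positivity)]
    have := (div_lt_iff₀ hε).1 hN3
    nlinarith
  obtain ⟨m1, m2, m3⟩ := big m hm
  obtain ⟨n1, n2, n3⟩ := big n hn
  have hI : ∀ n : ℕ, T < n → ∀ t ∈ Set.Icc 0 T, t ∈ Set.Ioo (-(n : ℝ)) n := fun n hn t ht =>
    ⟨by linarith [ht.1], by linarith [ht.2]⟩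
  have hI' : ∀ n : ℕ, T < n → ∀ t ∈ Set.Ico 0 T, t ∈ Set.Ioo (-(n : ℝ)) n := fun n hn t ht =>
    hI n hn t ⟨ht.1, ht.2.le⟩
  have gr := dist_le_of_approx_trajectories_ODE_of_mem (v := fun t y => M t y) (s := fun _ => Set.univ)
    (K := K') (f := u m) (g := u n) (f' := u' m) (g' := u' n) (a := 0) (b := T)
    (εf := 1 / ((m : ℝ) + 1)) (εg := 1 / ((n : ℝ) + 1)) (δ := ε / (4 * c))
    (by
      intro t ht
      refine ((M t).lipschitz.weaken ?_).lipschitzOnWith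
      rw [← NNReal.coe_le_coe, hK'v]
      have := hK t ⟨ht.1, ht.2.le⟩
      simp only [coe_nnnorm]; linarith)
    (fun t ht => (hd m t (hI m m2 t ht)).continuousAt.continuousWithinAt)
    (fun t ht => (hd m t (hI' m m2 t ht)).hasDerivWithinAt)
    (fun t ht => by rw [dist_eq_norm]; exact he m t (hI' m m2 t ht))
    (fun _ _ => Set.mem_univ _)
    (fun t ht => (hd n t (hI n n2 t ht)).continuousAt.continuousWithinAt)
    (fun t ht => (hd n t (hI' n n2 t ht)).hasDerivWithinAt)
    (fun t ht => by rw [dist_eq_norm]; exact he n t (hI' n n2 t ht))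
    (fun _ _ => Set.mem_univ _)
    (hN1 m m1 n n1).le x hx
  refine lt_of_le_of_lt gr ?_
  rw [gronwallBound_of_K_ne_0 hK'0, sub_zero]
  have ex : Real.exp (K' * x) ≤ c := Real.exp_le_exp.2 (mul_le_mul_of_nonneg_left hx.2 K'.2)
  have ex0 : 1 ≤ Real.exp (K' * x) := Real.one_le_exp (mul_nonneg K'.2 hx.1)
  have s1 : ε / (4 * c) * Real.exp (K' * x) ≤ ε / 4 := by
    calc _ ≤ ε / (4 * c) * c := mul_le_mul_of_nonneg_left ex (by positivity)
      _ = ε / 4 := by field_simp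
  have s2 : (1 / ((m : ℝ) + 1) + 1 / ((n : ℝ) + 1)) / K' * (Real.exp (K' * x) - 1) ≤ ε / 4 := by
    have p0 : 0 ≤ 1 / ((m : ℝ) + 1) + 1 / ((n : ℝ) + 1) := by positivity
    have p1 : (1 / ((m : ℝ) + 1) + 1 / ((n : ℝ) + 1)) / K' ≤ ε / (4 * c) := by
      refine (div_le_self p0 (by rw [hK'v]; linarith)).trans ?_
      have : ε / (4 * c) = ε / (8 * c) + ε / (8 * c) := by field_simp; norm_num
      linarith
    calc _ ≤ ε / (4 * c) * c := mul_le_mul p1 (by linarith) (by linarith) (by positivity)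
      _ = ε / 4 := by field_simp
  linarith

lemma ode_compactness {E : Type*} [NormedAddCommGroup E] [NormedSpace ℝ E] [CompleteSpace E]
    {M : ℝ → E →L[ℝ] E} (hM : Continuous M) {u u' : ℕ → ℝ → E} {a : E}
    (h0 : Tendsto (fun n => u n 0) atTop (𝓝 a))
    (hd : ∀ n : ℕ, ∀ x ∈ Set.Ioo (-(n : ℝ)) n, HasDerivAt (u n) (u' n x) x)
    (he : ∀ n : ℕ, ∀ x ∈ Set.Ioo (-(n : ℝ)) n, ‖u' n x - M x (u n x)‖ ≤ 1 / ((n : ℝ) + 1)) :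
    ∃ v : ℝ → E, (∀ x, HasDerivAt v (M x (v x)) x) ∧
      ∀ T, 0 < T → TendstoUniformlyOn u v atTop (Set.Icc (-T) T) := by
  have hI : ∀ (n : ℕ) (x : ℝ), x ∈ Set.Ioo (-(n : ℝ)) n → -x ∈ Set.Ioo (-(n : ℝ)) n :=
    fun n x hx => neg_mem_Ioo hx
  have cau : ∀ T, 0 < T → UniformCauchySeqOn u atTop (Set.Icc (-T) T) := by
    intro T hT
    have f1 := cauchy_forward hM h0 hd he T hT
    have f2 := cauchy_forward (M := fun x => -M (-x)) (hM.comp continuous_neg).neg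
      (u := fun n x => u n (-x)) (u' := fun n x => -u' n (-x)) (a := a) (by simpa using h0)
      (fun n x hx => by
        have := (hd n _ (hI n x hx)).scomp x (hasDerivAt_neg x)
        simpa [Function.comp_def] using this)
      (fun n x hx => by
        have := he n _ (hI n x hx)
        have e : -u' n (-x) - (-M (-x)) (u n (-x)) = -(u' n (-x) - M (-x) (u n (-x))) := by
          simp only [neg_apply]; abel
        rw [e, norm_neg]; exact this) T hT
    rw [Metric.uniformCauchySeqOn_iff] at f1 f2 ⊢
    intro ε hε
    obtain ⟨N1, h1⟩ := f1 ε hε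
    obtain ⟨N2, h2⟩ := f2 ε hε
    refine ⟨max N1 N2, fun m hm n hn x hx => ?_⟩
    rcases le_total 0 x with h | h
    · exact h1 m (le_of_max_le_left hm) n (le_of_max_le_left hn) x ⟨h, hx.2⟩
    · have := h2 m (le_of_max_le_right hm) n (le_of_max_le_right hn) (-x)
        ⟨by linarith, by linarith [hx.1]⟩
      simpa using this
  have lim : ∀ x, ∃ l, Tendsto (fun n => u n x) atTop (𝓝 l) := by
    intro x
    have := (cau (|x| + 1) (by positivity)).cauchySeq
      (x := x) ⟨by have := neg_abs_le x; linarith, by have := le_abs_self x; linarith⟩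
    exact cauchySeq_tendsto_of_complete this
  choose v hv using lim
  have unif : ∀ T, 0 < T → TendstoUniformlyOn u v atTop (Set.Icc (-T) T) := fun T hT =>
    (cau T hT).tendstoUniformlyOn_of_tendsto fun x _ => hv x
  refine ⟨v, fun x => ?_, unif⟩
  set T := |x| + 1 with hTdef
  have hT : 0 < T := by positivity
  have hxT : x ∈ Set.Ioo (-T) T := ⟨by have := neg_abs_le x; linarith, by have := le_abs_self x; linarith⟩
  refine hasDerivAt_of_tendstoUniformlyOn (l := atTop) (f := u) (f' := u') (s := Set.Ioo (-T) T)
    (g' := fun x => M x (v x)) isOpen_Ioo ?_ ?_ (fun y _ => hv y) hxT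
  · obtain ⟨K, hK⟩ := (isCompact_Icc (a := -T) (b := T)).exists_bound_of_continuousOn hM.continuousOn
    have hKn : 0 ≤ K := (norm_nonneg _).trans (hK 0 ⟨by linarith, hT.le⟩)
    rw [Metric.tendstoUniformlyOn_iff]
    intro ε hε
    have e1 := (Metric.tendstoUniformlyOn_iff.1 (unif T hT)) (ε / (2 * (K + 1))) (by positivity)
    obtain ⟨N2, hN2⟩ := exists_nat_gt T
    obtain ⟨N3, hN3⟩ := exists_nat_gt (2 / ε)
    filter_upwards [e1, eventually_ge_atTop N2, eventually_ge_atTop N3] with n h1 h2 h3 y hy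
    have a2' : (N2 : ℝ) ≤ n := by exact_mod_cast h2
    have a3' : (N3 : ℝ) ≤ n := by exact_mod_cast h3
    have i1 := h1 y (Set.Ioo_subset_Icc_self hy)
    have i2 := he n y ⟨by linarith [hy.1], by linarith [hy.2]⟩
    have i3 : 1 / ((n : ℝ) + 1) < ε / 2 := by
      rw [div_lt_div_iff₀ (by positivity) (by positivity)]
      have := (div_lt_iff₀ hε).1 hN3
      nlinarith
    have i4 : ‖M y (v y) - M y (u n y)‖ ≤ ε / 2 := by
      rw [← map_sub]
      refine ((M y).le_opNorm _).trans ?_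
      rw [dist_eq_norm] at i1
      calc ‖M y‖ * ‖v y - u n y‖ ≤ (K + 1) * (ε / (2 * (K + 1))) :=
            mul_le_mul ((hK y (Set.Ioo_subset_Icc_self hy)).trans (by linarith)) i1.le
              (norm_nonneg _) (by positivity)
        _ = ε / 2 := by field_simp
    rw [dist_eq_norm]
    calc ‖M y (v y) - u' n y‖ = ‖(M y (v y) - M y (u n y)) - (u' n y - M y (u n y))‖ := by
          congr 1; abel
      _ ≤ _ := norm_sub_le _ _
      _ < ε := by linarith
  · obtain ⟨N2, hN2⟩ := exists_nat_gt T
    filter_upwards [eventually_ge_atTop N2] with n h2 y hy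
    have a2' : (N2 : ℝ) ≤ n := by exact_mod_cast h2
    exact hd n y ⟨by linarith [hy.1], by linarith [hy.2]⟩

open Filter Topology

abbrev E4 := ℝ × ℝ × ℝ × ℝ

noncomputable def opC0 : E4 →L[ℝ] E4 where
  toFun u := (u.2.2.1, u.2.2.2, 0, 0)
  map_add' u v := by simp
  map_smul' c u := by simp
  cont := by fun_prop

noncomputable def opC1 : E4 →L[ℝ] E4 where
  toFun u := (0, 0, u.1, 0)
  map_add' u v := by simp
  map_smul' c u := by simp
  cont := by fun_prop

noncomputable def opC2 : E4 →L[ℝ] E4 where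
  toFun u := (0, 0, u.2.1, u.1)
  map_add' u v := by simp
  map_smul' c u := by simp
  cont := by fun_prop

noncomputable def opC3 : E4 →L[ℝ] E4 where
  toFun u := (0, 0, 0, u.2.1)
  map_add' u v := by simp
  map_smul' c u := by simp
  cont := by fun_prop

noncomputable def opM (V1 V2 : ℝ → ℝ) (x : ℝ) : E4 →L[ℝ] E4 :=
  opC0 + (V2 x ^ 2) • opC1 + (2 * V1 x * V2 x) • opC2 + (V1 x ^ 2) • opC3

lemma opM_apply (V1 V2 : ℝ → ℝ) (x : ℝ) (u : E4) :
    opM V1 V2 x u = (u.2.2.1, u.2.2.2, V2 x ^ 2 * u.1 + 2 * V1 x * V2 x * u.2.1,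
      V1 x ^ 2 * u.2.1 + 2 * V1 x * V2 x * u.1) := by
  have e0 : opC0 u = (u.2.2.1, u.2.2.2, 0, 0) := rfl
  have e1 : opC1 u = (0, 0, u.1, 0) := rfl
  have e2 : opC2 u = (0, 0, u.2.1, u.1) := rfl
  have e3 : opC3 u = (0, 0, 0, u.2.1) := rfl
  simp [opM, e0, e1, e2, e3]
  ring

lemma slope_bound {f p p' : ℝ → ℝ} {K : ℝ}
    (h1 : ∀ x ∈ Set.Icc (0 : ℝ) 1, HasDerivAt f (p x) x)
    (h2 : ∀ x ∈ Set.Icc (0 : ℝ) 1, HasDerivAt p (p' x) x)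
    (hf : ∀ x ∈ Set.Icc (0 : ℝ) 1, |f x| ≤ 1)
    (hp : ∀ x ∈ Set.Icc (0 : ℝ) 1, |p' x| ≤ K) : |p 0| ≤ 2 + K := by
  obtain ⟨ξ, hξ, e⟩ := exists_hasDerivAt_eq_slope f p (zero_lt_one)
    (fun x hx => (h1 x hx).continuousAt.continuousWithinAt)
    (fun x hx => h1 x (Set.Ioo_subset_Icc_self hx))
  have m : ∀ x ∈ Set.Icc 0 ξ, x ∈ Set.Icc (0 : ℝ) 1 := fun x hx => ⟨hx.1, hx.2.trans hξ.2.le⟩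
  have b := diff_le_of_deriv (f := p) (f' := p') (B := fun x => K * x) (B' := fun _ => K) hξ.1.le
    (fun x hx => (h2 x (m x hx)).continuousAt.continuousWithinAt) (by fun_prop)
    (fun x hx => h2 x (m x (Set.Ioo_subset_Icc_self hx)))
    (fun x _ => by simpa using (hasDerivAt_id x).const_mul K)
    (fun x hx => hp x (m x (Set.Ioo_subset_Icc_self hx)))
  have hK : 0 ≤ K := (abs_nonneg _).trans (hp 0 (by simp))
  have b0 := abs_le.1 (hf 0 (by simp))
  have b1 := abs_le.1 (hf 1 (by simp))
  have hb := abs_le.1 b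
  have : K * ξ ≤ K := mul_le_of_le_one_right hK hξ.2.le
  rw [sub_zero, div_one] at e
  rw [abs_le]; constructor <;> linarith

lemma compact_lemma {V1 V2 d1 d2 : ℝ → ℝ} {A κ : ℝ} (hV : VD V1 V2 d1 d2 A κ)
    (hnd : ∀ ψ1 ψ2 q1 q2 : ℝ → ℝ, (∀ x, HasDerivAt ψ1 (q1 x) x) → (∀ x, HasDerivAt ψ2 (q2 x) x) →
      (∀ x, HasDerivAt q1 (V2 x ^ 2 * ψ1 x + 2 * V1 x * V2 x * ψ2 x) x) →
      (∀ x, HasDerivAt q2 (V1 x ^ 2 * ψ2 x + 2 * V1 x * V2 x * ψ1 x) x) →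
      (∀ x, |ψ1 x| ≤ 1 ∧ |ψ2 x| ≤ 1) →
      ∃ lam : ℝ, (∀ x, ψ1 x = lam * d1 x) ∧ (∀ x, ψ2 x = lam * d2 x))
    (T δ : ℝ) (hT : 0 < T) (hδ : 0 < δ) :
    ∃ N : ℝ, 0 < N ∧ ∀ (R : ℝ) (g1 g2 φ1 φ2 p1 p2 : ℝ → ℝ), N < R →
      Sol V1 V2 R 0 g1 g2 φ1 φ2 p1 p2 →
      (∀ x ∈ Set.Ioo (-R) R, |g1 x| ≤ 1 / N) → (∀ x ∈ Set.Ioo (-R) R, |g2 x| ≤ 1 / N) →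
      (∀ x ∈ Set.Icc (-R) R, |φ1 x| ≤ 1) → (∀ x ∈ Set.Icc (-R) R, |φ2 x| ≤ 1) →
      ∃ lam : ℝ, (∀ x ∈ Set.Icc (-T) T, |φ1 x - lam * d1 x| ≤ δ) ∧
        (∀ x ∈ Set.Icc (-T) T, |φ2 x - lam * d2 x| ≤ δ) := by
  by_contra hcon
  push Not at hcon
  have hcon' := fun n : ℕ => hcon ((n : ℝ) + 1) (by positivity)
  choose R g1 g2 φ1 φ2 p1 p2 hR hS hg1 hg2 hφ1 hφ2 hno using hcon'
  have cV1 : Continuous V1 := continuous_iff_continuousAt.2 fun x => (hV.h1 x).continuousAt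
  have cV2 : Continuous V2 := continuous_iff_continuousAt.2 fun x => (hV.h2 x).continuousAt
  have hM : Continuous (opM V1 V2) := by unfold opM; fun_prop
  -- bound on initial slopes
  obtain ⟨K, hK⟩ := (isCompact_Icc (a := (0 : ℝ)) (b := 1)).exists_bound_of_continuousOn
    (f := fun x => V1 x ^ 2 + V2 x ^ 2 + 2 * V1 x * V2 x) (by fun_prop)
  have hK2 : ∀ x ∈ Set.Icc (0 : ℝ) 1, V1 x ^ 2 + V2 x ^ 2 + 2 * V1 x * V2 x ≤ K := fun x hx =>
    (le_abs_self _).trans (hK x hx)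
  have rhs : ∀ x ∈ Set.Icc (0 : ℝ) 1, ∀ s t g : ℝ, |s| ≤ 1 → |t| ≤ 1 → |g| ≤ 1 →
      |(V2 x ^ 2 + 0 ^ 2) * s + 2 * V1 x * V2 x * t - g| ≤ K + 1 ∧
      |(V1 x ^ 2 + 0 ^ 2) * s + 2 * V1 x * V2 x * t - g| ≤ K + 1 := by
    intro x hx s t g hs ht hg
    have hk := hK2 x hx
    have v1 := hV.pos1 x
    have v2 := hV.pos2 x
    have w : ∀ y : ℝ, 0 ≤ y → ∀ s : ℝ, |s| ≤ 1 → |y * s| ≤ y := fun y hy s hs => by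
      rw [abs_mul, abs_of_nonneg hy]; exact mul_le_of_le_one_right hy hs
    have a1 := abs_le.1 (w _ (sq_nonneg (V1 x)) s hs)
    have a2 := abs_le.1 (w _ (sq_nonneg (V2 x)) s hs)
    have a3 := abs_le.1 (w (2 * V1 x * V2 x) (by positivity) t ht)
    have a4 := abs_le.1 hg
    have := sq_nonneg (V1 x)
    have := sq_nonneg (V2 x)
    constructor <;> rw [abs_le] <;> constructor <;> linarith
  have n1 : ∀ n : ℕ, 1 / ((n : ℝ) + 1) ≤ 1 := fun n => by
    rw [div_le_one (by positivity)]
    have : (0 : ℝ) ≤ n := Nat.cast_nonneg n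
    linarith
  have R1 : ∀ n, 1 < R n := fun n => by
    have : (0 : ℝ) ≤ n := Nat.cast_nonneg n
    linarith [hR n]
  have mo : ∀ n, ∀ x ∈ Set.Icc (0 : ℝ) 1, x ∈ Set.Ioo (-R n) (R n) := fun n x hx =>
    ⟨by linarith [R1 n, hx.1], by linarith [R1 n, hx.2]⟩
  have mc : ∀ n, ∀ x ∈ Set.Icc (0 : ℝ) 1, x ∈ Set.Icc (-R n) (R n) := fun n x hx =>
    Set.Ioo_subset_Icc_self (mo n x hx)
  have s1 : ∀ n, |p1 n 0| ≤ 2 + (K + 1) := fun n =>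
    slope_bound (fun x hx => (hS n).D1 x (mo n x hx)) (fun x hx => (hS n).E1 x (mo n x hx))
      (fun x hx => hφ1 n x (mc n x hx))
      (fun x hx => (rhs x hx _ _ _ (hφ1 n x (mc n x hx)) (hφ2 n x (mc n x hx))
        ((hg1 n x (mo n x hx)).trans (n1 n))).1)
  have s2 : ∀ n, |p2 n 0| ≤ 2 + (K + 1) := fun n =>
    slope_bound (fun x hx => (hS n).D2 x (mo n x hx)) (fun x hx => (hS n).E2 x (mo n x hx))
      (fun x hx => hφ2 n x (mc n x hx))
      (fun x hx => (rhs x hx _ _ _ (hφ2 n x (mc n x hx)) (hφ1 n x (mc n x hx))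
        ((hg2 n x (mo n x hx)).trans (n1 n))).2)
  set u : ℕ → ℝ → E4 := fun n x => (φ1 n x, φ2 n x, p1 n x, p2 n x) with hu
  obtain ⟨a, -, σ, hσ, ha⟩ := tendsto_subseq_of_bounded (x := fun n => u n 0)
    (Metric.isBounded_closedBall (x := (0 : E4)) (r := 3 + (K + 1))) (by
      intro n
      have z : (0 : ℝ) ∈ Set.Icc (0 : ℝ) 1 := by simp
      have := hφ1 n 0 (mc n 0 z)
      have := hφ2 n 0 (mc n 0 z)
      have := s1 n
      have := s2 n
      have : 0 ≤ |p1 n 0| := abs_nonneg _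
      rw [mem_closedBall_zero_iff]
      simp only [hu, Prod.norm_def, Real.norm_eq_abs, sup_le_iff]
      have : 0 ≤ K := (norm_nonneg _).trans (hK 0 z)
      exact ⟨by linarith, by linarith, by linarith, by linarith⟩)
  have hσn : ∀ n : ℕ, (n : ℝ) ≤ σ n := fun n => by exact_mod_cast hσ.le_apply
  have mem : ∀ n : ℕ, ∀ x ∈ Set.Ioo (-(n : ℝ)) n, x ∈ Set.Ioo (-R (σ n)) (R (σ n)) := fun n x hx =>
    ⟨by linarith [hσn n, hR (σ n), hx.1], by linarith [hσn n, hR (σ n), hx.2]⟩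
  obtain ⟨v, hv, hconv⟩ := ode_compactness hM (u := fun n => u (σ n))
    (u' := fun n x => (p1 (σ n) x, p2 (σ n) x,
      (V2 x ^ 2 + 0 ^ 2) * φ1 (σ n) x + 2 * V1 x * V2 x * φ2 (σ n) x - g1 (σ n) x,
      (V1 x ^ 2 + 0 ^ 2) * φ2 (σ n) x + 2 * V1 x * V2 x * φ1 (σ n) x - g2 (σ n) x)) (a := a) ha
    (fun n x hx => ((hS (σ n)).D1 x (mem n x hx)).prodMk (((hS (σ n)).D2 x (mem n x hx)).prodMk
      (((hS (σ n)).E1 x (mem n x hx)).prodMk ((hS (σ n)).E2 x (mem n x hx)))))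
    (by
      intro n x hx
      have l : 1 / ((σ n : ℝ) + 1) ≤ 1 / ((n : ℝ) + 1) :=
        one_div_le_one_div_of_le (by positivity) (by linarith [hσn n])
      have l1 := (hg1 (σ n) x (mem n x hx)).trans l
      have l2 := (hg2 (σ n) x (mem n x hx)).trans l
      have l0 : (0 : ℝ) ≤ 1 / ((n : ℝ) + 1) := by positivity
      have e : ((p1 (σ n) x, p2 (σ n) x,
        (V2 x ^ 2 + 0 ^ 2) * φ1 (σ n) x + 2 * V1 x * V2 x * φ2 (σ n) x - g1 (σ n) x,
        (V1 x ^ 2 + 0 ^ 2) * φ2 (σ n) x + 2 * V1 x * V2 x * φ1 (σ n) x - g2 (σ n) x) : E4)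
        - opM V1 V2 x (u (σ n) x) = (0, 0, -g1 (σ n) x, -g2 (σ n) x) := by
        rw [opM_apply]; simp [hu]
      rw [e]
      simp only [Prod.norm_def, Real.norm_eq_abs, sup_le_iff, abs_neg, abs_zero]
      exact ⟨l0, l0, l1, l2⟩)
  have pt : ∀ x, Tendsto (fun n => u (σ n) x) atTop (𝓝 (v x)) := fun x =>
    (hconv (|x| + 1) (by positivity)).tendsto_at
      ⟨by have := neg_abs_le x; linarith, by have := le_abs_self x; linarith⟩
  have hev : ∀ x : ℝ, ∀ᶠ n in atTop, x ∈ Set.Icc (-R (σ n)) (R (σ n)) := by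
    intro x
    obtain ⟨N, hN⟩ := exists_nat_gt |x|
    filter_upwards [eventually_ge_atTop N] with n hn
    have : (N : ℝ) ≤ n := by exact_mod_cast hn
    have := neg_abs_le x
    have := le_abs_self x
    exact Set.Ioo_subset_Icc_self (mem n x ⟨by linarith, by linarith⟩)
  have hv' : ∀ x, HasDerivAt v ((v x).2.2.1, (v x).2.2.2,
      V2 x ^ 2 * (v x).1 + 2 * V1 x * V2 x * (v x).2.1,
      V1 x ^ 2 * (v x).2.1 + 2 * V1 x * V2 x * (v x).1) x := fun x => by
    have := hv x
    rwa [opM_apply] at this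
  obtain ⟨lam, k1, k2⟩ := hnd (fun x => (v x).1) (fun x => (v x).2.1) (fun x => (v x).2.2.1)
    (fun x => (v x).2.2.2)
    (fun x => (hv' x).fst) (fun x => (hv' x).snd.fst) (fun x => (hv' x).snd.snd.fst)
    (fun x => (hv' x).snd.snd.snd)
    (fun x => ⟨le_of_tendsto (((continuous_fst.tendsto _).comp (pt x)).abs)
        ((hev x).mono fun n hn => hφ1 (σ n) x hn),
      le_of_tendsto ((((continuous_fst.comp continuous_snd).tendsto _).comp (pt x)).abs)
        ((hev x).mono fun n hn => hφ2 (σ n) x hn)⟩)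
  obtain ⟨n, hn⟩ := (Metric.tendstoUniformlyOn_iff.1 (hconv T hT) δ hδ).exists
  have hd : ∀ x ∈ Set.Icc (-T) T, |φ1 (σ n) x - lam * d1 x| ≤ δ ∧ |φ2 (σ n) x - lam * d2 x| ≤ δ := by
    intro x hx
    have := hn x hx
    rw [← k1, ← k2]
    rw [dist_comm, dist_eq_norm] at this
    constructor
    · exact (norm_fst_le (u (σ n) x - v x)).trans this.le
    · exact ((norm_fst_le _).trans (norm_snd_le (u (σ n) x - v x))).trans this.le
  obtain ⟨x, hx, hlt⟩ := hno (σ n) lam (fun x hx => (hd x hx).1)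
  linarith [(hd x hx).2]

open Filter Topology

set_option maxHeartbeats 2000000 in
lemma core {V1 V2 d1 d2 : ℝ → ℝ} {A κ : ℝ} (hV : VD V1 V2 d1 d2 A κ)
    (hnd : ∀ ψ1 ψ2 q1 q2 : ℝ → ℝ, (∀ x, HasDerivAt ψ1 (q1 x) x) → (∀ x, HasDerivAt ψ2 (q2 x) x) →
      (∀ x, HasDerivAt q1 (V2 x ^ 2 * ψ1 x + 2 * V1 x * V2 x * ψ2 x) x) →
      (∀ x, HasDerivAt q2 (V1 x ^ 2 * ψ2 x + 2 * V1 x * V2 x * ψ1 x) x) →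
      (∀ x, |ψ1 x| ≤ 1 ∧ |ψ2 x| ≤ 1) →
      ∃ lam : ℝ, (∀ x, ψ1 x = lam * d1 x) ∧ (∀ x, ψ2 x = lam * d2 x))
    (θ : ℝ) (hθ : 0 < θ) :
    ∃ C R₀ ω₀ : ℝ, 0 < C ∧ 0 < R₀ ∧ 0 < ω₀ ∧
      ∀ (R ω G : ℝ) (g1 g2 φ1 φ2 p1 p2 : ℝ → ℝ), R₀ < R → 0 < ω → ω < ω₀ → 0 ≤ G →
      Sol V1 V2 R ω g1 g2 φ1 φ2 p1 p2 →
      φ1 (-R) = 0 → φ1 R = 0 → φ2 (-R) = 0 → φ2 R = 0 →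
      (∀ x ∈ Set.Ioo (-R) R, |g1 x| ≤ 2 * G * Real.exp (-θ * |x|)) →
      (∀ x ∈ Set.Ioo (-R) R, |g2 x| ≤ 2 * G * Real.exp (-θ * |x|)) →
      (∀ x ∈ Set.Icc (-R) R, |φ1 x| ≤ 1) → (∀ x ∈ Set.Icc (-R) R, |φ2 x| ≤ 1) →
      (∃ x ∈ Set.Icc (-R) R, 1 ≤ max |φ1 x| |φ2 x|) → 1 ≤ C * ω⁻¹ * G := by
  have ha := hV.dpos 0
  have hA : 0 < A := ha.trans_le (hV.dA 0)
  have hκ := hV.kpos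
  set a := d1 0 with hadef
  set c1 := 6 * A ^ 2 / a ^ 2 + 1 with hc1
  set c2 := 4 * A ^ 2 / a ^ 2 with hc2
  set c3 := 4 * κ * A / a ^ 2 + κ with hc3
  set c4 := 8 * A ^ 2 / (a ^ 2 * θ) + 2 / θ ^ 2 with hc4
  have c1p : 0 < c1 := by positivity
  have c2p : 0 < c2 := by positivity
  have c3p : 0 < c3 := by positivity
  have c4p : 0 < c4 := by positivity
  set T := 6 * c3 with hTdef
  have hT : 0 < T := by positivity
  set δ := 1 / (6 * c1) with hδdef
  have hδ : 0 < δ := by positivity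
  have eT : c3 * Real.exp (-T) ≤ 1 / 6 := by
    have := Real.add_one_le_exp T
    rw [Real.exp_neg, ← div_eq_mul_inv, div_le_div_iff₀ (Real.exp_pos _) (by norm_num)]
    linarith
  obtain ⟨N, hN, hcomp⟩ := compact_lemma hV hnd T δ hT hδ
  refine ⟨2 * c4 + 4 * N, N + T, min 1 (min (1 / (2 * N)) (1 / (6 * c2 * T))), by positivity,
    by positivity, by positivity, ?_⟩
  intro R ω G g1 g2 φ1 φ2 p1 p2 hR hω hω0 hG hS b1 b2 b3 b4 hg1 hg2 hs1 hs2 hatt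
  have ω1 : ω < 1 := hω0.trans_le (min_le_left _ _)
  have ω2 : ω < 1 / (2 * N) := hω0.trans_le ((min_le_right _ _).trans (min_le_left _ _))
  have ω3 : ω < 1 / (6 * c2 * T) := hω0.trans_le ((min_le_right _ _).trans (min_le_right _ _))
  have hTR : T < R := by linarith
  have hNR : N < R := by linarith
  have hinv : 1 ≤ ω⁻¹ := (one_le_inv₀ hω).2 ω1.le
  have hGi : G ≤ ω⁻¹ * G := le_mul_of_one_le_left hG hinv
  have hGi0 : 0 ≤ ω⁻¹ * G := hG.trans hGi
  by_cases hGN : 2 * G ≤ 1 / (2 * N)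
  swap
  · push Not at hGN
    have : 1 < 2 * G * (2 * N) := (div_lt_iff₀ (by positivity)).1 hGN
    have h2 : 4 * N * G ≤ 4 * N * (ω⁻¹ * G) := mul_le_mul_of_nonneg_left hGi (by positivity)
    have h3 : 0 ≤ 2 * c4 * (ω⁻¹ * G) := by positivity
    nlinarith
  -- compactness
  have hNN : 1 / N = 1 / (2 * N) + 1 / (2 * N) := by field_simp; norm_num
  have zf : ∀ x ∈ Set.Ioo (-R) R, ∀ g f : ℝ, |g| ≤ 2 * G * Real.exp (-θ * |x|) → |f| ≤ 1 →
      |g - ω ^ 2 * f| ≤ 1 / N := by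
    intro x hx g f hg hf
    have e1 : Real.exp (-θ * |x|) ≤ 1 := Real.exp_le_one_iff.2 (by
      have := mul_nonneg hθ.le (abs_nonneg x); linarith)
    have e2 : |g| ≤ 2 * G := hg.trans (mul_le_of_le_one_right (by linarith) e1)
    have e3 : |ω ^ 2 * f| ≤ ω := by
      rw [abs_mul, abs_of_pos (by positivity : 0 < ω ^ 2)]
      have : ω ^ 2 * |f| ≤ ω ^ 2 := mul_le_of_le_one_right (by positivity) hf
      nlinarith
    have := abs_sub g (ω ^ 2 * f)
    linarith
  obtain ⟨lam, l1, l2⟩ := hcomp R _ _ φ1 φ2 p1 p2 hNR hS.zero_freq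
    (fun x hx => zf x hx _ _ (hg1 x hx) (hs1 x (Set.Ioo_subset_Icc_self hx)))
    (fun x hx => zf x hx _ _ (hg2 x hx) (hs2 x (Set.Ioo_subset_Icc_self hx))) hs1 hs2
  -- reflected problem
  have hSr := hS.reflect hV
  have hgp : ∀ {g : ℝ → ℝ}, (∀ x ∈ Set.Ioo (-R) R, |g x| ≤ 2 * G * Real.exp (-θ * |x|)) →
      ∀ x ∈ Set.Ioo (-R) R, 0 ≤ x → |g x| ≤ 2 * G * Real.exp (-θ * x) := fun hg x hx h0 => by
    have := hg x hx
    rwa [abs_of_nonneg h0] at this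
  have hgm : ∀ {g : ℝ → ℝ}, (∀ x ∈ Set.Ioo (-R) R, |g x| ≤ 2 * G * Real.exp (-θ * |x|)) →
      ∀ x ∈ Set.Ioo (-R) R, 0 ≤ x → |g (-x)| ≤ 2 * G * Real.exp (-θ * x) := fun hg x hx h0 => by
    have := hg (-x) (neg_mem_Ioo hx)
    rwa [abs_neg, abs_of_nonneg h0] at this
  have rs1 : ∀ x ∈ Set.Icc (-R) R, |φ2 (-x)| ≤ 1 := fun x hx => hs2 _ (neg_mem_Icc hx)
  have rs2 : ∀ x ∈ Set.Icc (-R) R, |φ1 (-x)| ≤ 1 := fun x hx => hs1 _ (neg_mem_Icc hx)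
  have w1 := wronsk hV hS hT hTR hω hG hθ b2 b4 hs1 hs2 (hgp hg1) (hgp hg2) l1 l2
  have w2 := wronsk (lam := -lam) (δ := δ) hV hSr hT hTR hω hG hθ b3 b1 rs1 rs2 (hgm hg2) (hgm hg1)
    (fun x hx => by
      have := l2 (-x) (neg_mem_Icc hx)
      rw [hV.sd, neg_neg] at this
      simpa using this)
    (fun x hx => by
      have := l1 (-x) (neg_mem_Icc hx)
      rw [hV.sd]
      simpa using this)
  simp only [neg_zero] at w2
  rw [← hadef] at w1 w2
  set D := ω * (6 * A * δ + 4 * A * ω * T + 4 * κ * Real.exp (-T)) + 8 * A * G / θ with hD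
  set n := d1 T ^ 2 + d2 T ^ 2 with hn
  have hna : a ^ 2 ≤ n := by
    have mono : Monotone d1 := monotone_of_deriv_nonneg (fun x => (hV.hd1 x).differentiableAt)
      (fun x => by rw [(hV.hd1 x).deriv]; have := hV.pos1 x; positivity)
    have : a ≤ d1 T := mono hT.le
    have h5 := sq_nonneg (d2 T)
    have h6 : a ^ 2 ≤ d1 T ^ 2 := pow_le_pow_left₀ ha.le this 2
    linarith
  have hlam : ω * (|lam| * a ^ 2) ≤ D := by
    have k1 := abs_le.1 w1
    have k2 := abs_le.1 w2
    have : |ω * lam * n| ≤ D := by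
      rw [abs_le]
      constructor <;> linarith
    rw [abs_mul, abs_mul, abs_of_pos hω, abs_of_nonneg ((sq_nonneg a).trans hna)] at this
    have q := mul_le_mul_of_nonneg_left hna (mul_nonneg hω.le (abs_nonneg lam))
    linarith
  have hlam2 : |lam| * A ≤ (6 * A ^ 2 / a ^ 2) * δ + c2 * (ω * T) +
      (4 * κ * A / a ^ 2) * Real.exp (-T) + 8 * A ^ 2 / (a ^ 2 * θ) * (ω⁻¹ * G) := by
    have e : (6 * A ^ 2 / a ^ 2) * δ + c2 * (ω * T) +
      (4 * κ * A / a ^ 2) * Real.exp (-T) + 8 * A ^ 2 / (a ^ 2 * θ) * (ω⁻¹ * G) =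
      D * (A / (ω * a ^ 2)) := by
      rw [hD, hc2]; field_simp
    have e2 : |lam| * A = ω * (|lam| * a ^ 2) * (A / (ω * a ^ 2)) := by field_simp
    rw [e, e2]
    exact mul_le_mul_of_nonneg_right hlam (by positivity)
  set μ := |lam| * A + δ with hμdef
  have hμ : 0 ≤ μ := by positivity
  have inner : ∀ f d : ℝ, |f - lam * d| ≤ δ → |d| ≤ A → |f| ≤ μ := by
    intro f d h1 h2
    have k : |lam * d| ≤ |lam| * A := by
      rw [abs_mul]; exact mul_le_mul_of_nonneg_left h2 (abs_nonneg _)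
    calc |f| = |(f - lam * d) + lam * d| := by congr 1; ring
      _ ≤ _ := abs_add_le _ _
      _ ≤ μ := by linarith
  have d1b : ∀ x, |d1 x| ≤ A := fun x => by rw [abs_of_pos (hV.dpos x)]; exact hV.dA x
  have d2b : ∀ x, |d2 x| ≤ A := fun x => by rw [hV.sd, abs_neg]; exact d1b _
  have in1 : ∀ x ∈ Set.Icc (-T) T, |φ1 x| ≤ μ := fun x hx => inner _ _ (l1 x hx) (d1b x)
  have in2 : ∀ x ∈ Set.Icc (-T) T, |φ2 x| ≤ μ := fun x hx => inner _ _ (l2 x hx) (d2b x)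
  have mT : T ∈ Set.Icc (-T) T := ⟨by linarith, le_rfl⟩
  have mT' : -T ∈ Set.Icc (-T) T := ⟨le_rfl, by linarith⟩
  have o1 := outer hV hS hT.le hTR.le hω hμ hG hθ b2 b4 (in1 T mT) (in2 T mT) hs1 hs2
    (hgp hg1) (hgp hg2)
  have o2 := outer hV hSr hT.le hTR.le hω hμ hG hθ b3 b1 (in2 _ mT') (in1 _ mT') rs1 rs2
    (hgm hg2) (hgm hg1)
  have fin : 1 ≤ μ + κ * Real.exp (-T) + 2 * G / θ ^ 2 := by
    obtain ⟨x, hx, hx1⟩ := hatt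
    refine hx1.trans (max_le_iff.2 ?_)
    have nn1 : 0 ≤ κ * Real.exp (-T) := by positivity
    have nn2 : 0 ≤ 2 * G / θ ^ 2 := by positivity
    rcases le_total x (-T) with h | h
    · have := o2 (-x) ⟨by linarith, by linarith [hx.1]⟩
      rw [neg_neg] at this
      exact this.symm
    · rcases le_total x T with h' | h'
      · exact ⟨(in1 x ⟨h, h'⟩).trans (by linarith), (in2 x ⟨h, h'⟩).trans (by linarith)⟩
      · exact o1 x ⟨h', hx.2⟩
  have q1 : c1 * δ = 1 / 6 := by rw [hδdef]; field_simp
  have q2 : c2 * (ω * T) ≤ 1 / 6 := by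
    have := (lt_div_iff₀ (by positivity)).1 ω3
    nlinarith
  have q3 : 2 * G / θ ^ 2 ≤ 2 / θ ^ 2 * (ω⁻¹ * G) := by
    have := mul_le_mul_of_nonneg_left hGi (show 0 ≤ 2 / θ ^ 2 by positivity)
    calc _ = 2 / θ ^ 2 * G := by ring
      _ ≤ _ := this
  have q4 : 0 ≤ 4 * N * (ω⁻¹ * G) := by positivity
  have q5 : c1 * δ = 6 * A ^ 2 / a ^ 2 * δ + δ := by rw [hc1]; ring
  have q6 : c3 * Real.exp (-T) = 4 * κ * A / a ^ 2 * Real.exp (-T) + κ * Real.exp (-T) := by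
    rw [hc3]; ring
  have q7 : c4 * (ω⁻¹ * G) = 8 * A ^ 2 / (a ^ 2 * θ) * (ω⁻¹ * G) + 2 / θ ^ 2 * (ω⁻¹ * G) := by
    rw [hc4]; ring
  have : (2 * c4 + 4 * N) * ω⁻¹ * G = 2 * (c4 * (ω⁻¹ * G)) + 4 * N * (ω⁻¹ * G) := by ring
  rw [this]
  linarith

end


set_option maxHeartbeats 2000000 in
/-- **Theorem 1.1 (main a-priori estimate).** For every `θ > 0` there exist constants
`C, R₀, ω₀, P₀ > 0` such that whenever `R > R₀`, `ω ∈ (0, ω₀)`, `ω * R > P₀`, and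
`φ = (φ1, φ2)` is a pair of `C²` functions on `[−R, R]` vanishing at `±R` with
`L_ω φ = g` on `(−R, R)`, then
`sup_{[-R,R]} max (|φ1|, |φ2|) ≤ C * ω⁻¹ * ‖g‖_{C⁰_θ((−R,R))}`. -/
theorem main_invertibility_estimate
    (V1 V2 : ℝ → ℝ)
    (hV1smooth : ContDiff ℝ (⊤ : ℕ∞) V1) (hV2smooth : ContDiff ℝ (⊤ : ℕ∞) V2)
    (hV1pos : ∀ x : ℝ, 0 < V1 x) (hV2pos : ∀ x : ℝ, 0 < V2 x)
    (hode1 : ∀ x : ℝ, -deriv (deriv V1) x + V1 x * (V2 x) ^ 2 = 0)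
    (hode2 : ∀ x : ℝ, -deriv (deriv V2) x + V2 x * (V1 x) ^ 2 = 0)
    (hV10 : V1 0 = 1) (hV20 : V2 0 = 1)
    (hsym : ∀ x : ℝ, V1 (-x) = V2 x)
    (hmono : ∀ x : ℝ, 0 < deriv V1 x)
    (A B c0 C0 : ℝ) (hA : 0 < A) (hc0 : 0 < c0) (hC0 : 0 < C0)
    (hasym1 : ∀ x : ℝ, 0 ≤ x → |V1 x - A * x - B| ≤ C0 * Real.exp (-c0 * x ^ 2))
    (hasym2 : ∀ x : ℝ, 0 ≤ x → |deriv V1 x - A| ≤ C0 * Real.exp (-c0 * x ^ 2))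
    (hasym3 : ∀ x : ℝ, 0 ≤ x → |deriv (deriv V1) x| ≤ C0 * Real.exp (-c0 * x ^ 2))
    (hasym4 : ∀ x : ℝ, x ≤ 0 →
      |V1 x| + |deriv V1 x| + |deriv (deriv V1) x| ≤ C0 * Real.exp (-c0 * x ^ 2))
    (hnondeg : ∀ ψ1 ψ2 : ℝ → ℝ, ContDiff ℝ 2 ψ1 → ContDiff ℝ 2 ψ2 →
      (∃ Cb : ℝ, ∀ x : ℝ, |ψ1 x| ≤ Cb ∧ |ψ2 x| ≤ Cb) →
      (∀ x : ℝ, -deriv (deriv ψ1) x + (V2 x) ^ 2 * ψ1 x + 2 * V1 x * V2 x * ψ2 x = 0) →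
      (∀ x : ℝ, -deriv (deriv ψ2) x + (V1 x) ^ 2 * ψ2 x + 2 * V1 x * V2 x * ψ1 x = 0) →
      ∃ lam : ℝ, (∀ x : ℝ, ψ1 x = lam * deriv V1 x) ∧ (∀ x : ℝ, ψ2 x = lam * deriv V2 x))
    (θ : ℝ) (hθ : 0 < θ) :
    ∃ C R₀ ω₀ P₀ : ℝ, 0 < C ∧ 0 < R₀ ∧ 0 < ω₀ ∧ 0 < P₀ ∧
      ∀ R ω : ℝ, R₀ < R → ω ∈ Set.Ioo 0 ω₀ → P₀ < ω * R →
      ∀ φ1 φ2 g1 g2 : ℝ → ℝ,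
        ContDiffOn ℝ 2 φ1 (Set.Icc (-R) R) → ContDiffOn ℝ 2 φ2 (Set.Icc (-R) R) →
        ContinuousOn g1 (Set.Icc (-R) R) → ContinuousOn g2 (Set.Icc (-R) R) →
        φ1 (-R) = 0 → φ1 R = 0 → φ2 (-R) = 0 → φ2 R = 0 →
        (∀ x ∈ Set.Ioo (-R) R,
          -deriv (deriv φ1) x + ((V2 x) ^ 2 + ω ^ 2) * φ1 x + 2 * V1 x * V2 x * φ2 x = g1 x ∧
          -deriv (deriv φ2) x + ((V1 x) ^ 2 + ω ^ 2) * φ2 x + 2 * V1 x * V2 x * φ1 x = g2 x) →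
        ∀ G : ℝ, (∀ x ∈ Set.Ioo (-R) R, max |g1 x| |g2 x| * Real.cosh (θ * x) ≤ G) →
        ∀ x ∈ Set.Icc (-R) R, max |φ1 x| |φ2 x| ≤ C * ω⁻¹ * G := by
  have hd1 : ∀ x, HasDerivAt V1 (deriv V1 x) x := fun x =>
    (hV1smooth.differentiable (by simp) x).hasDerivAt
  have hd2 : ∀ x, HasDerivAt V2 (deriv V2 x) x := fun x =>
    (hV2smooth.differentiable (by simp) x).hasDerivAt
  have hD1 : ContDiff ℝ 1 (deriv V1) :=
    (contDiff_infty_iff_deriv.1 hV1smooth).2.of_le (by exact_mod_cast (le_top : (1:ℕ∞) ≤ ⊤))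
  have hD2 : ContDiff ℝ 1 (deriv V2) :=
    (contDiff_infty_iff_deriv.1 hV2smooth).2.of_le (by exact_mod_cast (le_top : (1:ℕ∞) ≤ ⊤))
  have hdd1 : ∀ x, HasDerivAt (deriv V1) (V1 x * V2 x ^ 2) x := fun x => by
    have := (hD1.differentiable (by simp) x).hasDerivAt
    rwa [show deriv (deriv V1) x = V1 x * V2 x ^ 2 by linarith [hode1 x]] at this
  have hdd2 : ∀ x, HasDerivAt (deriv V2) (V2 x * V1 x ^ 2) x := fun x => by
    have := (hD2.differentiable (by simp) x).hasDerivAt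
    rwa [show deriv (deriv V2) x = V2 x * V1 x ^ 2 by linarith [hode2 x]] at this
  have hsd : ∀ x, deriv V2 x = -deriv V1 (-x) := fun x => by
    have h := hasDerivAt_refl (hd1 (-x))
    have e : (fun y => V1 (-y)) = V2 := funext hsym
    rw [e] at h
    exact h.deriv
  -- Gaussian versus exponential
  set k := Real.exp (1 / c0) with hk
  have hkp : 0 < k := Real.exp_pos _
  have gauss : ∀ x : ℝ, Real.exp (-c0 * x ^ 2) ≤ k * Real.exp (-2 * x) := by
    intro x
    rw [hk, ← Real.exp_add]
    apply Real.exp_le_exp.2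
    have h1 : c0 * (1 / c0) = 1 := by field_simp
    have h2 : 0 ≤ c0 * (x - 1 / c0) ^ 2 := by positivity
    have h3 : c0 * (x - 1 / c0) ^ 2 = c0 * x ^ 2 - 2 * x * (c0 * (1 / c0)) + (c0 * (1 / c0)) * (1 / c0) := by
      ring
    rw [h1] at h3
    linarith
  have gauss1 : ∀ x : ℝ, 0 ≤ x → C0 * Real.exp (-c0 * x ^ 2) ≤ C0 * k * Real.exp (-x) := by
    intro x hx
    have h1 : Real.exp (-2 * x) ≤ Real.exp (-x) := Real.exp_le_exp.2 (by linarith)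
    have h2 := (gauss x).trans (mul_le_mul_of_nonneg_left h1 hkp.le)
    have := mul_le_mul_of_nonneg_left h2 hC0.le
    linarith
  set m := A + |B| + C0 with hm
  have hmp : 0 < m := by positivity
  set κ := C0 * k * (1 + 2 * m) with hκ
  have hκp : 0 < κ := by positivity
  have hCk : C0 * k ≤ κ := le_mul_of_one_le_right (by positivity) (by linarith)
  have gauss2 : ∀ x : ℝ, 0 ≤ x → C0 * Real.exp (-c0 * x ^ 2) ≤ κ * Real.exp (-x) := fun x hx =>
    (gauss1 x hx).trans (mul_le_mul_of_nonneg_right hCk (Real.exp_pos _).le)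
  have mono : Monotone (deriv V1) := monotone_of_deriv_nonneg (fun x => (hdd1 x).differentiableAt)
      (fun x => by rw [(hdd1 x).deriv]; have := hV1pos x; positivity)
  have lim : Filter.Tendsto (deriv V1) Filter.atTop (nhds A) := by
    rw [tendsto_iff_dist_tendsto_zero]
    have h0 : Filter.Tendsto (fun x : ℝ => κ * Real.exp (-x)) Filter.atTop (nhds 0) := by
      simpa using Real.tendsto_exp_neg_atTop_nhds_zero.const_mul κ
    refine squeeze_zero' (Filter.Eventually.of_forall fun _ => dist_nonneg) ?_ h0
    filter_upwards [Filter.eventually_ge_atTop 0] with x hx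
    exact (hasym2 x hx).trans (gauss2 x hx)
  have hV : VD V1 V2 (deriv V1) (deriv V2) A κ := by
    refine ⟨hd1, hd2, hdd1, hdd2, hV1pos, hV2pos, fun x => (hsym x).symm, hsd, hV10, hmono,
      fun x => mono.ge_of_tendsto lim x, hκp, ?_, ?_, ?_⟩
    · intro x hx
      have := abs_le.1 ((hasym2 x hx).trans (gauss2 x hx))
      linarith
    · intro x hx
      have h4 := hasym4 (-x) (by linarith)
      rw [neg_sq] at h4
      have h5 := gauss2 x hx
      have h6 := le_abs_self (deriv V1 (-x))
      have h7 := abs_nonneg (V1 (-x))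
      have h8 := abs_nonneg (deriv (deriv V1) (-x))
      linarith
    · intro x hx
      have h4 := hasym4 (-x) (by linarith)
      rw [neg_sq] at h4
      have h6 := le_abs_self (V1 (-x))
      have h7 := abs_nonneg (deriv V1 (-x))
      have h8 := abs_nonneg (deriv (deriv V1) (-x))
      have hv2 : V2 x ≤ C0 * (k * Real.exp (-2 * x)) := by
        rw [← hsym x]
        have := mul_le_mul_of_nonneg_left (gauss x) hC0.le
        linarith
      have hv1 : V1 x ≤ A * x + |B| + C0 := by
        have h1 := (abs_le.1 (hasym1 x hx)).2
        have h2 : Real.exp (-c0 * x ^ 2) ≤ 1 := Real.exp_le_one_iff.2 (by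
          have : 0 ≤ c0 * x ^ 2 := by positivity
          linarith)
        have h3 := mul_le_of_le_one_right hC0.le h2
        have := le_abs_self B
        linarith
      have hx1 : (A * x + |B| + C0) * Real.exp (-x) ≤ m := by
        have e1 : x * Real.exp (-x) ≤ 1 := by
          rw [Real.exp_neg, ← div_eq_mul_inv, div_le_one (Real.exp_pos _)]
          linarith [Real.add_one_le_exp x]
        have e2 : Real.exp (-x) ≤ 1 := Real.exp_le_one_iff.2 (by linarith)
        have e3 := mul_le_mul_of_nonneg_left e1 hA.le
        have e4 := mul_le_mul_of_nonneg_left e2 (show 0 ≤ |B| + C0 by positivity)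
        rw [hm]
        linarith
      have hexp : Real.exp (-2 * x) = Real.exp (-x) * Real.exp (-x) := by
        rw [← Real.exp_add]; ring_nf
      have hprod : V1 x * V2 x ≤ (A * x + |B| + C0) * (C0 * (k * Real.exp (-2 * x))) :=
        mul_le_mul hv1 hv2 (hV2pos x).le (by positivity)
      have hq : (A * x + |B| + C0) * (C0 * (k * Real.exp (-2 * x))) =
          (A * x + |B| + C0) * Real.exp (-x) * (C0 * k * Real.exp (-x)) := by rw [hexp]; ring
      have hpp : 0 ≤ C0 * k * Real.exp (-x) := by positivity
      have h9 := mul_le_mul_of_nonneg_right hx1 hpp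
      have h10 : κ * Real.exp (-x) = C0 * k * Real.exp (-x) + 2 * (m * (C0 * k * Real.exp (-x))) := by
        rw [hκ]; ring
      rw [h10]
      linarith
  have hnd : ∀ ψ1 ψ2 q1 q2 : ℝ → ℝ, (∀ x, HasDerivAt ψ1 (q1 x) x) → (∀ x, HasDerivAt ψ2 (q2 x) x) →
      (∀ x, HasDerivAt q1 (V2 x ^ 2 * ψ1 x + 2 * V1 x * V2 x * ψ2 x) x) →
      (∀ x, HasDerivAt q2 (V1 x ^ 2 * ψ2 x + 2 * V1 x * V2 x * ψ1 x) x) →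
      (∀ x, |ψ1 x| ≤ 1 ∧ |ψ2 x| ≤ 1) →
      ∃ lam : ℝ, (∀ x, ψ1 x = lam * deriv V1 x) ∧ (∀ x, ψ2 x = lam * deriv V2 x) := by
    intro ψ1 ψ2 q1 q2 h1 h2 h3 h4 h5
    have e1 : deriv ψ1 = q1 := funext fun x => (h1 x).deriv
    have e2 : deriv ψ2 = q2 := funext fun x => (h2 x).deriv
    have cd : ∀ {f f' : ℝ → ℝ}, (∀ x, HasDerivAt f (f' x) x) → Continuous f := fun hf =>
      continuous_iff_continuousAt.2 fun x => (hf x).continuousAt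
    have cψ1 := cd h1
    have cψ2 := cd h2
    have cV1 := cd hd1
    have cV2 := cd hd2
    have reg : ∀ {f f' f'' : ℝ → ℝ}, (∀ x, HasDerivAt f (f' x) x) → (∀ x, HasDerivAt f' (f'' x) x) →
        Continuous f'' → ContDiff ℝ 2 f := by
      intro f f' f'' k1 k2 k3
      have e : deriv f = f' := funext fun x => (k1 x).deriv
      have e' : deriv f' = f'' := funext fun x => (k2 x).deriv
      refine (contDiff_succ_iff_deriv (n := 1)).2 ⟨fun x => (k1 x).differentiableAt, by simp, ?_⟩
      rw [e]
      refine contDiff_one_iff_deriv.2 ⟨fun x => (k2 x).differentiableAt, ?_⟩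
      rw [e']; exact k3
    refine hnondeg ψ1 ψ2 (reg h1 h3 (by fun_prop)) (reg h2 h4 (by fun_prop)) ⟨1, h5⟩ ?_ ?_
    · intro x
      rw [e1, (h3 x).deriv]; ring
    · intro x
      rw [e2, (h4 x).deriv]; ring
  obtain ⟨C, R₀, ω₀, hC, hR0, hω0, hcore⟩ := core hV hnd θ hθ
  refine ⟨C, R₀, ω₀, 1, hC, hR0, hω0, one_pos, ?_⟩
  intro R ω hR hω _ φ1 φ2 g1 g2 hφ1 hφ2 _ _ b1 b2 b3 b4 heq G hG
  have hRp : 0 < R := hR0.trans hR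
  have ud : UniqueDiffOn ℝ (Set.Icc (-R) R) := uniqueDiffOn_Icc (by linarith)
  have dInt : ∀ {f : ℝ → ℝ}, ContDiffOn ℝ 2 f (Set.Icc (-R) R) → ∀ x ∈ Set.Ioo (-R) R,
      HasDerivAt f (derivWithin f (Set.Icc (-R) R) x) x ∧
      HasDerivAt (derivWithin f (Set.Icc (-R) R)) (deriv (deriv f) x) x := by
    intro f hf x hx
    have hn : Set.Icc (-R) R ∈ nhds x := Icc_mem_nhds hx.1 hx.2
    have h1 : DifferentiableAt ℝ f x := (hf.differentiableOn (by simp) x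
      (Set.Ioo_subset_Icc_self hx)).differentiableAt hn
    refine ⟨by rw [derivWithin_of_mem_nhds hn]; exact h1.hasDerivAt, ?_⟩
    have h2 : ContDiffOn ℝ 1 (deriv f) (Set.Ioo (-R) R) :=
      (hf.mono Set.Ioo_subset_Icc_self).deriv_of_isOpen isOpen_Ioo (by norm_num)
    have hno : Set.Ioo (-R) R ∈ nhds x := isOpen_Ioo.mem_nhds hx
    have h3 : DifferentiableAt ℝ (deriv f) x := (h2.differentiableOn (by simp) x hx).differentiableAt hno
    refine h3.hasDerivAt.congr_of_eventuallyEq ?_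
    filter_upwards [hno] with y hy
    exact derivWithin_of_mem_nhds (Icc_mem_nhds hy.1 hy.2)
  have hS : Sol V1 V2 R ω g1 g2 φ1 φ2 (derivWithin φ1 (Set.Icc (-R) R))
      (derivWithin φ2 (Set.Icc (-R) R)) := by
    refine ⟨hφ1.continuousOn, hφ2.continuousOn, hφ1.continuousOn_derivWithin ud (by norm_num),
      hφ2.continuousOn_derivWithin ud (by norm_num), fun x hx => (dInt hφ1 x hx).1,
      fun x hx => (dInt hφ2 x hx).1, fun x hx => (dInt hφ1 x hx).2.congr_deriv ?_,
      fun x hx => (dInt hφ2 x hx).2.congr_deriv ?_⟩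
    · linarith [(heq x hx).1]
    · linarith [(heq x hx).2]
  have hG0 : 0 ≤ G := le_trans (mul_nonneg (le_max_of_le_left (abs_nonneg _)) (Real.cosh_pos _).le)
    (hG 0 ⟨by linarith, hRp⟩)
  have gb : ∀ x ∈ Set.Ioo (-R) R, max |g1 x| |g2 x| ≤ 2 * G * Real.exp (-θ * |x|) := by
    intro x hx
    have h1 := hG x hx
    have h2 : Real.exp (θ * |x|) / 2 ≤ Real.cosh (θ * x) := by
      rw [← Real.cosh_abs, abs_mul, abs_of_pos hθ, Real.cosh_eq]
      have := Real.exp_pos (-(θ * |x|))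
      linarith
    have h3 : 0 ≤ max |g1 x| |g2 x| := le_max_of_le_left (abs_nonneg _)
    have h4 := (mul_le_mul_of_nonneg_left h2 h3).trans h1
    have h5 : -θ * |x| = -(θ * |x|) := by ring
    rw [h5, Real.exp_neg, ← div_eq_mul_inv, le_div_iff₀ (Real.exp_pos _)]
    linarith
  have hcont : ContinuousOn (fun x => max |φ1 x| |φ2 x|) (Set.Icc (-R) R) :=
    ContinuousOn.sup hφ1.continuousOn.abs hφ2.continuousOn.abs
  obtain ⟨x0, hx0, hmax⟩ := isCompact_Icc.exists_isMaxOn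
    (⟨0, by constructor <;> linarith⟩ : (Set.Icc (-R) R).Nonempty) hcont
  set M := max |φ1 x0| |φ2 x0| with hM
  have hle : ∀ x ∈ Set.Icc (-R) R, max |φ1 x| |φ2 x| ≤ M := fun x hx => hmax hx
  have hωi : 0 < ω⁻¹ := inv_pos.2 hω.1
  intro x hx
  refine (hle x hx).trans ?_
  have hM0 : 0 ≤ M := le_max_of_le_left (abs_nonneg _)
  rcases hM0.eq_or_lt with h0 | hMp
  · rw [← h0]; positivity
  have hMi : 0 < M⁻¹ := inv_pos.2 hMp
  have sc : ∀ a b : ℝ, |a| ≤ b → |M⁻¹ * a| ≤ M⁻¹ * b := fun a b h => by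
    rw [abs_mul, abs_of_pos hMi]; exact mul_le_mul_of_nonneg_left h hMi.le
  have hMM : M⁻¹ * M = 1 := inv_mul_cancel₀ hMp.ne'
  have res := hcore R ω (M⁻¹ * G) _ _ _ _ _ _ hR hω.1 hω.2 (by positivity) (hS.scale M⁻¹)
    (by simp [b1]) (by simp [b2]) (by simp [b3]) (by simp [b4])
    (fun x hx => (sc _ _ ((le_max_left _ _).trans (gb x hx))).trans (le_of_eq (by ring)))
    (fun x hx => (sc _ _ ((le_max_right _ _).trans (gb x hx))).trans (le_of_eq (by ring)))
    (fun x hx => (sc _ _ ((le_max_left _ _).trans (hle x hx))).trans hMM.le)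
    (fun x hx => (sc _ _ ((le_max_right _ _).trans (hle x hx))).trans hMM.le)
    ⟨x0, hx0, by
      rw [abs_mul, abs_mul, abs_of_pos hMi, ← mul_max_of_nonneg _ _ hMi.le, ← hM, hMM]⟩
  have := mul_le_mul_of_nonneg_left res hMp.le
  calc M = M * 1 := (mul_one M).symm
    _ ≤ M * (C * ω⁻¹ * (M⁻¹ * G)) := this
    _ = (M⁻¹ * M) * (C * ω⁻¹ * G) := by ring
    _ = C * ω⁻¹ * G := by rw [hMM, one_mul]
end

section
/- For every θ > 0 there exist constants C > 0, R₀ > 0, ω₀ > 0 and P₀ > 0 with the following property: whenever R > R₀, ω ∈ (0, ω₀) and ω·R > P₀, and φ = (φ1, φ2) is a pair of C² functions on [−R, R] with φ1(±R) = φ2(±R) = 0 satisfying L_ω φ = g on (−R, R), and in addition the orthogonality condition ∫_{−R}^{R} (V1'(x)·g1(x) + V2'(x)·g2(x)) dx = 0 holds, then sup_{x ∈ [−R,R]} max(|φ1(x)|, |φ2(x)|) ≤ C · ‖g‖_{C⁰_θ((−R,R))}. -/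
/-- Background data: `V, W` solve the system, `a = V'`, `b = -W'`. -/
structure BG (V W a b : ℝ → ℝ) (K κ E : ℝ) : Prop where
  dV : ∀ x, HasDerivAt V (a x) x
  dW : ∀ x, HasDerivAt W (-b x) x
  da : ∀ x, HasDerivAt a (V x * W x ^ 2) x
  db : ∀ x, HasDerivAt b (-(W x * V x ^ 2)) x
  Vpos : ∀ x, 0 < V x
  Wpos : ∀ x, 0 < W x
  apos : ∀ x, 0 < a x
  bpos : ∀ x, 0 < b x
  V0 : V 0 = 1
  W0 : W 0 = 1
  symV : ∀ x, V (-x) = W x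
  symW : ∀ x, W (-x) = V x
  syma : ∀ x, a (-x) = b x
  symb : ∀ x, b (-x) = a x
  Kpos : 0 < K
  aK : ∀ x, a x ≤ K
  pK : ∀ x, 0 ≤ x → V x * W x ≤ K * Real.exp (-x)
  aK' : ∀ x, 0 ≤ x → V x * W x ^ 2 * (1 + x) ≤ K * Real.exp (-x)
  bK' : ∀ x, 0 ≤ x → W x * V x ^ 2 * (1 + x) ≤ K * Real.exp (-x)
  κpos : 0 < κ
  κa : ∀ x ∈ Set.Icc (0:ℝ) 1, κ ≤ a x ^ 2
  κb : ∀ x ∈ Set.Icc (0:ℝ) 1, κ ≤ b x ^ 2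
  κp : ∀ x ∈ Set.Icc (0:ℝ) 1, κ ≤ 2 * (V x * W x) * (a x * b x)
  Epos : 0 < E
  hE : a 0 ^ 2 + b 0 ^ 2 = 1 + E

/-- A solution of the linear system in the unknowns `u = φ₁`, `v = -φ₂`. -/
structure Sol_s3 (V W a b : ℝ → ℝ) (θ R ω G N : ℝ) (u u1 v v1 f h m : ℝ → ℝ) : Prop where
  θpos : 0 < θ
  Rpos : 0 < R
  ωpos : 0 < ω
  Gpos : 0 < G
  cu : ContinuousOn u (Set.Icc (-R) R)
  cu1 : ContinuousOn u1 (Set.Icc (-R) R)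
  cv : ContinuousOn v (Set.Icc (-R) R)
  cv1 : ContinuousOn v1 (Set.Icc (-R) R)
  cm : ContinuousOn m (Set.Icc (-R) R)
  du : ∀ x ∈ Set.Ioo (-R) R, HasDerivAt u (u1 x) x
  du1 : ∀ x ∈ Set.Ioo (-R) R,
    HasDerivAt u1 ((W x ^ 2 + ω ^ 2) * u x - 2 * V x * W x * v x - f x) x
  dv : ∀ x ∈ Set.Ioo (-R) R, HasDerivAt v (v1 x) x
  dv1 : ∀ x ∈ Set.Ioo (-R) R,
    HasDerivAt v1 ((V x ^ 2 + ω ^ 2) * v x - 2 * V x * W x * u x - h x) x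
  dm : ∀ x ∈ Set.Ioo (-R) R, HasDerivAt m (a x * f x + b x * h x) x
  uR : u R = 0
  uR' : u (-R) = 0
  vR : v R = 0
  vR' : v (-R) = 0
  mR : m R = 0
  mR' : m (-R) = 0
  fG : ∀ x ∈ Set.Ioo (-R) R, |f x| * Real.cosh (θ * x) ≤ G
  hG : ∀ x ∈ Set.Ioo (-R) R, |h x| * Real.cosh (θ * x) ≤ G
  uN : ∀ x ∈ Set.Icc (-R) R, |u x| ≤ N
  vN : ∀ x ∈ Set.Icc (-R) R, |v x| ≤ N

theorem mono_of {F : ℝ → ℝ} {p q : ℝ} (hpq : p ≤ q) (hc : ContinuousOn F (Set.Icc p q))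
    (hd : ∀ x ∈ Set.Ioo p q, ∃ d, HasDerivAt F d x ∧ 0 ≤ d) : F p ≤ F q := by
  have : MonotoneOn F (Set.Icc p q) := by
    apply monotoneOn_of_deriv_nonneg (convex_Icc p q) hc
    · intro x hx
      rw [interior_Icc] at hx
      obtain ⟨d, h, _⟩ := hd x hx
      exact h.differentiableAt.differentiableWithinAt
    · intro x hx
      rw [interior_Icc] at hx
      obtain ⟨d, h, h0⟩ := hd x hx
      rw [h.deriv]; exact h0
  exact this (Set.left_mem_Icc.2 hpq) (Set.right_mem_Icc.2 hpq) hpq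

theorem hasDerivAt_comp_neg' {F : ℝ → ℝ} {d x : ℝ} (h : HasDerivAt F d (-x)) :
    HasDerivAt (fun y => F (-y)) (-d) x := by
  have := HasDerivAt.comp x h (hasDerivAt_neg x)
  simpa [Function.comp_def] using this

theorem continuousOn_comp_neg' {F : ℝ → ℝ} {R : ℝ} (h : ContinuousOn F (Set.Icc (-R) R)) :
    ContinuousOn (fun y => F (-y)) (Set.Icc (-R) R) := by
  apply h.comp continuous_neg.continuousOn
  intro x hx
  simp only [Set.mem_Icc] at hx ⊢
  constructor <;> linarith [hx.1, hx.2]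

section
variable {V W a b : ℝ → ℝ} {K κ E : ℝ} {θ R ω G N : ℝ} {u u1 v v1 f h m : ℝ → ℝ}

theorem Sol_s3.reflect (B : BG V W a b K κ E) (S : Sol_s3 V W a b θ R ω G N u u1 v v1 f h m) :
    Sol_s3 V W a b θ R ω G N (fun x => v (-x)) (fun x => -v1 (-x)) (fun x => u (-x))
      (fun x => -u1 (-x)) (fun x => h (-x)) (fun x => f (-x)) (fun x => -m (-x)) := by
  have hI : ∀ x ∈ Set.Ioo (-R) R, -x ∈ Set.Ioo (-R) R := by
    intro x hx; simp only [Set.mem_Ioo] at hx ⊢; constructor <;> linarith [hx.1, hx.2]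
  have hI' : ∀ x ∈ Set.Icc (-R) R, -x ∈ Set.Icc (-R) R := by
    intro x hx; simp only [Set.mem_Icc] at hx ⊢; constructor <;> linarith [hx.1, hx.2]
  refine ⟨S.θpos, S.Rpos, S.ωpos, S.Gpos, continuousOn_comp_neg' S.cv,
    (continuousOn_comp_neg' S.cv1).neg, continuousOn_comp_neg' S.cu,
    (continuousOn_comp_neg' S.cu1).neg, (continuousOn_comp_neg' S.cm).neg, ?_, ?_, ?_, ?_, ?_,
    S.vR', by simpa using S.vR, S.uR', by simpa using S.uR, by simpa using S.mR',
    by simpa using S.mR, ?_, ?_, fun x hx => S.vN _ (hI' x hx), fun x hx => S.uN _ (hI' x hx)⟩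
  · intro x hx; exact hasDerivAt_comp_neg' (S.dv _ (hI x hx))
  · intro x hx
    have := (hasDerivAt_comp_neg' (S.dv1 _ (hI x hx))).fun_neg
    rw [B.symV, B.symW] at this
    exact this.congr_deriv (by ring)
  · intro x hx; exact hasDerivAt_comp_neg' (S.du _ (hI x hx))
  · intro x hx
    have := (hasDerivAt_comp_neg' (S.du1 _ (hI x hx))).fun_neg
    rw [B.symV, B.symW] at this
    exact this.congr_deriv (by ring)
  · intro x hx
    have := (hasDerivAt_comp_neg' (S.dm _ (hI x hx))).fun_neg
    rw [B.syma, B.symb] at this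
    exact this.congr_deriv (by ring)
  · intro x hx; have := S.hG _ (hI x hx); simpa using this
  · intro x hx; have := S.fG _ (hI x hx); simpa using this

/-- The energy flux. -/
noncomputable def Gam (V W a b : ℝ → ℝ) (θ G N : ℝ) (u u1 v v1 : ℝ → ℝ) (x : ℝ) : ℝ :=
  u x / a x * (a x * u1 x - V x * W x ^ 2 * u x) + v x / b x * (b x * v1 x + W x * V x ^ 2 * v x)
    + 2 * N * G / θ * Real.arctan (Real.sinh (θ * x))

theorem BG.ca (B : BG V W a b K κ E) : Continuous a :=
  continuous_iff_continuousAt.2 fun x => (B.da x).continuousAt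
theorem BG.cb (B : BG V W a b K κ E) : Continuous b :=
  continuous_iff_continuousAt.2 fun x => (B.db x).continuousAt
theorem BG.cV (B : BG V W a b K κ E) : Continuous V :=
  continuous_iff_continuousAt.2 fun x => (B.dV x).continuousAt
theorem BG.cW (B : BG V W a b K κ E) : Continuous W :=
  continuous_iff_continuousAt.2 fun x => (B.dW x).continuousAt

theorem Gam_cont (B : BG V W a b K κ E) (S : Sol_s3 V W a b θ R ω G N u u1 v v1 f h m) :
    ContinuousOn (Gam V W a b θ G N u u1 v v1) (Set.Icc (-R) R) := by
  have h1 := S.cu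
  have h2 := S.cu1
  have h3 := S.cv
  have h4 := S.cv1
  have h5 := B.ca.continuousOn (s := Set.Icc (-R) R)
  have h6 := B.cb.continuousOn (s := Set.Icc (-R) R)
  have h7 := B.cV.continuousOn (s := Set.Icc (-R) R)
  have h8 := B.cW.continuousOn (s := Set.Icc (-R) R)
  unfold Gam
  refine ContinuousOn.add (ContinuousOn.add (ContinuousOn.mul (h1.div h5 fun x _ => (B.apos x).ne')
    (by fun_prop)) (ContinuousOn.mul (h3.div h6 fun x _ => (B.bpos x).ne') (by fun_prop))) ?_
  apply Continuous.continuousOn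
  have := Real.continuous_arctan
  have := Real.continuous_sinh
  fun_prop

theorem Sol_s3.N_nonneg (S : Sol_s3 V W a b θ R ω G N u u1 v v1 f h m) : 0 ≤ N :=
  (abs_nonneg _).trans (S.uN R (Set.right_mem_Icc.2 (by linarith [S.Rpos])))

theorem sig_deriv (B : BG V W a b K κ E) (S : Sol_s3 V W a b θ R ω G N u u1 v v1 f h m) {x : ℝ}
    (hx : x ∈ Set.Ioo (-R) R) :
    HasDerivAt (fun x => u x / a x) ((u1 x - V x * W x ^ 2 * u x / a x) / a x) x := by
  have ha := (B.apos x).ne'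
  exact ((S.du x hx).fun_div (B.da x) ha).congr_deriv (by field_simp)

theorem tau_deriv (B : BG V W a b K κ E) (S : Sol_s3 V W a b θ R ω G N u u1 v v1 f h m) {x : ℝ}
    (hx : x ∈ Set.Ioo (-R) R) :
    HasDerivAt (fun x => v x / b x) ((v1 x + W x * V x ^ 2 * v x / b x) / b x) x := by
  have ha := (B.bpos x).ne'
  exact ((S.dv x hx).fun_div (B.db x) ha).congr_deriv (by field_simp; ring)

theorem Gam_deriv (B : BG V W a b K κ E) (S : Sol_s3 V W a b θ R ω G N u u1 v v1 f h m) {x : ℝ}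
    (hx : x ∈ Set.Ioo (-R) R) :
    ∃ d, HasDerivAt (Gam V W a b θ G N u u1 v v1) d x ∧
      (u1 x - V x * W x ^ 2 * u x / a x) ^ 2 + (v1 x + W x * V x ^ 2 * v x / b x) ^ 2
        + 2 * (V x * W x) * (a x * b x) * (u x / a x - v x / b x) ^ 2 ≤ d := by
  have ha := (B.apos x).ne'
  have hb := (B.bpos x).ne'
  have hθ := S.θpos.ne'
  have hN := S.N_nonneg
  have hch : 0 < Real.cosh (θ * x) := Real.cosh_pos _
  have dat : HasDerivAt (fun x => Real.arctan (Real.sinh (θ * x))) (θ / Real.cosh (θ * x)) x := by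
    have h1 : HasDerivAt (fun x => θ * x) θ x := by
      simpa using (hasDerivAt_id x).const_mul θ
    convert (h1.sinh).arctan using 1
    have : 1 + Real.sinh (θ * x) ^ 2 = Real.cosh (θ * x) ^ 2 := by
      rw [Real.cosh_sq]; ring
    rw [this]; field_simp
  have d1 := (sig_deriv B S hx).fun_mul (((B.da x).fun_mul (S.du1 x hx)).fun_sub
    ((((B.dV x).fun_mul ((B.dW x).fun_pow 2))).fun_mul (S.du x hx)))
  have d2 := (tau_deriv B S hx).fun_mul (((B.db x).fun_mul (S.dv1 x hx)).fun_add
    ((((B.dW x).fun_mul ((B.dV x).fun_pow 2))).fun_mul (S.dv x hx)))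
  have d3 := (d1.fun_add d2).fun_add (dat.const_mul (2 * N * G / θ))
  refine ⟨_, d3, ?_⟩
  have hf : |u x * f x| ≤ N * G / Real.cosh (θ * x) := by
    rw [abs_mul, mul_div_assoc]
    exact mul_le_mul (S.uN x (Set.Ioo_subset_Icc_self hx))
      (by rw [le_div_iff₀ hch]; exact S.fG x hx) (abs_nonneg _) hN
  have hh : |v x * h x| ≤ N * G / Real.cosh (θ * x) := by
    rw [abs_mul, mul_div_assoc]
    exact mul_le_mul (S.vN x (Set.Ioo_subset_Icc_self hx))
      (by rw [le_div_iff₀ hch]; exact S.hG x hx) (abs_nonneg _) hN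
  have key : 2 * N * G / θ * (θ / Real.cosh (θ * x)) = 2 * (N * G / Real.cosh (θ * x)) := by
    field_simp
  rw [key]
  have hω : 0 ≤ ω ^ 2 * (u x ^ 2 + v x ^ 2) := by positivity
  have e1 : 2 * (N * G / Real.cosh (θ * x)) - u x * f x - v x * h x ≥ 0 := by
    linarith [le_abs_self (u x * f x), le_abs_self (v x * h x)]
  rw [← sub_nonneg]
  refine le_trans (add_nonneg hω e1) (le_of_eq ?_)
  field_simp
  ring

theorem Gam_mono (B : BG V W a b K κ E) (S : Sol_s3 V W a b θ R ω G N u u1 v v1 f h m) {x y : ℝ}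
    (hx : -R ≤ x) (hxy : x ≤ y) (hy : y ≤ R) :
    Gam V W a b θ G N u u1 v v1 x ≤ Gam V W a b θ G N u u1 v v1 y := by
  apply mono_of hxy ((Gam_cont B S).mono (Set.Icc_subset_Icc hx hy))
  intro z hz
  obtain ⟨d, h1, h2⟩ := Gam_deriv B S (Set.Ioo_subset_Ioo hx hy hz)
  refine ⟨d, h1, le_trans ?_ h2⟩
  have := B.apos z
  have := B.bpos z
  have := B.Vpos z
  have := B.Wpos z
  positivity

theorem Gam_diff (B : BG V W a b K κ E) (S : Sol_s3 V W a b θ R ω G N u u1 v v1 f h m) {x y : ℝ}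
    (hx : -R ≤ x) (hxy : x ≤ y) (hy : y ≤ R) :
    Gam V W a b θ G N u u1 v v1 y - Gam V W a b θ G N u u1 v v1 x ≤ 2 * Real.pi * N * G / θ := by
  have h1 := Gam_mono B S (le_refl (-R)) hx (hxy.trans hy)
  have h2 := Gam_mono B S (hx.trans hxy) hy (le_refl R)
  have hc : 0 ≤ 2 * N * G / θ := by
    have := S.N_nonneg
    have := S.θpos
    have := S.Gpos
    positivity
  have e1 : -(2 * N * G / θ * (Real.pi / 2)) ≤ Gam V W a b θ G N u u1 v v1 (-R) := by
    unfold Gam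
    rw [S.uR', S.vR']
    have := mul_le_mul_of_nonneg_left (Real.neg_pi_div_two_lt_arctan (Real.sinh (θ * -R))).le hc
    simp only [zero_div, zero_mul, zero_add]
    linarith
  have e2 : Gam V W a b θ G N u u1 v v1 R ≤ 2 * N * G / θ * (Real.pi / 2) := by
    unfold Gam
    rw [S.uR, S.vR]
    have := mul_le_mul_of_nonneg_left (Real.arctan_lt_pi_div_two (Real.sinh (θ * R))).le hc
    simp only [zero_div, zero_mul, zero_add]
    linarith
  have : 2 * Real.pi * N * G / θ = 2 * N * G / θ * (Real.pi / 2) + 2 * N * G / θ * (Real.pi / 2) := by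
    field_simp; ring
  linarith

end

section
variable {V W a b : ℝ → ℝ} {K κ E : ℝ} {θ R ω G N : ℝ} {u u1 v v1 f h m : ℝ → ℝ}

theorem BG.a_mono (B : BG V W a b K κ E) {x y : ℝ} (hxy : x ≤ y) : a x ≤ a y := by
  apply mono_of hxy B.ca.continuousOn
  intro z _
  refine ⟨_, B.da z, ?_⟩
  have := B.Vpos z
  have := B.Wpos z
  positivity

theorem sig_cont (B : BG V W a b K κ E) (S : Sol_s3 V W a b θ R ω G N u u1 v v1 f h m) :
    ContinuousOn (fun x => u x / a x) (Set.Icc (-R) R) :=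
  S.cu.div B.ca.continuousOn fun x _ => (B.apos x).ne'

theorem tau_cont (B : BG V W a b K κ E) (S : Sol_s3 V W a b θ R ω G N u u1 v v1 f h m) :
    ContinuousOn (fun x => v x / b x) (Set.Icc (-R) R) :=
  S.cv.div B.cb.continuousOn fun x _ => (B.bpos x).ne'

theorem two_mul_le_eps {ε d D : ℝ} (hε : 0 < ε) (hd : d ^ 2 ≤ D) : 2 * |d| ≤ ε * D + 1 / ε := by
  have h1 : ε * d ^ 2 ≤ ε * D := mul_le_mul_of_nonneg_left hd hε.le
  have h2 : 0 ≤ (ε * |d| - 1) ^ 2 / ε := by positivity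
  have h3 : (ε * |d| - 1) ^ 2 / ε = ε * d ^ 2 - 2 * |d| + 1 / ε := by
    have : d ^ 2 = |d| ^ 2 := (sq_abs d).symm
    rw [this]; field_simp; ring
  linarith

theorem sig_diff_aux (B : BG V W a b K κ E) (S : Sol_s3 V W a b θ R ω G N u u1 v v1 f h m) {y z ε s : ℝ}
    (hy : -R ≤ y) (hyz : y ≤ z) (hz : z ≤ R) (hε : 0 < ε) (hs : s = 1 ∨ s = -1) :
    s * (2 * a y * (u z / a z - u y / a y)) ≤ ε * (2 * Real.pi * N * G / θ) + (z - y) / ε := by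
  have hG := Gam_diff B S hy hyz hz
  have hsub : Set.Icc y z ⊆ Set.Icc (-R) R := Set.Icc_subset_Icc hy hz
  have key := mono_of (F := fun x => ε * Gam V W a b θ G N u u1 v v1 x + x * (1 / ε)
      - s * (2 * a y) * (u x / a x)) hyz ?_ ?_
  · have := mul_le_mul_of_nonneg_left hG hε.le
    have e : (z - y) / ε = z * (1 / ε) - y * (1 / ε) := by ring
    rw [e]
    linarith
  · refine ((((Gam_cont B S).mono hsub).const_mul ε |>.add ?_)).sub (((sig_cont B S).mono hsub).const_mul _)
    fun_prop
  · intro x hx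
    have hx' : x ∈ Set.Ioo (-R) R := Set.Ioo_subset_Ioo hy hz hx
    obtain ⟨d, h1, h2⟩ := Gam_deriv B S hx'
    refine ⟨_, ((h1.const_mul ε).fun_add ((hasDerivAt_id' x).mul_const (1 / ε))).fun_sub
      ((sig_deriv B S hx').const_mul (s * (2 * a y))), ?_⟩
    have ha := B.apos x
    have hay := B.apos y
    set D1 := u1 x - V x * W x ^ 2 * u x / a x with hD1
    have hD : D1 ^ 2 ≤ d := by
      refine le_trans ?_ h2
      have := B.bpos x
      have := B.Vpos x
      have := B.Wpos x
      have : 0 ≤ (v1 x + W x * V x ^ 2 * v x / b x) ^ 2 := sq_nonneg _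
      have : 0 ≤ 2 * (V x * W x) * (a x * b x) * (u x / a x - v x / b x) ^ 2 := by positivity
      linarith
    have h3 := two_mul_le_eps hε hD
    have h4 : s * (2 * a y) * (D1 / a x) ≤ 2 * |D1| := by
      have e : s * (2 * a y) * (D1 / a x) = 2 * ((a y / a x) * (s * D1)) := by ring
      have h5 : s * D1 ≤ |D1| := by
        rcases hs with rfl | rfl
        · linarith [le_abs_self D1]
        · linarith [neg_abs_le D1]
      have h6 : a y / a x ≤ 1 := by
        rw [div_le_one ha]; exact B.a_mono hx.1.le
      have h7 : (a y / a x) * (s * D1) ≤ |D1| := by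
        calc (a y / a x) * (s * D1) ≤ (a y / a x) * |D1| :=
              mul_le_mul_of_nonneg_left h5 (by positivity)
          _ ≤ 1 * |D1| := mul_le_mul_of_nonneg_right h6 (abs_nonneg _)
          _ = |D1| := one_mul _
      rw [e]; linarith
    linarith

theorem sig_diff (B : BG V W a b K κ E) (S : Sol_s3 V W a b θ R ω G N u u1 v v1 f h m) {y z ε : ℝ}
    (hy : -R ≤ y) (hyz : y ≤ z) (hz : z ≤ R) (hε : 0 < ε) :
    2 * a y * |u z / a z - u y / a y| ≤ ε * (2 * Real.pi * N * G / θ) + (z - y) / ε := by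
  have h1 := sig_diff_aux B S hy hyz hz hε (Or.inl rfl)
  have h2 := sig_diff_aux B S hy hyz hz hε (Or.inr rfl)
  rcases abs_cases (u z / a z - u y / a y) with ⟨h, _⟩ | ⟨h, _⟩ <;> rw [h] <;> linarith

theorem lemB (B : BG V W a b K κ E) (S : Sol_s3 V W a b θ R ω G N u u1 v v1 f h m) {x η : ℝ}
    (hx : x ∈ Set.Icc (-R) R) (hη : 0 < η) :
    |u x - u 0 / a 0 * a x| ≤ (K / (2 * a 0) + 1 / 2) * (2 * Real.pi / θ * (η * N) + |x| * (G / η)) := by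
  have hG := S.Gpos
  have hε : 0 < η / G := div_pos hη hG
  have ha := B.apos x
  have ha0 := B.apos 0
  have hK := B.Kpos
  have hN := S.N_nonneg
  have hθ := S.θpos
  have hpi := Real.pi_pos
  have e : |u x - u 0 / a 0 * a x| = a x * |u x / a x - u 0 / a 0| := by
    rw [← abs_of_pos ha, ← abs_mul, abs_of_pos ha]
    congr 1; field_simp
  have e1 : η / G * (2 * Real.pi * N * G / θ) = 2 * Real.pi / θ * (η * N) := by field_simp
  have e2 : |x| / (η / G) = |x| * (G / η) := by field_simp
  rw [e]
  have hT : 0 ≤ 2 * Real.pi / θ * (η * N) + |x| * (G / η) := by positivity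
  rcases le_total 0 x with h0 | h0
  · have := sig_diff B S (by linarith [S.Rpos]) h0 hx.2 hε
    rw [sub_zero, ← abs_of_nonneg h0, e1, e2, abs_of_nonneg h0] at this
    rw [abs_of_nonneg h0] at hT ⊢
    have h1 : |u x / a x - u 0 / a 0| ≤ (2 * Real.pi / θ * (η * N) + x * (G / η)) / (2 * a 0) := by
      rw [le_div_iff₀ (by positivity)]; linarith
    calc a x * |u x / a x - u 0 / a 0| ≤ K * ((2 * Real.pi / θ * (η * N) + x * (G / η)) / (2 * a 0)) :=
          mul_le_mul (B.aK x) h1 (abs_nonneg _) hK.le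
      _ = K / (2 * a 0) * (2 * Real.pi / θ * (η * N) + x * (G / η)) := by ring
      _ ≤ _ := mul_le_mul_of_nonneg_right (by linarith) hT
  · have := sig_diff B S hx.1 h0 (by linarith [S.Rpos]) hε
    rw [zero_sub, ← abs_of_nonpos h0, e1, e2, abs_sub_comm] at this
    have h1 : a x * |u x / a x - u 0 / a 0| ≤ 1 / 2 * (2 * Real.pi / θ * (η * N) + |x| * (G / η)) := by
      linarith
    refine h1.trans (mul_le_mul_of_nonneg_right ?_ hT)
    have : 0 ≤ K / (2 * a 0) := by positivity
    linarith

theorem small_abs_le {ε κ' z D : ℝ} (hε : 0 < ε) (hκ : 0 < κ') (hd : κ' * z ^ 2 ≤ D) :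
    |z| ≤ ε * D + 1 / (4 * ε * κ') := by
  have h1 : ε * (κ' * z ^ 2) ≤ ε * D := mul_le_mul_of_nonneg_left hd hε.le
  have h2 : 0 ≤ (2 * ε * κ' * |z| - 1) ^ 2 / (4 * ε * κ') := by positivity
  have h3 : (2 * ε * κ' * |z| - 1) ^ 2 / (4 * ε * κ') = ε * (κ' * z ^ 2) - |z| + 1 / (4 * ε * κ') := by
    have : z ^ 2 = |z| ^ 2 := (sq_abs z).symm
    rw [this]; field_simp; ring
  linarith

theorem lemC_aux (B : BG V W a b K κ E) (S : Sol_s3 V W a b θ R ω G N u u1 v v1 f h m) {ε s : ℝ}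
    (hR : 1 ≤ R) (hε : 0 < ε) (hs : s = 1 ∨ s = -1) :
    s * (u 0 / a 0 - v 0 / b 0) ≤ ε * (2 * Real.pi * N * G / θ) + 3 * (1 / (4 * ε * κ)) := by
  have hG := Gam_diff B S (x := 0) (y := 1) (by linarith) zero_le_one hR
  have hsub : Set.Icc 0 1 ⊆ Set.Icc (-R) R := Set.Icc_subset_Icc (by linarith) hR
  have key := mono_of (p := 0) (q := 1) (F := fun x => ε * Gam V W a b θ G N u u1 v v1 x
      + x * (3 * (1 / (4 * ε * κ))) + (1 - x) * (s * (u x / a x - v x / b x))) zero_le_one ?_ ?_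
  · have := mul_le_mul_of_nonneg_left hG hε.le
    linarith
  · have h1 := (sig_cont B S).mono hsub
    have h2 := (tau_cont B S).mono hsub
    have h3 := (Gam_cont B S).mono hsub
    fun_prop
  · intro x hx
    have hx' : x ∈ Set.Ioo (-R) R := Set.Ioo_subset_Ioo (by linarith) hR hx
    have hx01 := Set.Ioo_subset_Icc_self hx
    obtain ⟨d, h1, h2⟩ := Gam_deriv B S hx'
    refine ⟨_, ((h1.const_mul ε).fun_add ((hasDerivAt_id' x).mul_const (3 * (1 / (4 * ε * κ))))).fun_add
      (((hasDerivAt_id' x).const_sub 1).fun_mul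
        (((sig_deriv B S hx').fun_sub (tau_deriv B S hx')).const_mul s)), ?_⟩
    have ha := B.apos x
    have hb := B.bpos x
    have hκ := B.κpos
    set D1 := u1 x - V x * W x ^ 2 * u x / a x with hD1
    set D2 := v1 x + W x * V x ^ 2 * v x / b x with hD2
    set D3 := u x / a x - v x / b x with hD3
    have k1 : κ * (D1 / a x) ^ 2 ≤ D1 ^ 2 := by
      have := mul_le_mul_of_nonneg_right (B.κa x hx01) (sq_nonneg (D1 / a x))
      refine this.trans (le_of_eq ?_)
      field_simp
    have k2 : κ * (D2 / b x) ^ 2 ≤ D2 ^ 2 := by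
      have := mul_le_mul_of_nonneg_right (B.κb x hx01) (sq_nonneg (D2 / b x))
      refine this.trans (le_of_eq ?_)
      field_simp
    have k3 : κ * D3 ^ 2 ≤ 2 * (V x * W x) * (a x * b x) * D3 ^ 2 :=
      mul_le_mul_of_nonneg_right (B.κp x hx01) (sq_nonneg _)
    have j1 := small_abs_le hε hκ k1
    have j2 := small_abs_le hε hκ k2
    have j3 := small_abs_le hε hκ k3
    have j4 : ε * (D1 ^ 2 + D2 ^ 2 + 2 * (V x * W x) * (a x * b x) * D3 ^ 2) ≤ ε * d :=
      mul_le_mul_of_nonneg_left h2 hε.le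
    have hs1 : |s| = 1 := by rcases hs with rfl | rfl <;> simp
    have i3 : s * D3 ≤ |D3| := by
      refine (le_abs_self _).trans ?_
      rw [abs_mul, hs1, one_mul]
    have i4 : -((1 - x) * (s * (D1 / a x - D2 / b x))) ≤ |D1 / a x| + |D2 / b x| := by
      refine (neg_le_abs _).trans ?_
      rw [abs_mul, abs_mul, hs1, one_mul, abs_of_pos (by linarith [hx.2] : 0 < 1 - x)]
      calc (1 - x) * |D1 / a x - D2 / b x| ≤ 1 * |D1 / a x - D2 / b x| :=
            mul_le_mul_of_nonneg_right (by linarith [hx.1]) (abs_nonneg _)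
        _ ≤ _ := by rw [one_mul]; exact abs_sub _ _
    linarith

theorem lemC (B : BG V W a b K κ E) (S : Sol_s3 V W a b θ R ω G N u u1 v v1 f h m) {η : ℝ}
    (hR : 1 ≤ R) (hη : 0 < η) :
    |u 0 / a 0 - v 0 / b 0| ≤ 2 * Real.pi / θ * (η * N) + 3 / (4 * κ) * (G / η) := by
  have hG := S.Gpos
  have hθ := S.θpos
  have hκ := B.κpos
  have hε : 0 < η / G := div_pos hη hG
  have h1 := lemC_aux B S hR hε (Or.inl rfl)
  have h2 := lemC_aux B S hR hε (Or.inr rfl)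
  have e1 : η / G * (2 * Real.pi * N * G / θ) = 2 * Real.pi / θ * (η * N) := by field_simp
  have e2 : 3 * (1 / (4 * (η / G) * κ)) = 3 / (4 * κ) * (G / η) := by field_simp
  rw [e1, e2] at h1 h2
  rcases abs_cases (u 0 / a 0 - v 0 / b 0) with ⟨h, _⟩ | ⟨h, _⟩ <;> rw [h] <;> linarith

theorem lemBC (B : BG V W a b K κ E) {θ : ℝ} (hθ : 0 < θ) : ∃ K1 : ℝ, 0 < K1 ∧
    ∀ (R ω G N : ℝ) (u u1 v v1 f h m : ℝ → ℝ), Sol_s3 V W a b θ R ω G N u u1 v v1 f h m → 1 ≤ R →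
      ∀ η : ℝ, 0 < η → ∀ x ∈ Set.Icc (-R) R,
        |u x - u 0 / a 0 * a x| ≤ K1 * (η * N + G / η) * (1 + |x|) ∧
        |v x - u 0 / a 0 * b x| ≤ K1 * (η * N + G / η) * (1 + |x|) := by
  have hK := B.Kpos
  have ha0 := B.apos 0
  have hκ := B.κpos
  have hpi := Real.pi_pos
  set Kb := K / (2 * a 0) + 1 / 2 with hKb
  have hKb0 : 0 < Kb := by positivity
  set q := 2 * Real.pi / θ with hq
  have hq0 : 0 < q := by positivity
  set r := 3 / (4 * κ) with hr
  have hr0 : 0 < r := by positivity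
  refine ⟨Kb * (q + 1) + K * (q + r), by positivity, ?_⟩
  intro R ω G N u u1 v v1 f h m S hR η hη x hx
  have hN := S.N_nonneg
  have hG := S.Gpos
  have hA : 0 ≤ η * N := by positivity
  have hB : 0 ≤ G / η := by positivity
  have hX := abs_nonneg x
  have b1 := lemB B S hx hη
  have S' := S.reflect B
  have hx' : -x ∈ Set.Icc (-R) R := by
    simp only [Set.mem_Icc] at hx ⊢; constructor <;> linarith [hx.1, hx.2]
  have b2 := lemB B S' hx' hη
  simp only [neg_neg, neg_zero, B.syma, abs_neg] at b2
  have ab0 : a 0 = b 0 := by have := B.syma 0; rwa [neg_zero] at this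
  have c1 := lemC B S hR hη
  rw [← hKb, ← hq] at b1 b2
  rw [← hq, ← hr, ← ab0] at c1
  set P := η * N with hP
  set Q := G / η with hQ
  have m1 : Kb * (q * P + |x| * Q) ≤ Kb * (q + 1) * (P + Q) * (1 + |x|) := by
    rw [mul_assoc, mul_assoc]
    apply mul_le_mul_of_nonneg_left _ hKb0.le
    have : 0 ≤ q * Q := by positivity
    have : 0 ≤ q * Q * |x| := by positivity
    have : 0 ≤ q * P * |x| := by positivity
    have : 0 ≤ P * |x| := by positivity
    linarith
  have m2 : (q * P + r * Q) * K ≤ K * (q + r) * (P + Q) * (1 + |x|) := by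
    have h1 : q * P + r * Q ≤ (q + r) * (P + Q) := by
      have : 0 ≤ q * Q := by positivity
      have : 0 ≤ r * P := by positivity
      linarith
    have h2 : (q + r) * (P + Q) ≤ (q + r) * (P + Q) * (1 + |x|) :=
      le_mul_of_one_le_right (by positivity) (by linarith)
    calc (q * P + r * Q) * K ≤ ((q + r) * (P + Q) * (1 + |x|)) * K :=
          mul_le_mul_of_nonneg_right (h1.trans h2) hK.le
      _ = _ := by ring
  constructor
  · refine b1.trans (m1.trans ?_)
    have : 0 ≤ K * (q + r) * (P + Q) * (1 + |x|) := by positivity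
    linarith
  · have hbK : b x ≤ K := by rw [← B.syma]; exact B.aK _
    have t : |v x - u 0 / a 0 * b x| ≤ |v x - v 0 / a 0 * b x| + |u 0 / a 0 - v 0 / a 0| * b x := by
      have e : v x - u 0 / a 0 * b x = (v x - v 0 / a 0 * b x) - (u 0 / a 0 - v 0 / a 0) * b x := by ring
      rw [e]
      refine (abs_sub _ _).trans ?_
      rw [abs_mul, abs_of_pos (B.bpos x)]
    have c2 : |u 0 / a 0 - v 0 / a 0| * b x ≤ (q * P + r * Q) * K :=
      mul_le_mul c1 hbK (B.bpos x).le (by positivity)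
    linarith

theorem exp_le_cosh' (y : ℝ) : 1 ≤ 2 * Real.exp (-y) * Real.cosh y := by
  rw [Real.cosh_eq]
  have h1 : Real.exp (-y) * Real.exp y = 1 := by rw [← Real.exp_add]; simp
  have := Real.exp_pos (-y)
  nlinarith

theorem le_exp_of_cosh {y t G : ℝ} (hG : t * Real.cosh y ≤ G) (ht : 0 ≤ t) :
    t ≤ 2 * G * Real.exp (-y) := by
  have h1 := exp_le_cosh' y
  have h2 := Real.exp_pos (-y)
  calc t = t * 1 := (mul_one t).symm
    _ ≤ t * (2 * Real.exp (-y) * Real.cosh y) := mul_le_mul_of_nonneg_left h1 ht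
    _ = 2 * Real.exp (-y) * (t * Real.cosh y) := by ring
    _ ≤ 2 * Real.exp (-y) * G := mul_le_mul_of_nonneg_left hG (by positivity)
    _ = _ := by ring

theorem dexp (c x : ℝ) : HasDerivAt (fun x => Real.exp (-(c * x))) (-c * Real.exp (-(c * x))) x := by
  have h1 : HasDerivAt (fun x => -(c * x)) (-c) x := by
    simpa using ((hasDerivAt_id' x).const_mul c).fun_neg
  exact h1.exp.congr_deriv (by ring)

theorem m_bound_aux (B : BG V W a b K κ E) (S : Sol_s3 V W a b θ R ω G N u u1 v v1 f h m) {x s : ℝ}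
    (h0 : 0 ≤ x) (hx : x ≤ R) (hs : s = 1 ∨ s = -1) :
    s * m x ≤ 4 * K * G / θ * Real.exp (-(θ * x)) := by
  have hR := S.Rpos
  have hθ := S.θpos
  have hG := S.Gpos
  have hK := B.Kpos
  have key := mono_of (F := fun x => s * m x - 4 * K * G / θ * Real.exp (-(θ * x))) hx ?_ ?_
  · simp only [S.mR] at key
    have : 0 ≤ 4 * K * G / θ * Real.exp (-(θ * R)) := by positivity
    linarith
  · have := S.cm.mono (Set.Icc_subset_Icc (by linarith : -R ≤ x) le_rfl)
    fun_prop
  · intro y hy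
    have hy' : y ∈ Set.Ioo (-R) R := ⟨by linarith [hy.1], hy.2⟩
    refine ⟨_, ((S.dm y hy').const_mul s).fun_sub ((dexp θ y).const_mul _), ?_⟩
    have h1 := le_exp_of_cosh (S.fG y hy') (abs_nonneg _)
    have h2 := le_exp_of_cosh (S.hG y hy') (abs_nonneg _)
    have hbK : b y ≤ K := by rw [← B.syma]; exact B.aK _
    have e1 : |a y * f y| ≤ K * (2 * G * Real.exp (-(θ * y))) := by
      rw [abs_mul, abs_of_pos (B.apos y)]
      exact mul_le_mul (B.aK y) h1 (abs_nonneg _) hK.le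
    have e2 : |b y * h y| ≤ K * (2 * G * Real.exp (-(θ * y))) := by
      rw [abs_mul, abs_of_pos (B.bpos y)]
      exact mul_le_mul hbK h2 (abs_nonneg _) hK.le
    have hs1 : |s| = 1 := by rcases hs with rfl | rfl <;> simp
    have e3 : -(s * (a y * f y + b y * h y)) ≤ |a y * f y| + |b y * h y| := by
      refine (neg_le_abs _).trans ?_
      rw [abs_mul, hs1, one_mul]
      exact abs_add_le _ _
    have e4 : 4 * K * G / θ * (-θ * Real.exp (-(θ * y))) = -(4 * K * G * Real.exp (-(θ * y))) := by
      field_simp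
    rw [e4]
    linarith

theorem m_bound (B : BG V W a b K κ E) (S : Sol_s3 V W a b θ R ω G N u u1 v v1 f h m) {x : ℝ}
    (h0 : 0 ≤ x) (hx : x ≤ R) : |m x| ≤ 4 * K * G / θ * Real.exp (-(θ * x)) := by
  have h1 := m_bound_aux B S h0 hx (Or.inl rfl)
  have h2 := m_bound_aux B S h0 hx (Or.inr rfl)
  rw [abs_le]; constructor <;> linarith

end

section
variable {V W a b : ℝ → ℝ} {K κ E : ℝ} {θ R ω G N : ℝ} {u u1 v v1 f h m : ℝ → ℝ}

theorem half_lemma (B : BG V W a b K κ E) (S : Sol_s3 V W a b θ R ω G N u u1 v v1 f h m)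
    {s lam ρ : ℝ} (hs : s = 1 ∨ s = -1) (hsl : 0 ≤ s * lam)
    (hu : ∀ x ∈ Set.Icc (-R) R, |u x - lam * a x| ≤ ρ * (1 + |x|))
    (hv : ∀ x ∈ Set.Icc (-R) R, |v x - lam * b x| ≤ ρ * (1 + |x|)) :
    s * (Real.sinh (ω * R) / (ω * Real.cosh (ω * R)) *
        (u1 0 * a 0 - u 0 + (v1 0 * b 0 + v 0) + m 0) + (u 0 * a 0 + v 0 * b 0))
      ≤ s * lam + 4 * K * G / θ ^ 2 + 4 * K * ρ := by
  have hR := S.Rpos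
  have hθ := S.θpos
  have hG := S.Gpos
  have hK := B.Kpos
  have hω := S.ωpos
  have hρ : 0 ≤ ρ := by
    have := (abs_nonneg _).trans (hu 0 ⟨by linarith, hR.le⟩)
    simpa using this
  set c := Real.cosh (ω * R) with hc
  have hc0 : 0 < c := Real.cosh_pos _
  have hsub : Set.Icc 0 R ⊆ Set.Icc (-R) R := Set.Icc_subset_Icc (by linarith) le_rfl
  have dlin : ∀ x : ℝ, HasDerivAt (fun x => ω * (R - x)) (-ω) x := by
    intro x
    exact (((hasDerivAt_id' x).const_sub R).const_mul ω).congr_deriv (by ring)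
  have dw : ∀ x : ℝ, HasDerivAt (fun x => Real.sinh (ω * (R - x)) / (ω * c))
      (-(Real.cosh (ω * (R - x)) / c)) x := by
    intro x
    exact ((dlin x).sinh.div_const (ω * c)).congr_deriv (by field_simp)
  have dq : ∀ x : ℝ, HasDerivAt (fun x => Real.cosh (ω * (R - x)) / c)
      (-(ω ^ 2 * (Real.sinh (ω * (R - x)) / (ω * c)))) x := by
    intro x
    exact ((dlin x).cosh.div_const c).congr_deriv (by field_simp)
  have key := mono_of (F := fun x => s * (Real.sinh (ω * (R - x)) / (ω * c) *
        (u1 x * a x - u x * (V x * W x ^ 2) + (v1 x * b x + v x * (W x * V x ^ 2)) + m x)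
        + Real.cosh (ω * (R - x)) / c * (u x * a x + v x * b x))
      - s * lam * (Real.cosh (ω * (R - x)) / c * (V x * W x) ^ 2)
      - 4 * K * G / θ ^ 2 * Real.exp (-(θ * x)) - 4 * K * ρ * Real.exp (-(1 * x))) hR.le ?_ ?_
  · simp only [S.uR, S.vR, S.mR, sub_self, mul_zero, Real.sinh_zero, zero_div, zero_mul,
      sub_zero, B.V0, B.W0, neg_zero, Real.exp_zero, mul_one, one_pow, ← hc, div_self hc0.ne',
      one_mul, add_zero, Real.cosh_zero] at key
    have h1 : 0 ≤ s * lam * (1 / c * (V R * W R) ^ 2) := by positivity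
    have h2 : 0 ≤ 4 * K * G / θ ^ 2 * Real.exp (-(θ * R)) := by positivity
    have h3 : 0 ≤ 4 * K * ρ * Real.exp (-R) := by positivity
    linarith
  · have h1 := S.cu.mono hsub
    have h2 := S.cu1.mono hsub
    have h3 := S.cv.mono hsub
    have h4 := S.cv1.mono hsub
    have h5 := S.cm.mono hsub
    have h6 := B.ca.continuousOn (s := Set.Icc 0 R)
    have h7 := B.cb.continuousOn (s := Set.Icc 0 R)
    have h8 := B.cV.continuousOn (s := Set.Icc 0 R)
    have h9 := B.cW.continuousOn (s := Set.Icc 0 R)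
    have h10 : ContinuousOn (fun x => Real.sinh (ω * (R - x)) / (ω * c)) (Set.Icc 0 R) :=
      fun x _ => (dw x).continuousAt.continuousWithinAt
    have h11 : ContinuousOn (fun x => Real.cosh (ω * (R - x)) / c) (Set.Icc 0 R) :=
      fun x _ => (dq x).continuousAt.continuousWithinAt
    fun_prop
  · intro x hx
    have hx' : x ∈ Set.Ioo (-R) R := ⟨by linarith [hx.1], hx.2⟩
    have d1 := ((S.du1 x hx').fun_mul (B.da x)).fun_sub
      ((S.du x hx').fun_mul ((B.dV x).fun_mul ((B.dW x).fun_pow 2)))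
    have d2 := ((S.dv1 x hx').fun_mul (B.db x)).fun_add
      ((S.dv x hx').fun_mul ((B.dW x).fun_mul ((B.dV x).fun_pow 2)))
    have d3 := (d1.fun_add d2).fun_add (S.dm x hx')
    have d4 := ((S.du x hx').fun_mul (B.da x)).fun_add ((S.dv x hx').fun_mul (B.db x))
    have d5 := ((((dw x).fun_mul d3).fun_add ((dq x).fun_mul d4)).const_mul s).fun_sub
      (((dq x).fun_mul (((B.dV x).fun_mul (B.dW x)).fun_pow 2)).const_mul (s * lam))
    have d6 := (d5.fun_sub ((dexp θ x).const_mul (4 * K * G / θ ^ 2))).fun_sub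
      ((dexp 1 x).const_mul (4 * K * ρ))
    refine ⟨_, d6, ?_⟩
    have hw0 : 0 ≤ Real.sinh (ω * (R - x)) / (ω * c) := by
      have : 0 ≤ Real.sinh (ω * (R - x)) :=
        Real.sinh_nonneg_iff.2 (mul_nonneg hω.le (by linarith [hx.2]))
      positivity
    have hq0 : 0 ≤ Real.cosh (ω * (R - x)) / c := by
      have := Real.cosh_pos (ω * (R - x)); positivity
    have hq1 : Real.cosh (ω * (R - x)) / c ≤ 1 := by
      rw [div_le_one hc0, hc]
      apply Real.cosh_le_cosh.2
      rw [abs_of_nonneg (mul_nonneg hω.le (by linarith [hx.2])), abs_of_nonneg (by positivity)]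
      exact mul_le_mul_of_nonneg_left (by linarith [hx.1]) hω.le
    set w := Real.sinh (ω * (R - x)) / (ω * c) with hw
    set q := Real.cosh (ω * (R - x)) / c with hq
    have hmb := m_bound B S hx.1.le hx.2.le
    have hVW := B.Vpos x
    have hWV := B.Wpos x
    have hab : |x| = x := abs_of_pos hx.1
    have b1 : |(u x - lam * a x) * (V x * W x ^ 2)| ≤ ρ * (K * Real.exp (-x)) := by
      rw [abs_mul, abs_of_pos (by positivity : 0 < V x * W x ^ 2)]
      have h1 := hu x (Set.Ioo_subset_Icc_self hx')
      rw [hab] at h1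
      calc _ ≤ ρ * (1 + x) * (V x * W x ^ 2) := mul_le_mul_of_nonneg_right h1 (by positivity)
        _ = ρ * (V x * W x ^ 2 * (1 + x)) := by ring
        _ ≤ _ := mul_le_mul_of_nonneg_left (B.aK' x hx.1.le) hρ
    have b2 : |(v x - lam * b x) * (W x * V x ^ 2)| ≤ ρ * (K * Real.exp (-x)) := by
      rw [abs_mul, abs_of_pos (by positivity : 0 < W x * V x ^ 2)]
      have h1 := hv x (Set.Ioo_subset_Icc_self hx')
      rw [hab] at h1
      calc _ ≤ ρ * (1 + x) * (W x * V x ^ 2) := mul_le_mul_of_nonneg_right h1 (by positivity)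
        _ = ρ * (W x * V x ^ 2 * (1 + x)) := by ring
        _ ≤ _ := mul_le_mul_of_nonneg_left (B.bK' x hx.1.le) hρ
    have hs1 : |s| = 1 := by rcases hs with rfl | rfl <;> simp
    have b3 : -(q * (s * (2 * ((u x - lam * a x) * (V x * W x ^ 2)
        - (v x - lam * b x) * (W x * V x ^ 2)) - m x)))
        ≤ 4 * K * ρ * Real.exp (-x) + 4 * K * G / θ * Real.exp (-(θ * x)) := by
      refine (neg_le_abs _).trans ?_
      rw [abs_mul, abs_mul, hs1, one_mul, abs_of_nonneg hq0]
      refine (mul_le_mul_of_nonneg_right hq1 (abs_nonneg _)).trans ?_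
      rw [one_mul]
      refine (abs_sub _ _).trans ?_
      rw [abs_mul, abs_two]
      have := abs_sub ((u x - lam * a x) * (V x * W x ^ 2)) ((v x - lam * b x) * (W x * V x ^ 2))
      linarith
    have b4 : 0 ≤ s * lam * (ω ^ 2 * w * (V x * W x) ^ 2) := by positivity
    have e4 : 4 * K * G / θ ^ 2 * (-θ * Real.exp (-(θ * x))) = -(4 * K * G / θ * Real.exp (-(θ * x))) := by
      field_simp
    rw [e4, one_mul]
    have fin : 0 ≤ q * (s * (2 * ((u x - lam * a x) * (V x * W x ^ 2)
        - (v x - lam * b x) * (W x * V x ^ 2)) - m x)) + s * lam * (ω ^ 2 * w * (V x * W x) ^ 2)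
        + (4 * K * ρ * Real.exp (-x) + 4 * K * G / θ * Real.exp (-(θ * x))) := by linarith
    refine fin.trans (le_of_eq ?_)
    push_cast
    ring

theorem lemD (B : BG V W a b K κ E) (S : Sol_s3 V W a b θ R ω G N u u1 v v1 f h m)
    {lam ρ : ℝ} 
    (hu : ∀ x ∈ Set.Icc (-R) R, |u x - lam * a x| ≤ ρ * (1 + |x|))
    (hv : ∀ x ∈ Set.Icc (-R) R, |v x - lam * b x| ≤ ρ * (1 + |x|)) :
    |lam| ≤ (4 * K * G / θ ^ 2 + 6 * K * ρ) / E := by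
  have hR := S.Rpos
  have hK := B.Kpos
  obtain ⟨s, hs, hsl⟩ : ∃ s : ℝ, (s = 1 ∨ s = -1) ∧ s * lam = |lam| := by
    rcases abs_cases lam with ⟨h, _⟩ | ⟨h, _⟩
    · exact ⟨1, Or.inl rfl, by rw [h]; ring⟩
    · exact ⟨-1, Or.inr rfl, by rw [h]; ring⟩
  have hsl0 : 0 ≤ s * lam := by rw [hsl]; exact abs_nonneg _
  have hx' : ∀ x ∈ Set.Icc (-R) R, -x ∈ Set.Icc (-R) R := by
    intro x hx
    simp only [Set.mem_Icc] at hx ⊢; constructor <;> linarith [hx.1, hx.2]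
  have h1 := half_lemma B S hs hsl0 hu hv
  have h2 := half_lemma B (S.reflect B) hs hsl0
    (by intro x hx; have := hv _ (hx' x hx); rwa [B.symb, abs_neg] at this)
    (by intro x hx; have := hu _ (hx' x hx); rwa [B.syma, abs_neg] at this)
  simp only [neg_zero] at h2
  have ab0 : a 0 = b 0 := by have := B.syma 0; rwa [neg_zero] at this
  have h0 : (0:ℝ) ∈ Set.Icc (-R) R := ⟨by linarith, hR.le⟩
  have u0 := hu 0 h0
  have v0 := hv 0 h0
  simp only [abs_zero, add_zero, mul_one] at u0 v0
  have hE := B.hE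
  have ha0 := B.apos 0
  have haK := B.aK 0
  rw [← ab0] at h1 h2 v0 hE
  rw [le_div_iff₀ B.Epos, ← hsl]
  have hρ : 0 ≤ ρ := (abs_nonneg _).trans u0
  have hs1 : |s| = 1 := by rcases hs with rfl | rfl <;> simp
  have h3 : -(s * (a 0 * (u 0 - lam * a 0) + a 0 * (v 0 - lam * a 0))) ≤ 2 * K * ρ := by
    refine (neg_le_abs _).trans ?_
    rw [abs_mul, hs1, one_mul]
    refine (abs_add_le _ _).trans ?_
    rw [abs_mul, abs_mul, abs_of_pos ha0]
    have := mul_le_mul haK u0 (abs_nonneg _) hK.le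
    have := mul_le_mul haK v0 (abs_nonneg _) hK.le
    linarith
  have h4 : s * lam * (a 0 ^ 2 + a 0 ^ 2) = s * lam * (1 + E) := by rw [hE]
  linarith

theorem max_prin {z z1 z2 : ℝ → ℝ} {p q : ℝ} (hpq : p ≤ q) (hc : ContinuousOn z (Set.Icc p q))
    (h1 : ∀ x ∈ Set.Ioo p q, HasDerivAt z (z1 x) x)
    (h2 : ∀ x ∈ Set.Ioo p q, HasDerivAt z1 (z2 x) x)
    (h3 : ∀ x ∈ Set.Ioo p q, 0 < z x → 0 < z2 x) (hp : z p ≤ 0) (hq : z q ≤ 0) :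
    ∀ x ∈ Set.Icc p q, z x ≤ 0 := by
  obtain ⟨x0, hx0, hmax⟩ := isCompact_Icc.exists_isMaxOn (Set.nonempty_Icc.2 hpq) hc
  intro x hx
  refine (hmax hx).trans ?_
  by_contra hcon
  simp only [not_le] at hcon
  have hI : x0 ∈ Set.Ioo p q := by
    refine ⟨lt_of_le_of_ne hx0.1 ?_, lt_of_le_of_ne hx0.2 ?_⟩
    · rintro rfl; linarith
    · rintro rfl; linarith
  have hnhds : Set.Icc p q ∈ nhds x0 := Icc_mem_nhds hI.1 hI.2
  have hlm : IsLocalMax z x0 := hmax.isLocalMax hnhds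
  have hd : deriv z x0 = 0 := hlm.deriv_eq_zero
  have hev : deriv z =ᶠ[nhds x0] z1 := by
    filter_upwards [Ioo_mem_nhds hI.1 hI.2] with y hy
    exact (h1 y hy).deriv
  have hdd : deriv (deriv z) x0 = z2 x0 := by
    rw [hev.deriv_eq]; exact (h2 x0 hI).deriv
  have hpos : deriv (deriv z) x0 > 0 := by rw [hdd]; exact h3 x0 hI hcon
  have hmin : IsLocalMin z x0 := isLocalMin_of_deriv_deriv_pos hpos hd (h1 x0 hI).continuousAt
  have hconst : z =ᶠ[nhds x0] fun _ => z x0 := by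
    filter_upwards [hlm, hmin] with y hy1 hy2
    exact le_antisymm hy1 hy2
  have : deriv (deriv z) x0 = 0 := by
    have h4 : deriv z =ᶠ[nhds x0] fun _ => 0 := by
      have := hconst.deriv
      refine this.trans ?_
      simp
    rw [h4.deriv_eq]; simp
  linarith

theorem barrier_aux {y y1 c k : ℝ → ℝ} {θ p q k1 k2 δ s : ℝ} (hθ : 0 < θ) (hp : 0 ≤ p) (hpq : p ≤ q)
    (hs : s = 1 ∨ s = -1) (hk1 : 0 ≤ k1) (hk2 : 0 ≤ k2) (hδ : |y p| ≤ δ) (hq : y q = 0)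
    (hc : ContinuousOn y (Set.Icc p q)) (h1 : ∀ x ∈ Set.Ioo p q, HasDerivAt y (y1 x) x)
    (h2 : ∀ x ∈ Set.Ioo p q, HasDerivAt y1 (c x * y x - k x) x) (hcp : ∀ x, 0 < c x)
    (hk : ∀ x ∈ Set.Ioo p q, |k x| ≤ k1 * Real.exp (-(θ * x)) + k2 * Real.exp (-(1 * x))) :
    ∀ x ∈ Set.Icc p q, s * y x ≤ δ + k1 / θ ^ 2 + k2 * Real.exp (-p) := by
  have hs1 : |s| = 1 := by rcases hs with rfl | rfl <;> simp
  have hδ0 : 0 ≤ δ := (abs_nonneg _).trans hδ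
  have hnn : ∀ x ∈ Set.Icc p q, 0 ≤ k1 / θ ^ 2 * (1 - Real.exp (-(θ * x)))
      + k2 * (Real.exp (-p) - Real.exp (-(1 * x))) := by
    intro x hx
    have e1 : Real.exp (-(θ * x)) ≤ 1 := by
      apply Real.exp_le_one_iff.2
      have : 0 ≤ θ * x := mul_nonneg hθ.le (hp.trans hx.1)
      linarith
    have e2 : Real.exp (-(1 * x)) ≤ Real.exp (-p) := Real.exp_le_exp.2 (by linarith [hx.1])
    have := mul_nonneg (by positivity : 0 ≤ k1 / θ ^ 2) (sub_nonneg.2 e1)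
    have := mul_nonneg hk2 (sub_nonneg.2 e2)
    linarith
  have key := max_prin (z := fun x => s * y x - δ - (k1 / θ ^ 2 * (1 - Real.exp (-(θ * x)))
      + k2 * (Real.exp (-p) - Real.exp (-(1 * x)))))
      (z1 := fun x => s * y1 x - (k1 / θ * Real.exp (-(θ * x)) + k2 * Real.exp (-(1 * x))))
      (z2 := fun x => s * (c x * y x - k x) + (k1 * Real.exp (-(θ * x)) + k2 * Real.exp (-(1 * x))))
      hpq (by fun_prop) ?_ ?_ ?_ ?_ ?_
  · intro x hx
    have h4 := key x hx
    have e1 := Real.exp_pos (-(θ * x))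
    have e2 := Real.exp_pos (-(1 * x))
    have := mul_nonneg (by positivity : 0 ≤ k1 / θ ^ 2) e1.le
    have := mul_nonneg hk2 e2.le
    linarith
  · intro x hx
    have := (((h1 x hx).const_mul s).sub_const δ).fun_sub
      ((((dexp θ x).const_sub 1).const_mul (k1 / θ ^ 2)).fun_add
        (((dexp 1 x).const_sub (Real.exp (-p))).const_mul k2))
    exact this.congr_deriv (by field_simp)
  · intro x hx
    have := ((h2 x hx).const_mul s).fun_sub
      (((dexp θ x).const_mul (k1 / θ)).fun_add ((dexp 1 x).const_mul k2))
    exact this.congr_deriv (by field_simp; ring)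
  · intro x hx hz
    have h4 := hnn x (Set.Ioo_subset_Icc_self hx)
    have h5 : 0 < s * y x := by linarith
    have h6 := mul_pos (hcp x) h5
    have h7 : s * k x ≤ |k x| := by
      refine (le_abs_self _).trans ?_
      rw [abs_mul, hs1, one_mul]
    have := hk x hx
    linarith
  · have h4 := hnn p (Set.left_mem_Icc.2 hpq)
    have h7 : s * y p ≤ |y p| := by
      refine (le_abs_self _).trans ?_
      rw [abs_mul, hs1, one_mul]
    linarith
  · have h4 := hnn q (Set.right_mem_Icc.2 hpq)
    rw [hq]; linarith

theorem barrier_s3 {y y1 c k : ℝ → ℝ} {θ p q k1 k2 δ : ℝ} (hθ : 0 < θ) (hp : 0 ≤ p) (hpq : p ≤ q)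
    (hk1 : 0 ≤ k1) (hk2 : 0 ≤ k2) (hδ : |y p| ≤ δ) (hq : y q = 0)
    (hc : ContinuousOn y (Set.Icc p q)) (h1 : ∀ x ∈ Set.Ioo p q, HasDerivAt y (y1 x) x)
    (h2 : ∀ x ∈ Set.Ioo p q, HasDerivAt y1 (c x * y x - k x) x) (hcp : ∀ x, 0 < c x)
    (hk : ∀ x ∈ Set.Ioo p q, |k x| ≤ k1 * Real.exp (-(θ * x)) + k2 * Real.exp (-(1 * x))) :
    ∀ x ∈ Set.Icc p q, |y x| ≤ δ + k1 / θ ^ 2 + k2 * Real.exp (-p) := by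
  intro x hx
  have i1 := barrier_aux hθ hp hpq (Or.inl rfl) hk1 hk2 hδ hq hc h1 h2 hcp hk x hx
  have i2 := barrier_aux hθ hp hpq (Or.inr rfl) hk1 hk2 hδ hq hc h1 h2 hcp hk x hx
  rw [abs_le]; constructor <;> linarith

theorem sol_barrier (B : BG V W a b K κ E) (S : Sol_s3 V W a b θ R ω G N u u1 v v1 f h m)
    {M δ : ℝ} (hM : 0 ≤ M) (hMR : M ≤ R) (hu : |u M| ≤ δ) (hv : |v M| ≤ δ) :
    ∀ x ∈ Set.Icc M R, |u x| ≤ δ + 2 * G / θ ^ 2 + 2 * K * N * Real.exp (-M) ∧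
      |v x| ≤ δ + 2 * G / θ ^ 2 + 2 * K * N * Real.exp (-M) := by
  have hR := S.Rpos
  have hθ := S.θpos
  have hG := S.Gpos
  have hK := B.Kpos
  have hω := S.ωpos
  have hN := S.N_nonneg
  have hsub : Set.Icc M R ⊆ Set.Icc (-R) R := Set.Icc_subset_Icc (by linarith) le_rfl
  have hsub' : Set.Ioo M R ⊆ Set.Ioo (-R) R := Set.Ioo_subset_Ioo (by linarith) le_rfl
  have hk : ∀ x ∈ Set.Ioo M R, ∀ t g : ℝ, |t| ≤ N → |g| * Real.cosh (θ * x) ≤ G →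
      |2 * V x * W x * t + g| ≤ 2 * G * Real.exp (-(θ * x)) + 2 * K * N * Real.exp (-(1 * x)) := by
    intro x hx t g ht hg
    have h1 := le_exp_of_cosh hg (abs_nonneg _)
    have h2 := B.pK x (hM.trans hx.1.le)
    refine (abs_add_le _ _).trans ?_
    have h3 : 0 < 2 * V x * W x := by
      have := B.Vpos x
      have := B.Wpos x
      positivity
    rw [abs_mul, abs_of_pos h3, one_mul]
    have h4 : 2 * V x * W x * |t| ≤ 2 * (K * Real.exp (-x)) * N :=
      mul_le_mul (by linarith) ht (abs_nonneg _) (by positivity)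
    linarith
  intro x hx
  constructor
  · refine barrier_s3 (c := fun x => W x ^ 2 + ω ^ 2) (k := fun x => 2 * V x * W x * v x + f x) hθ hM hMR
      (by positivity) (by positivity) hu S.uR (S.cu.mono hsub)
      (fun x hx => S.du x (hsub' hx)) ?_ (fun x => by positivity) ?_ x hx
    · intro x hx; exact (S.du1 x (hsub' hx)).congr_deriv (by ring)
    · intro x hx
      exact hk x hx _ _ (S.vN x (Set.Ioo_subset_Icc_self (hsub' hx))) (S.fG x (hsub' hx))
  · refine barrier_s3 (c := fun x => V x ^ 2 + ω ^ 2) (k := fun x => 2 * V x * W x * u x + h x) hθ hM hMR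
      (by positivity) (by positivity) hv S.vR (S.cv.mono hsub)
      (fun x hx => S.dv x (hsub' hx)) ?_ (fun x => by positivity) ?_ x hx
    · intro x hx; exact (S.dv1 x (hsub' hx)).congr_deriv (by ring)
    · intro x hx
      exact hk x hx _ _ (S.uN x (Set.Ioo_subset_Icc_self (hsub' hx))) (S.hG x (hsub' hx))

end

theorem core_bound {V W a b : ℝ → ℝ} {K κ E : ℝ} (B : BG V W a b K κ E) {θ : ℝ} (hθ : 0 < θ) :
    ∃ C R₀ : ℝ, 0 < C ∧ 0 < R₀ ∧
    ∀ (R ω G N : ℝ) (u u1 v v1 f h m : ℝ → ℝ), Sol_s3 V W a b θ R ω G N u u1 v v1 f h m → R₀ < R →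
      (∃ x ∈ Set.Icc (-R) R, N = |u x| ∨ N = |v x|) → N ≤ C * G := by
  obtain ⟨K1, hK1, hBC⟩ := lemBC B hθ
  have hK := B.Kpos
  have hE := B.Epos
  set M := 8 * K + 1 with hM
  have hM1 : 1 ≤ M := by linarith
  have hexp : 2 * K * Real.exp (-M) ≤ 1 / 4 := by
    have h1 : 8 * K ≤ Real.exp M := by linarith [Real.add_one_le_exp M]
    have h2 : Real.exp (-M) * Real.exp M = 1 := by rw [← Real.exp_add]; simp
    have h3 := mul_le_mul_of_nonneg_left h1 (Real.exp_pos (-M)).le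
    linarith
  set α := 1 + M + 6 * K ^ 2 / E with hα
  have hα0 : 0 < α := by positivity
  set β := 4 * K ^ 2 / (θ ^ 2 * E) with hβ
  have hβ0 : 0 < β := by positivity
  refine ⟨2 * (4 * α ^ 2 * K1 ^ 2 + β + 2 / θ ^ 2), M, by positivity, by linarith, ?_⟩
  intro R ω G N u u1 v v1 f h m S hR hatt
  have hG := S.Gpos
  have hN := S.N_nonneg
  have hη : 0 < 1 / (4 * α * K1) := by positivity
  have hbd := hBC R ω G N u u1 v v1 f h m S (by linarith) _ hη
  set ρ := K1 * (1 / (4 * α * K1) * N + G / (1 / (4 * α * K1))) with hρ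
  have hαρ : α * ρ = N / 4 + 4 * α ^ 2 * K1 ^ 2 * G := by
    rw [hρ]; field_simp
  have hρ0 : 0 ≤ ρ := by positivity
  have hl := lemD B S (fun x hx => (hbd x hx).1) (fun x hx => (hbd x hx).2)
  set lam := u 0 / a 0 with hlam
  set δ := N / 4 + 4 * α ^ 2 * K1 ^ 2 * G + β * G with hδ
  have hcomb : ρ * (1 + M) + (4 * K * G / θ ^ 2 + 6 * K * ρ) / E * K = δ := by
    rw [hδ, ← hαρ, hα, hβ]; field_simp; ring
  have hin : ∀ x ∈ Set.Icc (-M) M, |u x| ≤ δ ∧ |v x| ≤ δ := by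
    intro x hx
    have hxR : x ∈ Set.Icc (-R) R := ⟨by linarith [hx.1], by linarith [hx.2]⟩
    obtain ⟨h1, h2⟩ := hbd x hxR
    have hxM : |x| ≤ M := abs_le.2 hx
    have h3 : ρ * (1 + |x|) ≤ ρ * (1 + M) := mul_le_mul_of_nonneg_left (by linarith) hρ0
    have hbK : b x ≤ K := by rw [← B.syma]; exact B.aK _
    have h4 : |lam * a x| ≤ (4 * K * G / θ ^ 2 + 6 * K * ρ) / E * K := by
      rw [abs_mul, abs_of_pos (B.apos x)]
      exact mul_le_mul hl (B.aK x) (B.apos x).le (by positivity)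
    have h5 : |lam * b x| ≤ (4 * K * G / θ ^ 2 + 6 * K * ρ) / E * K := by
      rw [abs_mul, abs_of_pos (B.bpos x)]
      exact mul_le_mul hl hbK (B.bpos x).le (by positivity)
    have h6 : |u x| ≤ |u x - lam * a x| + |lam * a x| := by
      simpa using abs_add_le (u x - lam * a x) (lam * a x)
    have h7 : |v x| ≤ |v x - lam * b x| + |lam * b x| := by
      simpa using abs_add_le (v x - lam * b x) (lam * b x)
    constructor <;> linarith
  have hMin := hin M ⟨by linarith, le_rfl⟩
  have hMin' := hin (-M) ⟨le_rfl, by linarith⟩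
  have r1 := sol_barrier B S (by linarith) hR.le hMin.1 hMin.2
  have r2 := sol_barrier B (S.reflect B) (by linarith) hR.le hMin'.2 hMin'.1
  have h2K : 2 * K * N * Real.exp (-M) ≤ N / 4 := by
    have := mul_le_mul_of_nonneg_right hexp hN
    linarith
  have h2K0 : 0 ≤ 2 * K * N * Real.exp (-M) := by positivity
  have hG2 : 0 ≤ 2 * G / θ ^ 2 := by positivity
  have hall : ∀ x ∈ Set.Icc (-R) R, |u x| ≤ δ + 2 * G / θ ^ 2 + 2 * K * N * Real.exp (-M) ∧
      |v x| ≤ δ + 2 * G / θ ^ 2 + 2 * K * N * Real.exp (-M) := by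
    intro x hx
    rcases le_total x M with h1 | h1
    · rcases le_total (-M) x with h2 | h2
      · have := hin x ⟨h2, h1⟩
        constructor <;> linarith [this.1, this.2]
      · have := r2 (-x) ⟨by linarith, by linarith [hx.1]⟩
        simp only [neg_neg] at this
        exact ⟨this.2, this.1⟩
    · exact r1 x ⟨h1, hx.2⟩
  have hfin : N ≤ δ + 2 * G / θ ^ 2 + 2 * K * N * Real.exp (-M) := by
    obtain ⟨x, hx, h1 | h1⟩ := hatt
    · rw [h1]; rw [← h1]; exact h1.le.trans (hall x hx).1
    · exact h1.le.trans (hall x hx).2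
  have e : 2 * G / θ ^ 2 = 2 / θ ^ 2 * G := by ring
  linarith

theorem exists_BG (V1 V2 : ℝ → ℝ)
    (hV1smooth : ContDiff ℝ (⊤ : ℕ∞) V1)
    (hV1pos : ∀ x : ℝ, 0 < V1 x) (hV2pos : ∀ x : ℝ, 0 < V2 x)
    (hode1 : ∀ x : ℝ, -deriv (deriv V1) x + V1 x * (V2 x) ^ 2 = 0)
    (hV10 : V1 0 = 1) (hV20 : V2 0 = 1)
    (hsym : ∀ x : ℝ, V1 (-x) = V2 x)
    (hmono : ∀ x : ℝ, 0 < deriv V1 x)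
    (A B c0 C0 : ℝ) (hA : 0 < A) (hc0 : 0 < c0) (hC0 : 0 < C0)
    (hasym1 : ∀ x : ℝ, 0 ≤ x → |V1 x - A * x - B| ≤ C0 * Real.exp (-c0 * x ^ 2))
    (hasym2 : ∀ x : ℝ, 0 ≤ x → |deriv V1 x - A| ≤ C0 * Real.exp (-c0 * x ^ 2))
    (hasym4 : ∀ x : ℝ, x ≤ 0 →
      |V1 x| + |deriv V1 x| + |deriv (deriv V1) x| ≤ C0 * Real.exp (-c0 * x ^ 2)) :
    ∃ K κ E : ℝ, BG V1 V2 (deriv V1) (fun x => deriv V1 (-x)) K κ E := by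
  have hsymW : ∀ x, V2 (-x) = V1 x := fun x => by rw [← hsym, neg_neg]
  have dV : ∀ x, HasDerivAt V1 (deriv V1 x) x := fun x =>
    (hV1smooth.differentiable (by simp) x).hasDerivAt
  have hV2eq : V2 = fun x => V1 (-x) := funext fun x => (hsym x).symm
  have dW : ∀ x, HasDerivAt V2 (-deriv V1 (-x)) x := fun x => by
    rw [hV2eq]; exact hasDerivAt_comp_neg' (dV (-x))
  have hd1 : ContDiff ℝ 1 (deriv V1) := by
    have : ContDiff ℝ (1 + 1) V1 := by
      have h2 := contDiff_infty.1 hV1smooth 2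
      have e : ((1:WithTop ℕ∞) + 1) = ((2:ℕ) : WithTop ℕ∞) := by norm_num
      rw [e]; exact h2
    exact (contDiff_succ_iff_deriv.1 this).2.2
  have da : ∀ x, HasDerivAt (deriv V1) (V1 x * V2 x ^ 2) x := fun x => by
    have h1 := (hd1.differentiable (by simp) x).hasDerivAt
    exact h1.congr_deriv (by linarith [hode1 x])
  have db : ∀ x, HasDerivAt (fun x => deriv V1 (-x)) (-(V2 x * V1 x ^ 2)) x := fun x => by
    have := hasDerivAt_comp_neg' (da (-x))
    rwa [hsym, hsymW] at this
  have hexp1 : ∀ x : ℝ, Real.exp (-c0 * x ^ 2) ≤ 1 := fun x =>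
    Real.exp_le_one_iff.2 (by nlinarith [sq_nonneg x])
  set L := A + |B| + C0 + 1 with hL
  have hL1 : 1 ≤ L := by linarith [abs_nonneg B]
  have hV : ∀ x, 0 ≤ x → V1 x ≤ L * (1 + x) := by
    intro x hx
    have h1 := (abs_le.1 (hasym1 x hx)).2
    have h2 := mul_le_mul_of_nonneg_left (hexp1 x) hC0.le
    have h3 := le_abs_self B
    have h4 : 0 ≤ |B| * x := by positivity
    have h5 : 0 ≤ C0 * x := by positivity
    have : L * (1 + x) = A * x + A + |B| + |B| * x + C0 + C0 * x + 1 + x := by rw [hL]; ring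
    linarith
  have hW : ∀ x, 0 ≤ x → V2 x ≤ C0 * Real.exp (-c0 * x ^ 2) := by
    intro x hx
    have h1 := hasym4 (-x) (by linarith)
    rw [hsym, neg_sq] at h1
    linarith [le_abs_self (V2 x), abs_nonneg (deriv V1 (-x)), abs_nonneg (deriv (deriv V1) (-x))]
  have haA : ∀ x, deriv V1 x ≤ A + C0 := by
    intro x
    have h2 := mul_le_mul_of_nonneg_left (hexp1 x) hC0.le
    rcases le_total 0 x with hx | hx
    · have h1 := (abs_le.1 (hasym2 x hx)).2
      linarith
    · have h1 := hasym4 x hx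
      linarith [le_abs_self (deriv V1 x), abs_nonneg (V1 x), abs_nonneg (deriv (deriv V1) x)]
  set e0 := Real.exp (4 / c0) with he0
  have he0p : 0 < e0 := Real.exp_pos _
  have hpoly : ∀ x : ℝ, 0 ≤ x → (1 + x) ^ 3 * Real.exp (-c0 * x ^ 2) ≤ e0 * Real.exp (-x) := by
    intro x hx
    have h1 : (1 + x) ^ 3 ≤ Real.exp x ^ 3 :=
      pow_le_pow_left₀ (by linarith) (by linarith [Real.add_one_le_exp x]) 3
    rw [← Real.exp_nat_mul] at h1
    calc (1 + x) ^ 3 * Real.exp (-c0 * x ^ 2)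
        ≤ Real.exp (((3:ℕ):ℝ) * x) * Real.exp (-c0 * x ^ 2) :=
          mul_le_mul_of_nonneg_right h1 (Real.exp_pos _).le
      _ = Real.exp (((3:ℕ):ℝ) * x + -c0 * x ^ 2) := by rw [Real.exp_add]
      _ ≤ Real.exp (4 / c0 + -x) := by
          apply Real.exp_le_exp.2
          have h3 : 4 / c0 - 4 * x + c0 * x ^ 2 = (c0 * x - 2) ^ 2 / c0 := by field_simp; ring
          have h4 : 0 ≤ (c0 * x - 2) ^ 2 / c0 := by positivity
          push_cast
          linarith
      _ = e0 * Real.exp (-x) := by rw [Real.exp_add]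
  set K := (A + C0) + (C0 + 1) ^ 2 * L ^ 2 * e0 with hK
  have hKp : 0 < K := by positivity
  have hK2 : ∀ x, 0 ≤ x → ∀ t : ℝ,
      t ≤ (C0 + 1) ^ 2 * L ^ 2 * ((1 + x) ^ 3 * Real.exp (-c0 * x ^ 2)) → t ≤ K * Real.exp (-x) := by
    intro x hx t ht
    have h1 := mul_le_mul_of_nonneg_left (hpoly x hx)
      (by positivity : 0 ≤ (C0 + 1) ^ 2 * L ^ 2)
    have h2 : 0 ≤ (A + C0) * Real.exp (-x) := by positivity
    rw [hK]
    linarith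
  have hpK : ∀ x, 0 ≤ x → V1 x * V2 x ≤ K * Real.exp (-x) := by
    intro x hx
    apply hK2 x hx
    set e := Real.exp (-c0 * x ^ 2) with he
    have hep : 0 < e := Real.exp_pos _
    calc V1 x * V2 x ≤ (L * (1 + x)) * (C0 * e) :=
          mul_le_mul (hV x hx) (hW x hx) (hV2pos x).le (by positivity)
      _ = C0 * L * ((1 + x) * e) := by ring
      _ ≤ (C0 + 1) ^ 2 * L ^ 2 * ((1 + x) ^ 3 * e) := by
          apply mul_le_mul _ _ (by positivity) (by positivity)
          · apply mul_le_mul (by nlinarith) (by nlinarith) (by positivity) (by positivity)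
          · apply mul_le_mul_of_nonneg_right _ hep.le
            exact le_self_pow₀ (by linarith) (by norm_num)
  have hbK : ∀ x, 0 ≤ x → V2 x * V1 x ^ 2 * (1 + x) ≤ K * Real.exp (-x) := by
    intro x hx
    apply hK2 x hx
    set e := Real.exp (-c0 * x ^ 2) with he
    have hep : 0 < e := Real.exp_pos _
    calc V2 x * V1 x ^ 2 * (1 + x) ≤ (C0 * e) * (L * (1 + x)) ^ 2 * (1 + x) := by
          apply mul_le_mul_of_nonneg_right _ (by linarith)
          exact mul_le_mul (hW x hx) (pow_le_pow_left₀ (hV1pos x).le (hV x hx) 2)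
            (by positivity) (by positivity)
      _ = C0 * (L ^ 2 * ((1 + x) ^ 3 * e)) := by ring
      _ ≤ (C0 + 1) ^ 2 * (L ^ 2 * ((1 + x) ^ 3 * e)) :=
          mul_le_mul_of_nonneg_right (by nlinarith) (by positivity)
      _ = _ := by ring
  have haK : ∀ x, 0 ≤ x → V1 x * V2 x ^ 2 * (1 + x) ≤ K * Real.exp (-x) := by
    intro x hx
    apply hK2 x hx
    set e := Real.exp (-c0 * x ^ 2) with he
    have hep : 0 < e := Real.exp_pos _
    have he1 : e ≤ 1 := hexp1 x
    have hW2 : V2 x ^ 2 ≤ C0 ^ 2 * e := by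
      calc V2 x ^ 2 ≤ (C0 * e) ^ 2 := pow_le_pow_left₀ (hV2pos x).le (hW x hx) 2
        _ = C0 ^ 2 * (e * e) := by ring
        _ ≤ C0 ^ 2 * (e * 1) := by gcongr
        _ = _ := by ring
    calc V1 x * V2 x ^ 2 * (1 + x) ≤ (L * (1 + x)) * (C0 ^ 2 * e) * (1 + x) := by
          apply mul_le_mul_of_nonneg_right _ (by linarith)
          exact mul_le_mul (hV x hx) hW2 (by positivity) (by positivity)
      _ = C0 ^ 2 * L * ((1 + x) ^ 2 * e) := by ring
      _ ≤ (C0 + 1) ^ 2 * L ^ 2 * ((1 + x) ^ 3 * e) := by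
          apply mul_le_mul _ _ (by positivity) (by positivity)
          · apply mul_le_mul (by nlinarith) (by nlinarith) (by positivity) (by positivity)
          · apply mul_le_mul_of_nonneg_right _ hep.le
            exact pow_le_pow_right₀ (by linarith) (by norm_num)
  have ca : Continuous (deriv V1) := hd1.continuous
  have cV : Continuous V1 := hV1smooth.continuous
  have cW : Continuous V2 := by rw [hV2eq]; exact cV.comp continuous_neg
  have exκ : ∀ F : ℝ → ℝ, Continuous F → (∀ x, 0 < F x) →
      ∃ k, 0 < k ∧ ∀ x ∈ Set.Icc (0:ℝ) 1, k ≤ F x := by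
    intro F hF hpos
    obtain ⟨x0, _, hmin⟩ := isCompact_Icc.exists_isMinOn
      (Set.nonempty_Icc.2 (zero_le_one : (0:ℝ) ≤ 1)) hF.continuousOn
    exact ⟨F x0, hpos x0, fun x hx => hmin hx⟩
  obtain ⟨k1, hk1, hk1'⟩ := exκ (fun x => deriv V1 x ^ 2) (by fun_prop)
    (fun x => by have := hmono x; positivity)
  obtain ⟨k2, hk2, hk2'⟩ := exκ (fun x => deriv V1 (-x) ^ 2) (by fun_prop)
    (fun x => by have := hmono (-x); positivity)
  obtain ⟨k3, hk3, hk3'⟩ := exκ (fun x => 2 * (V1 x * V2 x) * (deriv V1 x * deriv V1 (-x)))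
    (by fun_prop)
    (fun x => by
      have := hmono (-x)
      have := hmono x
      have := hV1pos x
      have := hV2pos x
      positivity)
  have hmonoV : ∀ x, 0 ≤ x → deriv V1 0 ≤ deriv V1 x := by
    intro x hx
    apply mono_of hx ca.continuousOn
    intro z _
    refine ⟨_, da z, ?_⟩
    have := hV1pos z
    positivity
  have hcons : ∀ x, deriv V1 x ^ 2 + deriv V1 (-x) ^ 2 - (V1 x * V2 x) ^ 2
      = deriv V1 0 ^ 2 + deriv V1 (-0) ^ 2 - (V1 0 * V2 0) ^ 2 := by
    intro x
    have hd : ∀ x, HasDerivAt (fun x => deriv V1 x ^ 2 + deriv V1 (-x) ^ 2 - (V1 x * V2 x) ^ 2) 0 x := by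
      intro x
      have := ((((da x).fun_pow 2).fun_add ((db x).fun_pow 2)).fun_sub
        (((dV x).fun_mul (dW x)).fun_pow 2))
      exact this.congr_deriv (by push_cast; ring)
    exact is_const_of_deriv_eq_zero (fun x => (hd x).differentiableAt) (fun x => (hd x).deriv) x 0
  have hEpos : 0 < deriv V1 0 ^ 2 + deriv V1 (-0) ^ 2 - 1 := by
    by_contra hcon
    have ha0 := hmono 0
    set y := K / deriv V1 0 with hy
    have hy0 : 0 < y := by positivity
    have h1 := hcons y
    rw [hV10, hV20] at h1
    have h2 := hmonoV y hy0.le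
    have h3 := hpK y hy0.le
    have h4 : Real.exp (-y) * Real.exp y = 1 := by rw [← Real.exp_add]; simp
    have h5 : y < Real.exp y := by linarith [Real.add_one_le_exp y]
    have h6 : K * Real.exp (-y) < deriv V1 0 := by
      have h7 : K = y * deriv V1 0 := by rw [hy]; field_simp
      have h8 := Real.exp_pos (-y)
      have h9 := mul_lt_mul_of_pos_left h5 h8
      calc K * Real.exp (-y) = (Real.exp (-y) * y) * deriv V1 0 := by rw [h7]; ring
        _ < 1 * deriv V1 0 := mul_lt_mul_of_pos_right (by linarith) ha0
        _ = _ := one_mul _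
    have h10 : (V1 y * V2 y) ^ 2 < deriv V1 y ^ 2 := by
      apply pow_lt_pow_left₀ (by linarith) _ (by norm_num)
      have := hV1pos y
      have := hV2pos y
      positivity
    have h11 := sq_nonneg (deriv V1 (-y))
    linarith
  refine ⟨K, min k1 (min k2 k3), deriv V1 0 ^ 2 + deriv V1 (-0) ^ 2 - 1, ?_⟩
  exact
    { dV := dV, dW := dW, da := da, db := db, Vpos := hV1pos, Wpos := hV2pos, apos := hmono
      bpos := fun x => hmono (-x), V0 := hV10, W0 := hV20, symV := hsym, symW := hsymW
      syma := fun x => rfl, symb := fun x => by simp only [neg_neg]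
      Kpos := hKp
      aK := fun x => (haA x).trans (by
        have : 0 < (C0 + 1) ^ 2 * L ^ 2 * e0 := by positivity
        linarith)
      pK := hpK, aK' := haK, bK' := hbK
      κpos := lt_min hk1 (lt_min hk2 hk3)
      κa := fun x hx => (min_le_left _ _).trans (hk1' x hx)
      κb := fun x hx => ((min_le_right _ _).trans (min_le_left _ _)).trans (hk2' x hx)
      κp := fun x hx => ((min_le_right _ _).trans (min_le_right _ _)).trans (hk3' x hx)
      Epos := hEpos
      hE := by ring }

theorem exists_deriv {φ : ℝ → ℝ} {R : ℝ} (hR : 0 < R) (h : ContDiffOn ℝ 2 φ (Set.Icc (-R) R)) :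
    ∃ φ' : ℝ → ℝ, ContinuousOn φ' (Set.Icc (-R) R) ∧
      (∀ x ∈ Set.Ioo (-R) R, HasDerivAt φ (φ' x) x) ∧
      (∀ x ∈ Set.Ioo (-R) R, HasDerivAt φ' (deriv (deriv φ) x) x) := by
  have huniq : UniqueDiffOn ℝ (Set.Icc (-R) R) := uniqueDiffOn_Icc (by linarith)
  have h' : ContDiffOn ℝ (1 + 1) φ (Set.Icc (-R) R) := by
    have e : ((1:WithTop ℕ∞) + 1) = 2 := by norm_num
    rw [e]; exact h
  have h1 : ContDiffOn ℝ 1 (derivWithin φ (Set.Icc (-R) R)) (Set.Icc (-R) R) :=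
    ((contDiffOn_succ_iff_derivWithin huniq).1 h').2.2
  have hnh : ∀ x ∈ Set.Ioo (-R) R, Set.Icc (-R) R ∈ nhds x := fun x hx => Icc_mem_nhds hx.1 hx.2
  have hd : ∀ x ∈ Set.Ioo (-R) R, HasDerivAt φ (derivWithin φ (Set.Icc (-R) R) x) x := by
    intro x hx
    exact ((h.differentiableOn (by norm_num)) x
      (Set.Ioo_subset_Icc_self hx)).hasDerivWithinAt.hasDerivAt (hnh x hx)
  refine ⟨derivWithin φ (Set.Icc (-R) R), h1.continuousOn, hd, ?_⟩
  intro x hx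
  have hev : deriv φ =ᶠ[nhds x] derivWithin φ (Set.Icc (-R) R) := by
    filter_upwards [Ioo_mem_nhds hx.1 hx.2] with y hy
    exact (hd y hy).deriv
  rw [hev.deriv_eq]
  exact (((h1.differentiableOn (by norm_num)) x
    (Set.Ioo_subset_Icc_self hx)).differentiableAt (hnh x hx)).hasDerivAt


/-- **Remark 3.1.** Under the orthogonality condition
`∫_{-R}^{R} (V1' g1 + V2' g2) = 0`, the stronger estimate
`sup_{[-R,R]} max (|φ1|, |φ2|) ≤ C * ‖g‖_{C⁰_θ((−R,R))}` holds. -/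
theorem invertibility_with_orthogonality
    (V1 V2 : ℝ → ℝ)
    (hV1smooth : ContDiff ℝ (⊤ : ℕ∞) V1) (hV2smooth : ContDiff ℝ (⊤ : ℕ∞) V2)
    (hV1pos : ∀ x : ℝ, 0 < V1 x) (hV2pos : ∀ x : ℝ, 0 < V2 x)
    (hode1 : ∀ x : ℝ, -deriv (deriv V1) x + V1 x * (V2 x) ^ 2 = 0)
    (hode2 : ∀ x : ℝ, -deriv (deriv V2) x + V2 x * (V1 x) ^ 2 = 0)
    (hV10 : V1 0 = 1) (hV20 : V2 0 = 1)
    (hsym : ∀ x : ℝ, V1 (-x) = V2 x)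
    (hmono : ∀ x : ℝ, 0 < deriv V1 x)
    (A B c0 C0 : ℝ) (hA : 0 < A) (hc0 : 0 < c0) (hC0 : 0 < C0)
    (hasym1 : ∀ x : ℝ, 0 ≤ x → |V1 x - A * x - B| ≤ C0 * Real.exp (-c0 * x ^ 2))
    (hasym2 : ∀ x : ℝ, 0 ≤ x → |deriv V1 x - A| ≤ C0 * Real.exp (-c0 * x ^ 2))
    (hasym3 : ∀ x : ℝ, 0 ≤ x → |deriv (deriv V1) x| ≤ C0 * Real.exp (-c0 * x ^ 2))
    (hasym4 : ∀ x : ℝ, x ≤ 0 →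
      |V1 x| + |deriv V1 x| + |deriv (deriv V1) x| ≤ C0 * Real.exp (-c0 * x ^ 2))
    (hnondeg : ∀ ψ1 ψ2 : ℝ → ℝ, ContDiff ℝ 2 ψ1 → ContDiff ℝ 2 ψ2 →
      (∃ Cb : ℝ, ∀ x : ℝ, |ψ1 x| ≤ Cb ∧ |ψ2 x| ≤ Cb) →
      (∀ x : ℝ, -deriv (deriv ψ1) x + (V2 x) ^ 2 * ψ1 x + 2 * V1 x * V2 x * ψ2 x = 0) →
      (∀ x : ℝ, -deriv (deriv ψ2) x + (V1 x) ^ 2 * ψ2 x + 2 * V1 x * V2 x * ψ1 x = 0) →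
      ∃ lam : ℝ, (∀ x : ℝ, ψ1 x = lam * deriv V1 x) ∧ (∀ x : ℝ, ψ2 x = lam * deriv V2 x))
    (θ : ℝ) (hθ : 0 < θ) :
    ∃ C R₀ ω₀ P₀ : ℝ, 0 < C ∧ 0 < R₀ ∧ 0 < ω₀ ∧ 0 < P₀ ∧
      ∀ R ω : ℝ, R₀ < R → ω ∈ Set.Ioo 0 ω₀ → P₀ < ω * R →
      ∀ φ1 φ2 g1 g2 : ℝ → ℝ,
        ContDiffOn ℝ 2 φ1 (Set.Icc (-R) R) → ContDiffOn ℝ 2 φ2 (Set.Icc (-R) R) →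
        ContinuousOn g1 (Set.Icc (-R) R) → ContinuousOn g2 (Set.Icc (-R) R) →
        φ1 (-R) = 0 → φ1 R = 0 → φ2 (-R) = 0 → φ2 R = 0 →
        (∀ x ∈ Set.Ioo (-R) R,
          -deriv (deriv φ1) x + ((V2 x) ^ 2 + ω ^ 2) * φ1 x + 2 * V1 x * V2 x * φ2 x = g1 x ∧
          -deriv (deriv φ2) x + ((V1 x) ^ 2 + ω ^ 2) * φ2 x + 2 * V1 x * V2 x * φ1 x = g2 x) →
        (∫ x in (-R)..R, (deriv V1 x * g1 x + deriv V2 x * g2 x)) = 0 →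
        ∀ G : ℝ, (∀ x ∈ Set.Ioo (-R) R, max |g1 x| |g2 x| * Real.cosh (θ * x) ≤ G) →
        ∀ x ∈ Set.Icc (-R) R, max |φ1 x| |φ2 x| ≤ C * G := by
  obtain ⟨K, κ, E, Bg⟩ := exists_BG V1 V2 hV1smooth hV1pos hV2pos hode1 hV10 hV20 hsym hmono A B c0 C0
    hA hc0 hC0 hasym1 hasym2 hasym4
  obtain ⟨C, R₀, hC, hR₀, hcore⟩ := core_bound Bg hθ
  refine ⟨C, R₀, 1, 1, hC, hR₀, one_pos, one_pos, ?_⟩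
  intro R ω hR hω _ φ1 φ2 g1 g2 hφ1 hφ2 hg1 hg2 z1 z2 z3 z4 heq horth G hG
  have hRp : 0 < R := hR₀.trans hR
  have hle : -R ≤ R := by linarith
  obtain ⟨p1, cp1, dp1, ddp1⟩ := exists_deriv hRp hφ1
  obtain ⟨p2, cp2, dp2, ddp2⟩ := exists_deriv hRp hφ2
  have hdV2 : ∀ x, deriv V2 x = -deriv V1 (-x) := fun x => (Bg.dW x).deriv
  -- the primitive
  set F : ℝ → ℝ := fun x => deriv V1 x * g1 x + deriv V2 x * g2 x with hF
  have hFc : ContinuousOn F (Set.Icc (-R) R) := by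
    have h1 : Continuous (deriv V1) := Bg.ca
    have h2 : Continuous (deriv V2) := by
      have : deriv V2 = fun x => -deriv V1 (-x) := funext hdV2
      rw [this]; fun_prop
    have h3 := h1.continuousOn (s := Set.Icc (-R) R)
    have h4 := h2.continuousOn (s := Set.Icc (-R) R)
    fun_prop
  have hFi : IntervalIntegrable F MeasureTheory.volume (-R) R :=
    hFc.intervalIntegrable_of_Icc hle
  have hmc : ContinuousOn (fun x => ∫ t in (-R)..x, F t) (Set.Icc (-R) R) := by
    have := intervalIntegral.continuousOn_primitive_interval' hFi (Set.left_mem_uIcc)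
    rwa [Set.uIcc_of_le hle] at this
  have hmd : ∀ x ∈ Set.Ioo (-R) R, HasDerivAt (fun x => ∫ t in (-R)..x, F t) (F x) x := by
    intro x hx
    apply intervalIntegral.integral_hasDerivAt_right
    · apply hFi.mono_set
      rw [Set.uIcc_of_le hle, Set.uIcc_of_le hx.1.le]
      exact Set.Icc_subset_Icc le_rfl hx.2.le
    · exact (hFc.mono Set.Ioo_subset_Icc_self).stronglyMeasurableAtFilter isOpen_Ioo x hx
    · exact hFc.continuousAt (Icc_mem_nhds hx.1 hx.2)
  -- the supremum
  have hcont : ContinuousOn (fun x => max |φ1 x| |φ2 x|) (Set.Icc (-R) R) :=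
    (hφ1.continuousOn.abs).sup (hφ2.continuousOn.abs)
  obtain ⟨x0, hx0, hmax⟩ := isCompact_Icc.exists_isMaxOn (Set.nonempty_Icc.2 hle) hcont
  have hmax' : ∀ x ∈ Set.Icc (-R) R, max |φ1 x| |φ2 x| ≤ max |φ1 x0| |φ2 x0| := fun x hx => hmax hx
  have hG0 : 0 ≤ G := by
    have := hG 0 ⟨by linarith, hRp⟩
    refine le_trans ?_ this
    have h1 : 0 ≤ max |g1 0| |g2 0| := le_max_of_le_left (abs_nonneg _)
    have h2 := Real.cosh_pos (θ * 0)
    positivity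
  have main : ∀ ε : ℝ, 0 < ε → max |φ1 x0| |φ2 x0| ≤ C * (G + ε) := by
    intro ε hε
    apply hcore R ω (G + ε) _ φ1 p1 (fun x => -φ2 x) (fun x => -p2 x) g1 (fun x => -g2 x)
      (fun x => ∫ t in (-R)..x, F t) _ hR
    · refine ⟨x0, hx0, ?_⟩
      rcases max_choice |φ1 x0| |φ2 x0| with h | h
      · left; exact h
      · right; rw [abs_neg]; exact h
    · refine ⟨hθ, hRp, hω.1, by linarith, hφ1.continuousOn, cp1, hφ2.continuousOn.neg, cp2.neg, hmc,
        dp1, ?_, fun x hx => (dp2 x hx).fun_neg, ?_, ?_, z2, z1, by simp [z4], by simp [z3],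
        horth, by simp, ?_, ?_, ?_, ?_⟩
      · intro x hx
        exact (ddp1 x hx).congr_deriv (by linarith [(heq x hx).1])
      · intro x hx
        exact (ddp2 x hx).fun_neg.congr_deriv (by linarith [(heq x hx).2])
      · intro x hx
        refine (hmd x hx).congr_deriv ?_
        rw [hF]; simp only [hdV2]; ring
      · intro x hx
        have h1 := hG x hx
        have h2 := mul_le_mul_of_nonneg_right (le_max_left |g1 x| |g2 x|) (Real.cosh_pos (θ * x)).le
        linarith
      · intro x hx
        have h1 := hG x hx
        have h2 := mul_le_mul_of_nonneg_right (le_max_right |g1 x| |g2 x|) (Real.cosh_pos (θ * x)).le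
        rw [abs_neg]
        linarith
      · intro x hx
        exact (le_max_left _ _).trans (hmax' x hx)
      · intro x hx
        rw [abs_neg]
        exact (le_max_right _ _).trans (hmax' x hx)
  intro x hx
  refine (hmax' x hx).trans ?_
  apply le_of_forall_pos_le_add
  intro ε hε
  have := main (ε / C) (by positivity)
  refine this.trans (le_of_eq ?_)
  field_simp
end

section
/- Let A > 0, ω > 0 and R > 0 with ω·R ≥ 1, and define σ(x) = A·(sinh(ω·(R − x))/sinh(ω·R) − 1). Then σ(0) = 0, and for every x ∈ [0, R] one has |σ'(x)| ≤ A·coth(1)·ω and consequently |σ(x)| ≤ A·coth(1)·ω·x. -/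
/-- **Estimate (2.7) for the corrector `σ`.** Let `A > 0`, `ω > 0`, `R > 0` with
`ω R ≥ 1`, and `σ x = A (sinh(ω(R−x))/sinh(ωR) − 1)`. Then `σ 0 = 0`,
`|σ'(x)| ≤ A coth(1) ω` and `|σ(x)| ≤ A coth(1) ω x` for all `x ∈ [0, R]`,
where `coth 1 = cosh 1 / sinh 1`. -/
theorem sigma_estimates
    (A ω R : ℝ) (hA : 0 < A) (hω : 0 < ω) (hR : 0 < R) (hωR : 1 ≤ ω * R)
    (σ : ℝ → ℝ)
    (hσ : ∀ x : ℝ, σ x = A * (Real.sinh (ω * (R - x)) / Real.sinh (ω * R) - 1)) :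
    σ 0 = 0 ∧
    ∀ x ∈ Set.Icc (0 : ℝ) R,
      |deriv σ x| ≤ A * (Real.cosh 1 / Real.sinh 1) * ω ∧
      |σ x| ≤ A * (Real.cosh 1 / Real.sinh 1) * ω * x := by
  have hs1 : 0 < Real.sinh 1 := Real.sinh_pos_iff.2 one_pos
  have hs : 0 < Real.sinh (ω * R) := Real.sinh_pos_iff.2 (by linarith)
  have h0 : σ 0 = 0 := by
    rw [hσ, sub_zero, div_self hs.ne', sub_self, mul_zero]
  have hcoth : Real.cosh (ω * R) / Real.sinh (ω * R) ≤ Real.cosh 1 / Real.sinh 1 := by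
    rw [div_le_div_iff₀ hs hs1]
    have h : 0 ≤ Real.sinh (ω * R - 1) := Real.sinh_nonneg_iff.2 (by linarith)
    rw [Real.sinh_sub] at h
    linarith
  have hd : ∀ x, HasDerivAt σ
      (A * (Real.cosh (ω * (R - x)) * (ω * (-1)) / Real.sinh (ω * R))) x := by
    intro x
    have e : σ = fun x => A * (Real.sinh (ω * (R - x)) / Real.sinh (ω * R) - 1) := funext hσ
    rw [e]
    exact (((((hasDerivAt_id x).const_sub R).const_mul ω).sinh.div_const _).sub_const 1).const_mul A
  have hb : ∀ x ∈ Set.Icc (0 : ℝ) R,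
      |deriv σ x| ≤ A * (Real.cosh 1 / Real.sinh 1) * ω := by
    intro x hx
    have hx0 : 0 ≤ ω * (R - x) := mul_nonneg hω.le (by linarith [hx.2])
    have hc : Real.cosh (ω * (R - x)) ≤ Real.cosh (ω * R) := by
      rw [Real.cosh_le_cosh, abs_of_nonneg hx0, abs_of_nonneg (by linarith)]
      nlinarith [mul_nonneg hω.le hx.1]
    have hq : Real.cosh (ω * (R - x)) / Real.sinh (ω * R) ≤ Real.cosh 1 / Real.sinh 1 :=
      (div_le_div_of_nonneg_right hc hs.le).trans hcoth
    have e : A * (Real.cosh (ω * (R - x)) * (ω * (-1)) / Real.sinh (ω * R))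
        = -(A * (Real.cosh (ω * (R - x)) / Real.sinh (ω * R)) * ω) := by ring
    have hp : 0 < Real.cosh (ω * (R - x)) := Real.cosh_pos _
    rw [(hd x).deriv, e, abs_neg, abs_of_nonneg (by positivity)]
    gcongr
  refine ⟨h0, fun x hx => ⟨hb x hx, ?_⟩⟩
  have h := (convex_Icc (0 : ℝ) R).norm_image_sub_le_of_norm_deriv_le
    (fun y _ => (hd y).differentiableAt) hb (Set.left_mem_Icc.2 hR.le) hx
  rw [h0, sub_zero, sub_zero, Real.norm_eq_abs, Real.norm_eq_abs, abs_of_nonneg hx.1] at h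
  exact h
end
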